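/- arXiv:1710.10322 — 8 statements merged into one kernel-verified Lean document; each statement's English description precedes it below -/
import Mathlib

section
/- Let F be a field, let a ≥ 0, ℓ ≥ 1, and t_1,…,t_ℓ ≥ 1 be integers with t_1 + ⋯ + t_ℓ = h. For i ∈ {1,…,ℓ}, let C_i be an a×(a+t_i) matrix over F and D_i an h×(a+t_i) matrix over F, with D_i^{(S)} denoting the submatrix of D_i on the rows indexed by S. Then the determinant of the (aℓ+h)×(aℓ+h) block matrix whose first aℓ rows contain C_1,…,C_ℓ in block-diagonal position and whose last h rows are [D_1 | ⋯ | D_ℓ] equals (−1)^{a·Σ_{i=1}^{ℓ} t_i(ℓ−i)} times the sum, over all partitions S_1 ⊔ ⋯ ⊔ S_ℓ = {1,…,h} with |S_i| = t_i, of sgn(S_1,…,S_ℓ) · ∏_{i=1}^{ℓ} det[C_i; D_i^{(S_i)}]. -/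
/-- The order-preserving ("block major") bijection between `Σ i : Fin m, Fin (w i)` and
`Fin (∑ i, w i)`: the pair `⟨i, j⟩` is sent to `(∑ k < i, w k) + j`. -/
noncomputable def finSigmaOrderFinEquiv {m : ℕ} (w : Fin m → ℕ) :
    (Σ i : Fin m, Fin (w i)) ≃ Fin (∑ i, w i) :=
  (toLex : (Σ i : Fin m, Fin (w i)) ≃ Σₗ i : Fin m, Fin (w i)).trans
    (Fintype.orderIsoFinOfCardEq (Σₗ i : Fin m, Fin (w i))
        ((Fintype.card_congr (ofLex : (Σₗ i : Fin m, Fin (w i)) ≃ Σ i : Fin m, Fin (w i))).trans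
          (by simp))).symm.toEquiv

theorem sign_sigma_aux {ι : Type} [Fintype ι] [DecidableEq ι] {β : ι → Type} [∀ i, Fintype (β i)]
    [∀ i, DecidableEq (β i)] (i : ι) (p : Equiv.Perm (β i)) :
    Equiv.Perm.sign (Equiv.Perm.sigmaCongrRight (Pi.mulSingle i p)) = Equiv.Perm.sign p := by
  rw [← Equiv.Perm.sign_extendDomain p (p := fun c : Σ i, β i => c.1 = i)
    (Equiv.sigmaSubtype i).symm]
  congr 1
  ext1 ⟨j, x⟩
  by_cases hj : j = i
  · subst hj
    have := Equiv.Perm.extendDomain_apply_image p (Equiv.sigmaSubtype j).symm x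
    have h2 : ∀ y : β j, ((Equiv.sigmaSubtype (β := β) j).symm y : Σ i, β i) = ⟨j, y⟩ :=
      fun y => rfl
    rw [h2, h2] at this
    rw [this]
    simp [Equiv.Perm.sigmaCongrRight]
  · rw [Equiv.Perm.extendDomain_apply_not_subtype _ _ (by simpa using hj)]
    simp [Equiv.Perm.sigmaCongrRight, hj]

theorem sign_sigma {ι : Type} [Fintype ι] [DecidableEq ι] {β : ι → Type} [∀ i, Fintype (β i)]
    [∀ i, DecidableEq (β i)] (G : ∀ i, Equiv.Perm (β i)) :
    Equiv.Perm.sign (Equiv.Perm.sigmaCongrRight G) = ∏ i, Equiv.Perm.sign (G i) := by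
  have key : ∀ s : Finset ι, ∀ G : ∀ i, Equiv.Perm (β i), (∀ i, i ∉ s → G i = 1) →
      Equiv.Perm.sign (Equiv.Perm.sigmaCongrRight G) = ∏ i ∈ s, Equiv.Perm.sign (G i) := by
    intro s
    induction s using Finset.induction_on with
    | empty =>
      intro G hG
      have : G = 1 := funext fun i => hG i (by simp)
      subst this
      rw [Equiv.Perm.sigmaCongrRight_one]; simp
    | insert i s hi ih =>
      intro G hG
      have h1 : G = Function.update G i 1 * Pi.mulSingle i (G i) := by
        funext j
        by_cases hj : j = i
        · subst hj; simp
        · simp [hj]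
      rw [Finset.prod_insert hi]
      conv_lhs => rw [h1]
      rw [← Equiv.Perm.sigmaCongrRight_mul, Equiv.Perm.sign_mul, sign_sigma_aux, mul_comm, ih]
      · congr 1
        refine Finset.prod_congr rfl fun j hj => ?_
        have : j ≠ i := fun h => hi (h ▸ hj)
        simp [this]
      · intro j hj
        by_cases hji : j = i
        · subst hji; simp
        · simp [hji]; exact hG j (by simp [hj, hji])
  exact key Finset.univ G (by simp)

/-- Row assignment. -/
def phiEquiv {a ℓ h : ℕ} {t : Fin ℓ → ℕ} (e : (Σ i : Fin ℓ, Fin (t i)) ≃ Fin h) :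
    (Σ i : Fin ℓ, Fin (a + t i)) ≃ (Fin ℓ × Fin a) ⊕ Fin h :=
  (Equiv.sigmaCongrRight fun _ => finSumFinEquiv.symm).trans
    ((Equiv.sigmaSumDistrib _ _).trans (Equiv.sumCongr (Equiv.sigmaEquivProd _ _) e))

theorem phi_castAdd {a ℓ h : ℕ} {t : Fin ℓ → ℕ} (e : (Σ i : Fin ℓ, Fin (t i)) ≃ Fin h)
    (i : Fin ℓ) (k : Fin a) : phiEquiv e ⟨i, Fin.castAdd (t i) k⟩ = Sum.inl (i, k) := by
  simp [phiEquiv]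

theorem phi_natAdd {a ℓ h : ℕ} {t : Fin ℓ → ℕ} (e : (Σ i : Fin ℓ, Fin (t i)) ≃ Fin h)
    (i : Fin ℓ) (j : Fin (t i)) : phiEquiv e ⟨i, Fin.natAdd a j⟩ = Sum.inr (e ⟨i, j⟩) := by
  simp [phiEquiv]

theorem phi_symm_inl {a ℓ h : ℕ} {t : Fin ℓ → ℕ} (e : (Σ i : Fin ℓ, Fin (t i)) ≃ Fin h)
    (i : Fin ℓ) (k : Fin a) : (phiEquiv e).symm (Sum.inl (i, k)) = ⟨i, Fin.castAdd (t i) k⟩ := by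
  rw [Equiv.symm_apply_eq, phi_castAdd]

theorem phi_symm_inr {a ℓ h : ℕ} {t : Fin ℓ → ℕ} (e : (Σ i : Fin ℓ, Fin (t i)) ≃ Fin h)
    (j : Fin h) : (phiEquiv (a := a) e).symm (Sum.inr j)
      = ⟨(e.symm j).1, Fin.natAdd a (e.symm j).2⟩ := by
  rw [Equiv.symm_apply_eq, phi_natAdd]; simp

theorem e_fst_unique {ℓ h : ℕ} {t : Fin ℓ → ℕ} (e e' : (Σ i : Fin ℓ, Fin (t i)) ≃ Fin h)
    (he : ∀ i : Fin ℓ, StrictMono (fun j : Fin (t i) => e ⟨i, j⟩))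
    (he' : ∀ i : Fin ℓ, StrictMono (fun j : Fin (t i) => e' ⟨i, j⟩))
    (H : ∀ j, (e.symm j).1 = (e'.symm j).1) : e = e' := by
  have hr : ∀ (f : (Σ i : Fin ℓ, Fin (t i)) ≃ Fin h) (i : Fin ℓ),
      Set.range (fun j : Fin (t i) => f ⟨i, j⟩) = {j | (f.symm j).1 = i} := by
    intro f i
    ext j
    constructor
    · rintro ⟨x, rfl⟩; simp
    · rintro rfl
      exact ⟨(f.symm j).2, by simp⟩
  ext ⟨i, j⟩
  have := ((he i).range_inj (he' i)).1 (by rw [hr, hr]; simp [H])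
  rw [congrFun this j]

/-- A permutation of a sigma type preserving blocks. -/
theorem exists_sigma_perm {ℓ : ℕ} {w : Fin ℓ → ℕ} (p : Equiv.Perm (Σ i : Fin ℓ, Fin (w i)))
    (hp : ∀ c, (p c).1 = c.1) :
    ∃ π : ∀ i, Equiv.Perm (Fin (w i)), p = Equiv.Perm.sigmaCongrRight π := by
  have hex : ∀ i (x : Fin (w i)), ∃ y : Fin (w i), p ⟨i, x⟩ = ⟨i, y⟩ := by
    intro i x
    have := hp ⟨i, x⟩
    rcases hq : p ⟨i, x⟩ with ⟨i', y⟩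
    rw [hq] at this
    simp only at this
    subst this
    exact ⟨y, rfl⟩
  choose f hf using hex
  have hinj : ∀ i, Function.Injective (f i) := by
    intro i x y hxy
    have : p ⟨i, x⟩ = p ⟨i, y⟩ := by rw [hf, hf, hxy]
    simpa using p.injective this
  refine ⟨fun i => Equiv.ofBijective (f i) ((Finite.injective_iff_bijective).1 (hinj i)), ?_⟩
  ext1 ⟨i, x⟩
  rw [hf]; rfl

/-- Every block-compatible assignment is obtained from some monotone `e`. -/
theorem exists_e {a ℓ h : ℕ} {t : Fin ℓ → ℕ}
    (τ : (Σ i : Fin ℓ, Fin (a + t i)) ≃ (Fin ℓ × Fin a) ⊕ Fin h)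
    (hτ : ∀ i k, (τ.symm (Sum.inl (i, k))).1 = i) :
    ∃ e : (Σ i : Fin ℓ, Fin (t i)) ≃ Fin h,
      (∀ i : Fin ℓ, StrictMono (fun j : Fin (t i) => e ⟨i, j⟩)) ∧
      ∀ r, ((phiEquiv e).symm r).1 = (τ.symm r).1 := by
  classical
  let b : Fin h → Fin ℓ := fun j => (τ.symm (Sum.inr j)).1
  have hcard : ∀ i, Fintype.card {j // b j = i} = t i := by
    intro i
    have h1 : Fintype.card {c : Σ i : Fin ℓ, Fin (a + t i) // c.1 = i} = a + t i := by
      rw [Fintype.card_congr (Equiv.sigmaSubtype i)]; simp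
    have h2 : Fintype.card {c : Σ i : Fin ℓ, Fin (a + t i) // c.1 = i}
        = Fintype.card {r : (Fin ℓ × Fin a) ⊕ Fin h // (τ.symm r).1 = i} :=
      Fintype.card_congr (τ.subtypeEquiv (by simp))
    rw [h1, Fintype.card_congr (Equiv.subtypeSum), Fintype.card_sum] at h2
    have h3 : Fintype.card {p : Fin ℓ × Fin a // (τ.symm (Sum.inl p)).1 = i} = a := by
      have : Fintype.card {p : Fin ℓ × Fin a // (τ.symm (Sum.inl p)).1 = i}
          = Fintype.card (Fin a) := Fintype.card_congr
        { toFun := fun p => p.1.2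
          invFun := fun k => ⟨(i, k), hτ i k⟩
          left_inv := by
            rintro ⟨⟨i', k⟩, hp⟩
            rw [hτ] at hp
            subst hp; rfl
          right_inv := fun k => rfl }
      simpa using this
    rw [h3] at h2
    change _ = a + Fintype.card {j // b j = i} at h2
    omega
  let o : ∀ i, Fin (t i) ≃o {j // b j = i} := fun i =>
    Fintype.orderIsoFinOfCardEq _ (hcard i)
  let e : (Σ i : Fin ℓ, Fin (t i)) ≃ Fin h :=
    (Equiv.sigmaCongrRight fun i => (o i).toEquiv).trans (Equiv.sigmaFiberEquiv b)
  have he : ∀ i j, e ⟨i, j⟩ = (o i j).1 := fun i j => rfl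
  refine ⟨e, ?_, ?_⟩
  · intro i x y hxy
    simp only [he]
    exact (o i).strictMono hxy
  · rintro (⟨i, k⟩ | j)
    · rw [phi_symm_inl, hτ]
    · rw [phi_symm_inr]
      obtain ⟨⟨i, x⟩, rfl⟩ := e.surjective j
      simp only [Equiv.symm_apply_apply]
      exact (o i x).2.symm

theorem core_expansion {F : Type} [Field F] {a ℓ h N : ℕ} {t : Fin ℓ → ℕ}
    [DecidablePred fun e : (Σ i : Fin ℓ, Fin (t i)) ≃ Fin h =>
      ∀ i : Fin ℓ, StrictMono (fun j : Fin (t i) => e ⟨i, j⟩)]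
    (M : Matrix ((Fin ℓ × Fin a) ⊕ Fin h) (Σ i : Fin ℓ, Fin (a + t i)) F)
    (hM : ∀ i k c, c.1 ≠ i → M (Sum.inl (i, k)) c = 0)
    (ρ : (Fin ℓ × Fin a) ⊕ Fin h ≃ Fin N) (κ : (Σ i : Fin ℓ, Fin (a + t i)) ≃ Fin N) :
    (M.submatrix ρ.symm κ.symm).det =
      ∑ e : (Σ i : Fin ℓ, Fin (t i)) ≃ Fin h,
        if ∀ i : Fin ℓ, StrictMono (fun j : Fin (t i) => e ⟨i, j⟩) then
          (((Equiv.Perm.sign (κ.symm.trans ((phiEquiv e).trans ρ)) : ℤˣ) : ℤ) : F) *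
            ∏ i : Fin ℓ, (Matrix.of fun r c => M (phiEquiv e ⟨i, r⟩) ⟨i, c⟩).det
        else 0 := by
  have hL : (M.submatrix ρ.symm κ.symm).det =
      ∑ τ : (Σ i : Fin ℓ, Fin (a + t i)) ≃ (Fin ℓ × Fin a) ⊕ Fin h,
        (((Equiv.Perm.sign (κ.symm.trans (τ.trans ρ)) : ℤˣ) : ℤ) : F) * ∏ c, M (τ c) c := by
    rw [Matrix.det_apply']
    rw [← Equiv.sum_comp (Equiv.equivCongr κ ρ)]
    refine Finset.sum_congr rfl fun τ _ => ?_
    rw [← Equiv.prod_comp κ]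
    simp [Equiv.equivCongr]
    left; rfl
  rw [hL, ← Finset.sum_filter]
  have hR : ∀ e : (Σ i : Fin ℓ, Fin (t i)) ≃ Fin h,
      (((Equiv.Perm.sign (κ.symm.trans ((phiEquiv e).trans ρ)) : ℤˣ) : ℤ) : F) *
            ∏ i : Fin ℓ, (Matrix.of fun r c => M (phiEquiv e ⟨i, r⟩) ⟨i, c⟩).det
      = ∑ π : ∀ i, Equiv.Perm (Fin (a + t i)),
        (((Equiv.Perm.sign (κ.symm.trans
          (((Equiv.Perm.sigmaCongrRight π).trans (phiEquiv e)).trans ρ)) : ℤˣ) : ℤ) : F) *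
          ∏ c, M (((Equiv.Perm.sigmaCongrRight π).trans (phiEquiv e)) c) c := by
    intro e
    simp_rw [Matrix.det_apply']
    rw [Fintype.prod_sum, Finset.mul_sum]
    refine Finset.sum_congr rfl fun π _ => ?_
    have hs : Equiv.Perm.sign (κ.symm.trans
          (((Equiv.Perm.sigmaCongrRight π).trans (phiEquiv e)).trans ρ))
        = (∏ i, Equiv.Perm.sign (π i)) *
          Equiv.Perm.sign (κ.symm.trans ((phiEquiv e).trans ρ)) := by
      rw [← sign_sigma, ← Equiv.Perm.sign_trans_trans]
      rfl
    rw [hs, Fintype.prod_sigma, Finset.prod_mul_distrib]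
    push_cast
    simp only [Matrix.of_apply, Equiv.trans_apply, Equiv.Perm.sigmaCongrRight,
      Equiv.sigmaCongrRight_apply]
    ring
  simp_rw [hR]
  rw [← Finset.sum_product']
  symm
  refine Finset.sum_of_injOn
    (fun x => (Equiv.Perm.sigmaCongrRight x.2).trans (phiEquiv x.1)) ?_ ?_ ?_ ?_
  · rintro ⟨e, π⟩ hx ⟨e', π'⟩ hx' heq
    simp only [Finset.coe_product, Finset.coe_filter, Finset.mem_univ, true_and, Finset.coe_univ,
      Set.mem_prod, Set.mem_ofPred_eq, Set.mem_univ, and_true] at hx hx'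
    simp only at heq
    have : e = e' := by
      refine e_fst_unique e e' hx hx' fun j => ?_
      have := congrArg (fun f => (f.symm (Sum.inr j)).1) heq
      simpa [phi_symm_inr, Equiv.Perm.sigmaCongrRight, Equiv.sigmaCongrRight] using this
    subst this
    have h2 : Equiv.Perm.sigmaCongrRight π = Equiv.Perm.sigmaCongrRight π' := by
      ext1 c
      exact (phiEquiv e).injective (congrArg (fun f => f c) heq)
    have : π = π' := Equiv.Perm.sigmaCongrRightHom_injective h2
    rw [this]
  · intro x _; simp
  · intro τ _ hτ
    by_cases hz : ∏ c, M (τ c) c = 0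
    · rw [hz, mul_zero]
    exfalso
    apply hτ
    rw [← ne_eq, Finset.prod_ne_zero_iff] at hz
    have hτ' : ∀ i k, (τ.symm (Sum.inl (i, k))).1 = i := by
      intro i k
      by_contra hne
      apply hz (τ.symm (Sum.inl (i, k))) (Finset.mem_univ _)
      rw [Equiv.apply_symm_apply]
      exact hM i k _ hne
    obtain ⟨e, he, hr⟩ := exists_e τ hτ'
    obtain ⟨π, hπ⟩ := exists_sigma_perm (τ.trans (phiEquiv e).symm) (by
      intro c
      rw [Equiv.trans_apply, hr, Equiv.symm_apply_apply])
    refine ⟨(e, π), by simpa using he, ?_⟩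
    simp only [← hπ]
    ext1 c; simp
  · intro x _; rfl

theorem finSigma_lt_of_fst {m : ℕ} (w : Fin m → ℕ) (i i' : Fin m) (x : Fin (w i)) (x' : Fin (w i'))
    (hi : i < i') : finSigmaOrderFinEquiv w ⟨i, x⟩ < finSigmaOrderFinEquiv w ⟨i', x'⟩ := by
  have hl : (toLex (⟨i, x⟩ : Σ i : Fin m, Fin (w i)) : Σₗ i : Fin m, Fin (w i))
      < toLex ⟨i', x'⟩ := Sigma.Lex.lt_def.2 (Or.inl hi)
  exact (Fintype.orderIsoFinOfCardEq (Σₗ i : Fin m, Fin (w i)) _).symm.strictMono hl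

theorem finSigma_lt_of_snd {m : ℕ} (w : Fin m → ℕ) (i : Fin m) (x x' : Fin (w i))
    (hx : x < x') : finSigmaOrderFinEquiv w ⟨i, x⟩ < finSigmaOrderFinEquiv w ⟨i, x'⟩ := by
  have hl : (toLex (⟨i, x⟩ : Σ i : Fin m, Fin (w i)) : Σₗ i : Fin m, Fin (w i))
      < toLex ⟨i, x'⟩ := Sigma.Lex.lt_def.2 (Or.inr ⟨rfl, hx⟩)
  exact (Fintype.orderIsoFinOfCardEq (Σₗ i : Fin m, Fin (w i)) _).symm.strictMono hl

theorem lex_of_lt {m N : ℕ} {w : Fin m → ℕ} (κ : (Σ i : Fin m, Fin (w i)) ≃ Fin N)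
    (h1 : ∀ i i' x x', i < i' → κ ⟨i, x⟩ < κ ⟨i', x'⟩)
    (h2 : ∀ i x x', x < x' → κ ⟨i, x⟩ < κ ⟨i, x'⟩)
    {i i' : Fin m} {x : Fin (w i)} {x' : Fin (w i')} (hlt : κ ⟨i, x⟩ < κ ⟨i', x'⟩) :
    i < i' ∨ (i = i' ∧ x.val < x'.val) := by
  rcases lt_trichotomy i i' with h | h | h
  · exact Or.inl h
  · subst h
    refine Or.inr ⟨rfl, ?_⟩
    rcases lt_trichotomy x x' with h | h | h
    · exact h
    · subst h; exact absurd hlt (lt_irrefl _)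
    · exact absurd hlt (lt_asymm (h2 _ _ _ h))
  · exact absurd hlt (lt_asymm (h1 _ _ _ _ h))

theorem sign_base {a ℓ h N : ℕ} {t : Fin ℓ → ℕ} (κ : (Σ i : Fin ℓ, Fin (a + t i)) ≃ Fin N)
    (h1 : ∀ i i' x x', i < i' → κ ⟨i, x⟩ < κ ⟨i', x'⟩)
    (h2 : ∀ i x x', x < x' → κ ⟨i, x⟩ < κ ⟨i, x'⟩)
    (e : (Σ i : Fin ℓ, Fin (t i)) ≃ Fin h)
    (e1 : ∀ i i' x x', i < i' → e ⟨i, x⟩ < e ⟨i', x'⟩)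
    (e2 : ∀ i x x', x < x' → e ⟨i, x⟩ < e ⟨i, x'⟩)
    (ρ : (Fin ℓ × Fin a) ⊕ Fin h ≃ Fin N)
    (r1 : ∀ i k, (ρ (Sum.inl (i, k))).val = k.val + a * i.val)
    (r2 : ∀ j, (ρ (Sum.inr j)).val = ℓ * a + j.val) :
    Equiv.Perm.sign (κ.symm.trans ((phiEquiv e).trans ρ)) =
      (-1) ^ (a * ∑ i : Fin ℓ, t i * (ℓ - 1 - (i : ℕ))) := by
  rw [Equiv.Perm.sign_eq_prod_prod_Iio]
  have hIio : ∀ (j : Fin N) (f : Fin N → ℤˣ),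
      ∏ i ∈ Finset.Iio j, f i = ∏ i, if i < j then f i else 1 := by
    intro j f
    rw [← Finset.prod_filter]
    congr 1
    ext; simp
  simp_rw [hIio]
  rw [← Equiv.prod_comp κ]
  simp_rw [← Equiv.prod_comp κ (fun i => ite (i < _) _ _)]
  simp only [Equiv.trans_apply, Equiv.symm_apply_apply, Fintype.prod_sigma, Fin.prod_univ_add,
    phi_castAdd, phi_natAdd]
  have hcc : ∀ (i i' : Fin ℓ) (k k' : Fin a),
      (if κ ⟨i, Fin.castAdd (t i) k⟩ < κ ⟨i', Fin.castAdd (t i') k'⟩ then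
        (if ρ (Sum.inl (i, k)) < ρ (Sum.inl (i', k')) then (1 : ℤˣ) else -1) else 1) = 1 := by
    intro i i' k k'
    split_ifs with ha hb
    · rfl
    · exfalso
      apply hb
      rw [Fin.lt_def, r1, r1]
      rcases lex_of_lt κ h1 h2 ha with h | ⟨h, h'⟩
      · have : a * (i.val + 1) ≤ a * i'.val := Nat.mul_le_mul_left _ h
        have := k.2
        rw [mul_add] at *
        omega
      · subst h
        simpa using h'
    · rfl
  have hcn : ∀ (i i' : Fin ℓ) (k : Fin a) (j : Fin (t i')),
      (if κ ⟨i, Fin.castAdd (t i) k⟩ < κ ⟨i', Fin.natAdd a j⟩ then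
        (if ρ (Sum.inl (i, k)) < ρ (Sum.inr (e ⟨i', j⟩)) then (1 : ℤˣ) else -1) else 1) = 1 := by
    intro i i' k j
    have : ρ (Sum.inl (i, k)) < ρ (Sum.inr (e ⟨i', j⟩)) := by
      rw [Fin.lt_def, r1, r2]
      have : a * (i.val + 1) ≤ a * ℓ := Nat.mul_le_mul_left _ i.2
      have := k.2
      rw [mul_comm ℓ a]
      rw [mul_add] at *
      omega
    simp [this]
  have hnn : ∀ (i i' : Fin ℓ) (j : Fin (t i)) (j' : Fin (t i')),
      (if κ ⟨i, Fin.natAdd a j⟩ < κ ⟨i', Fin.natAdd a j'⟩ then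
        (if ρ (Sum.inr (e ⟨i, j⟩)) < ρ (Sum.inr (e ⟨i', j'⟩)) then (1 : ℤˣ) else -1) else 1)
        = 1 := by
    intro i i' j j'
    split_ifs with ha hb
    · rfl
    · exfalso
      apply hb
      rw [Fin.lt_def, r2, r2]
      have : e ⟨i, j⟩ < e ⟨i', j'⟩ := by
        rcases lex_of_lt κ h1 h2 ha with h | ⟨h, h'⟩
        · exact e1 _ _ _ _ h
        · subst h
          exact e2 _ _ _ (by simpa using h')
      rw [Fin.lt_def] at this
      omega
    · rfl
  have hnc : ∀ (i i' : Fin ℓ) (j : Fin (t i)) (k : Fin a),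
      (if κ ⟨i, Fin.natAdd a j⟩ < κ ⟨i', Fin.castAdd (t i') k⟩ then
        (if ρ (Sum.inr (e ⟨i, j⟩)) < ρ (Sum.inl (i', k)) then (1 : ℤˣ) else -1) else 1)
        = if i < i' then -1 else 1 := by
    intro i i' j k
    have h3 : ¬ ρ (Sum.inr (e ⟨i, j⟩)) < ρ (Sum.inl (i', k)) := by
      rw [Fin.lt_def, r1, r2]
      have : a * (i'.val + 1) ≤ a * ℓ := Nat.mul_le_mul_left _ i'.2
      have := k.2
      rw [mul_comm ℓ a]
      rw [mul_add] at *
      omega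
    rw [if_neg h3]
    refine if_congr ⟨fun ha => ?_, fun ha => h1 _ _ _ _ ha⟩ rfl rfl
    rcases lex_of_lt κ h1 h2 ha with h | ⟨h, h'⟩
    · exact h
    · simp at h'
      have := k.2
      omega
  simp only [hcc, hcn, hnn, hnc, Finset.prod_const_one, one_mul, mul_one, Finset.prod_const,
    Finset.card_univ, Fintype.card_fin]
  rw [Finset.prod_pow, Finset.prod_comm, mul_comm a, pow_mul, ← Finset.prod_pow_eq_pow_sum]
  congr 1
  refine Finset.prod_congr rfl fun i _ => ?_
  rw [Finset.prod_pow, mul_comm, pow_mul]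
  congr 1
  rw [← Finset.prod_filter, Finset.prod_const]
  congr 1
  have : Finset.univ.filter (fun i' => i < i') = Finset.Ioi i := by ext; simp
  rw [this, Fin.card_Ioi]

theorem sign_phi {a ℓ h N : ℕ} {t : Fin ℓ → ℕ} (κ : (Σ i : Fin ℓ, Fin (a + t i)) ≃ Fin N)
    (e₀ e : (Σ i : Fin ℓ, Fin (t i)) ≃ Fin h)
    (ρ : (Fin ℓ × Fin a) ⊕ Fin h ≃ Fin N) :
    Equiv.Perm.sign (κ.symm.trans ((phiEquiv e).trans ρ)) =
      Equiv.Perm.sign (κ.symm.trans ((phiEquiv e₀).trans ρ)) *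
        Equiv.Perm.sign (e₀.symm.trans e) := by
  have h1 : κ.symm.trans ((phiEquiv e).trans ρ) =
      (κ.symm.trans (phiEquiv e₀)).trans
        ((Equiv.Perm.sumCongr (1 : Equiv.Perm (Fin ℓ × Fin a)) (e₀.symm.trans e)).trans ρ) := by
    ext1 x
    simp only [Equiv.trans_apply]
    congr 1
    rcases κ.symm x with ⟨i, y⟩
    refine Fin.addCases (fun k => ?_) (fun j => ?_) y
    · simp [phi_castAdd]
    · simp [phi_natAdd]
  rw [h1, Equiv.Perm.sign_trans_trans, Equiv.Perm.sign_sumCongr, mul_comm, Equiv.Perm.sign_one,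
    one_mul]
  rfl

open Classical in
/-- **Lemma B.2 (general determinantal identity).** For `a × (a + tᵢ)` matrices `C i` and
`h × (a + tᵢ)` matrices `D i` (`i ∈ [ℓ]`, `t₁ + ⋯ + t_ℓ = h`), the determinant of the
`(aℓ+h) × (aℓ+h)` block matrix with `C 1, …, C ℓ` in block-diagonal position and
`[D 1 | ⋯ | D ℓ]` as last `h` rows equals `(-1)^(a·Σᵢ tᵢ(ℓ-i))` times the sum over all
partitions `S₁ ⊔ ⋯ ⊔ S_ℓ = [h]` with `|Sᵢ| = tᵢ` (encoded as bijections
`e : (Σ i, Fin (t i)) ≃ Fin h` which are strictly monotone on each block, so that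
`S i = e '' ({i} × Fin (t i))` listed in increasing order) of
`sgn(S₁,…,S_ℓ) ∏ᵢ det [C i ; (D i)^(Sᵢ)]`. -/
theorem det_blockdiag_with_heavy_rows_general
    (F : Type) [Field F] (a ℓ h : ℕ) (hℓ : 1 ≤ ℓ)
    (t : Fin ℓ → ℕ) (ht1 : ∀ i, 1 ≤ t i) (ht : ∑ i, t i = h)
    (C : (i : Fin ℓ) → Matrix (Fin a) (Fin (a + t i)) F)
    (D : (i : Fin ℓ) → Matrix (Fin h) (Fin (a + t i)) F) :
    (((Matrix.of fun (ρ : (Fin ℓ × Fin a) ⊕ Fin h) (c : Σ i : Fin ℓ, Fin (a + t i)) =>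
          Sum.elim (fun p : Fin ℓ × Fin a => if hpc : p.1 = c.1 then C p.1 p.2 (Fin.cast (by rw [hpc]) c.2) else 0)
            (fun j : Fin h => D c.1 j c.2) ρ)).submatrix
        (((Equiv.sumCongr finProdFinEquiv (Equiv.refl (Fin h))).trans
            (finSumFinEquiv.trans (finCongr (by ring)))).symm :
          Fin (a * ℓ + h) ≃ (Fin ℓ × Fin a) ⊕ Fin h)
        (((finSigmaOrderFinEquiv (fun i => a + t i)).trans
            (finCongr (by
              rw [Finset.sum_add_distrib, ht, Finset.sum_const, Finset.card_univ,
                Fintype.card_fin, smul_eq_mul, mul_comm]))).symm :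
          Fin (a * ℓ + h) ≃ Σ i : Fin ℓ, Fin (a + t i))).det
      = (-1 : F) ^ (a * ∑ i : Fin ℓ, t i * (ℓ - 1 - (i : ℕ))) *
        ∑ e : (Σ i : Fin ℓ, Fin (t i)) ≃ Fin h,
          if ∀ i : Fin ℓ, StrictMono (fun j : Fin (t i) => e ⟨i, j⟩) then
            (((Equiv.Perm.sign
                (((finSigmaOrderFinEquiv t).trans (finCongr ht)).symm.trans e)) : ℤ) : F) *
              ∏ i : Fin ℓ,
                (Matrix.of (Fin.append (fun k : Fin a => C i k)
                    (fun j : Fin (t i) => D i (e ⟨i, j⟩))) :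
                  Matrix (Fin (a + t i)) (Fin (a + t i)) F).det
          else 0 := by
  rw [core_expansion]
  · rw [Finset.mul_sum]
    refine Finset.sum_congr rfl fun e _ => ?_
    rw [mul_ite, mul_zero]
    refine if_congr Iff.rfl ?_ rfl
    refine Eq.trans ?_ (mul_assoc _ _ _)
    congr 1
    · rw [sign_phi _ ((finSigmaOrderFinEquiv t).trans (finCongr ht)) e, sign_base]
      · push_cast
        rfl
      · intro i i' x x' hi
        exact finSigma_lt_of_fst (fun i => a + t i) i i' x x' hi
      · intro i x x' hx
        exact finSigma_lt_of_snd (fun i => a + t i) i x x' hx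
      · intro i i' x x' hi
        exact finSigma_lt_of_fst t i i' x x' hi
      · intro i x x' hx
        exact finSigma_lt_of_snd t i x x' hx
      · intro i k
        simp
      · intro j
        simp [mul_comm]
    · refine Finset.prod_congr rfl fun i _ => ?_
      congr 1
      ext r c
      refine Fin.addCases (fun k => ?_) (fun j => ?_) r
      · simp [phi_castAdd]
      · simp [phi_natAdd]
  · intro i k c hc
    simp [Ne.symm hc]
end

section
/- Let F be a field and a ≥ 0 an integer. Let C_1 be an a×(a+1) matrix, C_2 an a×(a+2) matrix, D_1 a 3×(a+1) matrix, and D_2 a 3×(a+2) matrix over F, with D_i^{(j)} denoting the j-th row of D_i. Then the (2a+3)×(2a+3) block matrix with C_1, C_2 in block-diagonal position in its first 2a rows and [D_1 | D_2] as its last 3 rows has determinant zero if and only if det[C_1; D_1^{(1)}]·det[C_2; D_2^{(2)}; D_2^{(3)}] − det[C_1; D_1^{(2)}]·det[C_2; D_2^{(1)}; D_2^{(3)}] + det[C_1; D_1^{(3)}]·det[C_2; D_2^{(1)}; D_2^{(2)}] = 0. -/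
open Matrix in
lemma aux_det_zero {F p q n : Type} [Field F] [Fintype p] [Fintype q] [Fintype n] [DecidableEq n]
    (M : Matrix n n F) (e : p → n) (he : Function.Injective e) (s : q → n)
    (h : ∀ i c, c ∉ Set.range s → M (e i) c = 0) (hc : Fintype.card q < Fintype.card p) :
    M.det = 0 := by
  by_contra hd
  have hu : IsUnit M := (Matrix.isUnit_iff_isUnit_det M).2 (isUnit_iff_ne_zero.2 hd)
  have hl : LinearIndependent F (fun i => M i) := Matrix.linearIndependent_rows_iff_isUnit.2 hu
  have hl2 := hl.comp e he
  have hl3 : LinearIndependent F (fun i k => M (e i) (s k)) := by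
    rw [Fintype.linearIndependent_iff] at hl2 ⊢
    intro g hg
    apply hl2 g
    funext c
    by_cases hcs : c ∈ Set.range s
    · obtain ⟨k, rfl⟩ := hcs
      have := congrFun hg k
      simpa [Finset.sum_apply] using this
    · simp [Finset.sum_apply, h _ c hcs]
  have := hl3.fintype_card_le_finrank
  rw [Module.finrank_fintype_fun_eq_card] at this
  omega

/-- The block matrix with rows regrouped. -/
def auxN {F : Type} [Field F] {a : ℕ}
    (C1 : Matrix (Fin a) (Fin (a + 1)) F) (C2 : Matrix (Fin a) (Fin (a + 2)) F)
    (x y z : Fin (a + 1) ⊕ Fin (a + 2) → F) :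
    Matrix (Fin (a + 1) ⊕ Fin (a + 2)) (Fin (a + 1) ⊕ Fin (a + 2)) F :=
  Sum.elim
    (Fin.snoc (α := fun _ => Fin (a + 1) ⊕ Fin (a + 2) → F)
      (fun k : Fin a => Sum.elim (C1 k) 0) x)
    (Fin.snoc (α := fun _ => Fin (a + 1) ⊕ Fin (a + 2) → F)
      (Fin.snoc (α := fun _ => Fin (a + 1) ⊕ Fin (a + 2) → F)
        (fun k : Fin a => Sum.elim 0 (C2 k)) y) z)

section aux
variable {F : Type} [Field F] {a : ℕ}
    (C1 : Matrix (Fin a) (Fin (a + 1)) F) (C2 : Matrix (Fin a) (Fin (a + 2)) F)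
    (x x' y y' z z' : Fin (a + 1) ⊕ Fin (a + 2) → F)

lemma auxN_up1 : auxN C1 C2 x y z = (auxN C1 C2 x' y z).updateRow (Sum.inl (Fin.last a)) x := by
  ext (i | i) j <;> rw [Matrix.updateRow_apply]
  · induction i using Fin.lastCases <;> simp [auxN]
  · simp [auxN]

lemma auxN_up2 : auxN C1 C2 x y z =
    (auxN C1 C2 x y' z).updateRow (Sum.inr (Fin.last a).castSucc) y := by
  ext (i | i) j <;> rw [Matrix.updateRow_apply]
  · simp [auxN]
  · induction i using Fin.lastCases with
    | last => simp [auxN, Fin.ext_iff]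
    | cast i => induction i using Fin.lastCases <;> simp [auxN]

lemma auxN_up3 : auxN C1 C2 x y z =
    (auxN C1 C2 x y z').updateRow (Sum.inr (Fin.last (a + 1))) z := by
  ext (i | i) j <;> rw [Matrix.updateRow_apply]
  · simp [auxN]
  · induction i using Fin.lastCases <;> simp [auxN]

lemma auxN_add1 : (auxN C1 C2 (x + x') y z).det =
    (auxN C1 C2 x y z).det + (auxN C1 C2 x' y z).det := by
  rw [auxN_up1 C1 C2 (x + x') 0, auxN_up1 C1 C2 x 0, auxN_up1 C1 C2 x' 0,
    Matrix.det_updateRow_add]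

lemma auxN_add2 : (auxN C1 C2 x (y + y') z).det =
    (auxN C1 C2 x y z).det + (auxN C1 C2 x y' z).det := by
  rw [auxN_up2 C1 C2 x (y + y') 0, auxN_up2 C1 C2 x y 0, auxN_up2 C1 C2 x y' 0,
    Matrix.det_updateRow_add]

lemma auxN_add3 : (auxN C1 C2 x y (z + z')).det =
    (auxN C1 C2 x y z).det + (auxN C1 C2 x y z').det := by
  rw [auxN_up3 C1 C2 x y (z + z') 0, auxN_up3 C1 C2 x y z 0, auxN_up3 C1 C2 x y z' 0,
    Matrix.det_updateRow_add]

lemma auxN_alt12 : (auxN C1 C2 x x z).det = 0 :=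
  Matrix.det_zero_of_row_eq (i := Sum.inl (Fin.last a)) (j := Sum.inr (Fin.last a).castSucc)
    (by simp) (by simp [auxN])

lemma auxN_alt23 : (auxN C1 C2 x y y).det = 0 :=
  Matrix.det_zero_of_row_eq (i := Sum.inr (Fin.last (a + 1))) (j := Sum.inr (Fin.last a).castSucc)
    (by simp [Fin.ext_iff]) (by simp [auxN])

lemma auxN_swap12 : (auxN C1 C2 x y z).det = - (auxN C1 C2 y x z).det := by
  have h := auxN_alt12 C1 C2 (x + y) z
  rw [auxN_add1, auxN_add2, auxN_add2, auxN_alt12, auxN_alt12] at h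
  linear_combination h

lemma auxN_swap23 : (auxN C1 C2 x y z).det = - (auxN C1 C2 x z y).det := by
  have h := auxN_alt23 C1 C2 x (y + z)
  rw [auxN_add2, auxN_add3, auxN_add3, auxN_alt23, auxN_alt23] at h
  linear_combination h

lemma auxN_ll (p p' : Fin (a + 1) → F) :
    (auxN C1 C2 (Sum.elim p 0) (Sum.elim p' 0) z).det = 0 := by
  apply aux_det_zero _ (fun o : Option (Fin (a + 1)) =>
    o.elim (Sum.inr (Fin.last a).castSucc) Sum.inl) _ (Sum.inl : Fin (a + 1) → _)
  · rintro (_ | i) (c | c) hc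
    · simp at hc
    · simp [auxN]
    · simp at hc
    · induction i using Fin.lastCases <;> simp [auxN]
  · simp
  · rintro (_ | i) (_ | j) h <;> simp_all

lemma auxN_rrr (q q' q'' : Fin (a + 2) → F) :
    (auxN C1 C2 (Sum.elim 0 q) (Sum.elim 0 q') (Sum.elim 0 q'')).det = 0 := by
  apply aux_det_zero _ (fun o : Option (Fin (a + 2)) =>
    o.elim (Sum.inl (Fin.last a)) Sum.inr) _ (Sum.inr : Fin (a + 2) → _)
  · rintro (_ | i) (c | c) hc
    · simp [auxN]
    · simp at hc
    · induction i using Fin.lastCases with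
      | last => simp [auxN]
      | cast i => induction i using Fin.lastCases <;> simp [auxN]
    · simp at hc
  · simp
  · rintro (_ | i) (_ | j) h <;> simp_all

lemma auxN_lrr (p : Fin (a + 1) → F) (q q' : Fin (a + 2) → F) :
    (auxN C1 C2 (Sum.elim p 0) (Sum.elim 0 q) (Sum.elim 0 q')).det =
      (Matrix.of (Fin.snoc (fun k : Fin a => C1 k) p) :
            Matrix (Fin (a + 1)) (Fin (a + 1)) F).det *
          (Matrix.of (Fin.snoc (Fin.snoc (fun k : Fin a => C2 k) q) q') :
            Matrix (Fin (a + 2)) (Fin (a + 2)) F).det := by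
  rw [← Matrix.det_fromBlocks_zero₂₁ _ 0]
  congr 1
  ext (i | i) (j | j)
  · induction i using Fin.lastCases <;> simp [auxN]
  · induction i using Fin.lastCases <;> simp [auxN]
  · induction i using Fin.lastCases with
    | last => simp [auxN]
    | cast i => induction i using Fin.lastCases <;> simp [auxN]
  · induction i using Fin.lastCases with
    | last => simp [auxN]
    | cast i => induction i using Fin.lastCases <;> simp [auxN]

lemma auxN_main (p0 p1 p2 : Fin (a + 1) → F) (q0 q1 q2 : Fin (a + 2) → F) :
    (auxN C1 C2 (Sum.elim p0 q0) (Sum.elim p1 q1) (Sum.elim p2 q2)).det =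
      (auxN C1 C2 (Sum.elim p0 0) (Sum.elim 0 q1) (Sum.elim 0 q2)).det -
      (auxN C1 C2 (Sum.elim p1 0) (Sum.elim 0 q0) (Sum.elim 0 q2)).det +
      (auxN C1 C2 (Sum.elim p2 0) (Sum.elim 0 q0) (Sum.elim 0 q1)).det := by
  have hs : ∀ (p : Fin (a + 1) → F) (q : Fin (a + 2) → F),
      Sum.elim p q = Sum.elim p (0 : Fin (a + 2) → F) + Sum.elim (0 : Fin (a + 1) → F) q := by
    intro p q
    ext (i | i) <;> simp
  rw [hs p0 q0, hs p1 q1, hs p2 q2]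
  simp only [auxN_add1, auxN_add2, auxN_add3]
  rw [auxN_ll, auxN_ll, auxN_rrr,
    auxN_swap23 C1 C2 (Sum.elim p0 0) (Sum.elim 0 q1) (Sum.elim p2 0), auxN_ll,
    auxN_swap12 C1 C2 (Sum.elim 0 q0) (Sum.elim p1 0) (Sum.elim p2 0),
    auxN_swap23 C1 C2 (Sum.elim p1 0) (Sum.elim 0 q0) (Sum.elim p2 0), auxN_ll,
    auxN_swap12 C1 C2 (Sum.elim 0 q0) (Sum.elim p1 0) (Sum.elim 0 q2),
    auxN_swap23 C1 C2 (Sum.elim 0 q0) (Sum.elim 0 q1) (Sum.elim p2 0),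
    auxN_swap12 C1 C2 (Sum.elim 0 q0) (Sum.elim p2 0) (Sum.elim 0 q1)]
  ring

end aux

/-- Regrouping of the rows. -/
def auxE (a : ℕ) : (Fin a ⊕ Fin a) ⊕ Fin 3 → Fin (a + 1) ⊕ Fin (a + 2) :=
  Sum.elim (Sum.elim (fun i => Sum.inl i.castSucc) (fun i => Sum.inr i.castSucc.castSucc))
    ![Sum.inl (Fin.last a), Sum.inr (Fin.last a).castSucc, Sum.inr (Fin.last (a + 1))]

lemma auxE_bij (a : ℕ) : Function.Bijective (auxE a) := by
  rw [Fintype.bijective_iff_surjective_and_card]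
  refine ⟨?_, by simp; omega⟩
  rintro (i | i)
  · induction i using Fin.lastCases with
    | last => exact ⟨Sum.inr 0, rfl⟩
    | cast i => exact ⟨Sum.inl (Sum.inl i), rfl⟩
  · induction i using Fin.lastCases with
    | last => exact ⟨Sum.inr 2, rfl⟩
    | cast i =>
      induction i using Fin.lastCases with
      | last => exact ⟨Sum.inr 1, rfl⟩
      | cast i => exact ⟨Sum.inl (Sum.inr i), rfl⟩

lemma aux_det_iff {F m n : Type} [Field F] [Fintype m] [DecidableEq m] [Fintype n] [DecidableEq n]
    (M : Matrix n n F) (e f : m ≃ n) : (M.submatrix e f).det = 0 ↔ M.det = 0 := by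
  rw [← not_iff_not, ← ne_eq, ← ne_eq, ← isUnit_iff_ne_zero, ← isUnit_iff_ne_zero,
    ← Matrix.isUnit_iff_isUnit_det, ← Matrix.isUnit_iff_isUnit_det, Matrix.isUnit_submatrix_equiv]

/-- **Lemma 5.1.** Let `C1` be `a × (a+1)`, `C2` be `a × (a+2)`, `D1` be `3 × (a+1)` and
`D2` be `3 × (a+2)`.  The `(2a+3) × (2a+3)` block matrix with `C1, C2` in block-diagonal
position and `[D1 | D2]` as its last three rows has determinant zero if and only if
`det[C1; D1⁽¹⁾]·det[C2; D2⁽²⁾; D2⁽³⁾] - det[C1; D1⁽²⁾]·det[C2; D2⁽¹⁾; D2⁽³⁾]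
 + det[C1; D1⁽³⁾]·det[C2; D2⁽¹⁾; D2⁽²⁾] = 0`. -/
theorem det_blockdiag_two_groups_h3_eq_zero_iff
    (F : Type) [Field F] (a : ℕ)
    (C1 : Matrix (Fin a) (Fin (a + 1)) F) (C2 : Matrix (Fin a) (Fin (a + 2)) F)
    (D1 : Matrix (Fin 3) (Fin (a + 1)) F) (D2 : Matrix (Fin 3) (Fin (a + 2)) F) :
    (((Matrix.of fun (ρ : (Fin a ⊕ Fin a) ⊕ Fin 3) (c : Fin (a + 1) ⊕ Fin (a + 2)) =>
          Sum.elim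
            (Sum.elim (fun j : Fin a => Sum.elim (fun c1 => C1 j c1) (fun _ => (0 : F)) c)
              (fun j : Fin a => Sum.elim (fun _ => (0 : F)) (fun c2 => C2 j c2) c))
            (fun j : Fin 3 => Sum.elim (fun c1 => D1 j c1) (fun c2 => D2 j c2) c) ρ)).submatrix
        (((Equiv.sumCongr finSumFinEquiv (Equiv.refl (Fin 3))).trans
            (finSumFinEquiv.trans (finCongr (by omega)))).symm :
          Fin (2 * a + 3) ≃ (Fin a ⊕ Fin a) ⊕ Fin 3)
        ((finSumFinEquiv.trans (finCongr (by omega))).symm :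
          Fin (2 * a + 3) ≃ Fin (a + 1) ⊕ Fin (a + 2))).det = 0 ↔
      (Matrix.of (Fin.snoc (fun k : Fin a => C1 k) (D1 0)) :
            Matrix (Fin (a + 1)) (Fin (a + 1)) F).det *
          (Matrix.of (Fin.snoc (Fin.snoc (fun k : Fin a => C2 k) (D2 1)) (D2 2)) :
            Matrix (Fin (a + 2)) (Fin (a + 2)) F).det -
        (Matrix.of (Fin.snoc (fun k : Fin a => C1 k) (D1 1)) :
            Matrix (Fin (a + 1)) (Fin (a + 1)) F).det *
          (Matrix.of (Fin.snoc (Fin.snoc (fun k : Fin a => C2 k) (D2 0)) (D2 2)) :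
            Matrix (Fin (a + 2)) (Fin (a + 2)) F).det +
        (Matrix.of (Fin.snoc (fun k : Fin a => C1 k) (D1 2)) :
            Matrix (Fin (a + 1)) (Fin (a + 1)) F).det *
          (Matrix.of (Fin.snoc (Fin.snoc (fun k : Fin a => C2 k) (D2 0)) (D2 1)) :
            Matrix (Fin (a + 2)) (Fin (a + 2)) F).det = 0 := by
  rw [← auxN_lrr, ← auxN_lrr, ← auxN_lrr, ← auxN_main,
    ← aux_det_iff (auxN C1 C2 _ _ _)
      ((((Equiv.sumCongr finSumFinEquiv (Equiv.refl (Fin 3))).trans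
            (finSumFinEquiv.trans (finCongr (by omega)))).symm :
          Fin (2 * a + 3) ≃ (Fin a ⊕ Fin a) ⊕ Fin 3).trans (Equiv.ofBijective _ (auxE_bij a)))
      ((finSumFinEquiv.trans (finCongr (by omega))).symm :
          Fin (2 * a + 3) ≃ Fin (a + 1) ⊕ Fin (a + 2))]
  apply iff_of_eq
  congr 2
  ext i j
  simp only [Matrix.submatrix_apply, Equiv.trans_apply, Equiv.ofBijective_apply, Matrix.of_apply]
  generalize (((Equiv.sumCongr finSumFinEquiv (Equiv.refl (Fin 3))).trans
            (finSumFinEquiv.trans (finCongr (by omega)))).symm :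
          Fin (2 * a + 3) ≃ (Fin a ⊕ Fin a) ⊕ Fin 3) i = r
  generalize ((finSumFinEquiv.trans (finCongr (by omega))).symm :
          Fin (2 * a + 3) ≃ Fin (a + 1) ⊕ Fin (a + 2)) j = c
  rcases r with (r | r) | r
  · rcases c with c | c <;> simp [auxN, auxE]
  · rcases c with c | c <;> simp [auxN, auxE]
  · fin_cases r <;> rcases c with c | c <;> simp [auxN, auxE]
end

section
/- Let r ∣ n and a < r be positive integers, let g = n/r, and assume n − ga − 2 > 0. Let q be a prime power such that the multiplicative group 𝔽_q^* contains a subgroup G with |G| ≥ r and with at least n/r cosets (i.e., (q−1)/|G| ≥ n/r). Then there exists a maximally recoverable (n, r, h=2, a, q)-local reconstruction code. -/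
/-- The parity check matrix of an `(n, r, h, a, q)`-local reconstruction code with `g = n/r`
local groups, given by local-parity matrices `A i` (in block-diagonal position) and
heavy-parity matrices `B i`. Rows are indexed by `(Fin g × Fin a) ⊕ Fin h`
(local parity rows first, then the `h` heavy rows) and columns by `Fin g × Fin r`
(the `i`-th local group consists of the columns with first coordinate `i`). -/
def lrcParityCheck (F : Type) [Field F] (g r a h : ℕ)
    (A : Fin g → Matrix (Fin a) (Fin r) F)
    (B : Fin g → Matrix (Fin h) (Fin r) F) :
    Matrix ((Fin g × Fin a) ⊕ Fin h) (Fin g × Fin r) F :=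
  fun ρ c =>
    Sum.elim (fun p : Fin g × Fin a => if p.1 = c.1 then A p.1 p.2 c.2 else 0)
      (fun j : Fin h => B c.1 j c.2) ρ

/-- `A, B` define a maximally recoverable LRC:  every `a × a` minor of each `A i` is
nonzero (stated: any `a` columns of `A i` are linearly independent), and for every set `E`
of `a * g + h` columns containing at least `a` columns from each local group, the
corresponding columns of the parity check matrix are linearly independent (equivalently,
the square submatrix of the parity check matrix on the columns of `E` is invertible). -/
def IsMRLRC (F : Type) [Field F] (g r a h : ℕ)
    (A : Fin g → Matrix (Fin a) (Fin r) F)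
    (B : Fin g → Matrix (Fin h) (Fin r) F) : Prop :=
  (∀ i : Fin g, ∀ S : Finset (Fin r), S.card = a →
      LinearIndependent F (fun c : {x // x ∈ S} => fun j : Fin a => A i j c.1)) ∧
  (∀ E : Finset (Fin g × Fin r), E.card = a * g + h →
      (∀ i : Fin g, a ≤ (E.filter (fun x => x.1 = i)).card) →
      LinearIndependent F
        (fun c : {x // x ∈ E} => fun ρ => lrcParityCheck F g r a h A B ρ c.1))

/-- There is a maximally recoverable `(n = g * r, r, h, a, q)`-local reconstruction code
with `g` local groups each of size `r`, over the field with `q` elements. -/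
def ExistsMRLRC (g r h a q : ℕ) : Prop :=
  ∃ (F : Type) (_ : Field F) (_ : Fintype F),
    Fintype.card F = q ∧
      ∃ (A : Fin g → Matrix (Fin a) (Fin r) F) (B : Fin g → Matrix (Fin h) (Fin r) F),
        IsMRLRC F g r a h A B


open Polynomial in
/-- A functional vanishing on monomials up to degree `m` vanishes on polynomials of degree
at most `m`. -/
lemma lrc_functional_zero {F : Type} [Field F] {ι : Type} (S : Finset ι) (β f : ι → F) (m : ℕ)
    (h : ∀ j ≤ m, ∑ c ∈ S, f c * β c ^ j = 0) (p : F[X]) (hp : p.natDegree ≤ m) :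
    ∑ c ∈ S, f c * p.eval (β c) = 0 := by
  simp_rw [eval_eq_sum_range, Finset.mul_sum]
  rw [Finset.sum_comm]
  refine Finset.sum_eq_zero fun j hj => ?_
  have hj' : j ≤ m := by
    have := Finset.mem_range.1 hj
    omega
  calc ∑ c ∈ S, f c * (p.coeff j * β c ^ j) = p.coeff j * ∑ c ∈ S, f c * β c ^ j := by
        rw [Finset.mul_sum]
        exact Finset.sum_congr rfl fun c _ => by ring
    _ = 0 := by rw [h j hj', mul_zero]

open Polynomial in
lemma lrc_vandermonde {F : Type} [Field F] {ι : Type} (S : Finset ι) (β f : ι → F)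
    (hβ : Function.Injective β)
    (h : ∀ j < S.card, ∑ c ∈ S, f c * β c ^ j = 0) : ∀ c ∈ S, f c = 0 := by
  classical
  intro c hc
  have hpos : 0 < S.card := Finset.card_pos.2 ⟨c, hc⟩
  have key := lrc_functional_zero S β f (S.card - 1) (fun j hj => h j (by omega))
    (∏ d ∈ S.erase c, (X - C (β d)))
    (by rw [natDegree_prod_of_monic _ _ fun d _ => monic_X_sub_C _]
        simp [Finset.card_erase_of_mem hc])
  rw [Finset.sum_eq_single_of_mem c hc] at key
  · rcases mul_eq_zero.1 key with h0 | h0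
    · exact h0
    · rw [eval_prod, Finset.prod_eq_zero_iff] at h0
      obtain ⟨d, hd, h0⟩ := h0
      simp only [eval_sub, eval_X, eval_C, sub_eq_zero] at h0
      exact absurd (hβ h0).symm (Finset.ne_of_mem_erase hd)
  · intro b hb hbc
    rw [eval_prod, Finset.prod_eq_zero (Finset.mem_erase.2 ⟨hbc, hb⟩) (by simp), mul_zero]

lemma lrc_vandermonde_shift {F : Type} [Field F] {ι : Type} (S : Finset ι) (β f : ι → F)
    (hβ : Function.Injective β) (h0 : ∀ c, β c ≠ 0)
    (h : ∀ j < S.card, ∑ c ∈ S, f c * β c ^ (j + 1) = 0) : ∀ c ∈ S, f c = 0 := by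
  intro c hc
  have := lrc_vandermonde S β (fun c => f c * β c) hβ
    (fun j hj => by rw [← h j hj]; exact Finset.sum_congr rfl fun c _ => by ring) c hc
  exact (mul_eq_zero.1 this).resolve_right (h0 c)

open Polynomial in
/-- With `a + 1` nodes, the top moment is determined by the bottom one. -/
lemma lrc_ratio {F : Type} [Field F] {ι : Type} (S : Finset ι) (β f : ι → F) (a : ℕ)
    (hS : S.card = a + 1)
    (h : ∀ j < a, ∑ c ∈ S, f c * β c ^ (j + 1) = 0) :
    ∑ c ∈ S, f c * β c ^ (a + 1) = (-1) ^ a * (∏ c ∈ S, β c) * ∑ c ∈ S, f c := by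
  set p : F[X] := ∏ d ∈ S, (X - C (β d)) with hp
  have hdeg : p.natDegree = a + 1 := by
    rw [hp, natDegree_prod_of_monic _ _ fun d _ => monic_X_sub_C _]
    simp [hS]
  have hmon : p.Monic := monic_prod_of_monic _ _ fun d _ => monic_X_sub_C _
  have hlead : p.coeff (a + 1) = 1 := by
    rw [← hdeg]; exact hmon
  have hc0 : p.coeff 0 = (-1) ^ (a + 1) * ∏ c ∈ S, β c := by
    rw [coeff_zero_eq_eval_zero, hp, eval_prod]
    simp only [eval_sub, eval_X, eval_C, zero_sub]
    rw [Finset.prod_neg, hS]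
  have hz : ∑ c ∈ S, f c * p.eval (β c) = 0 := by
    refine Finset.sum_eq_zero fun c hc => ?_
    rw [hp, eval_prod, Finset.prod_eq_zero hc (by simp), mul_zero]
  have hexp : ∑ c ∈ S, f c * p.eval (β c)
      = ∑ j ∈ Finset.range (a + 2), p.coeff j * ∑ c ∈ S, f c * β c ^ j := by
    simp_rw [eval_eq_sum_range, hdeg, Finset.mul_sum]
    rw [Finset.sum_comm]
    exact Finset.sum_congr rfl fun j _ => Finset.sum_congr rfl fun c _ => by ring
  rw [hexp, Finset.sum_range_succ, Finset.sum_range_succ', hlead, hc0,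
    Finset.sum_eq_zero (fun j hj => by rw [h j (Finset.mem_range.1 hj), mul_zero])] at hz
  simp only [pow_zero, mul_one] at hz
  linear_combination hz

/-- The core argument, for the kernel of the parity check matrix. -/
lemma lrc_core {F : Type} [Field F] (g r a : ℕ) (β : Fin r → F) (hβ : Function.Injective β)
    (h0 : ∀ c, β c ≠ 0) (lam : Fin g → F)
    (hl0 : ∀ i, lam i ≠ 0) (hl : ∀ i j, i ≠ j → ∀ S T : Finset (Fin r),
      lam i * ∏ c ∈ S, β c ≠ lam j * ∏ c ∈ T, β c)
    (T : Fin g → Finset (Fin r)) (d : Fin g → ℕ) (hd : ∀ i, (T i).card = a + d i)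
    (hsum : ∑ i, d i = 2) (f : Fin g → Fin r → F)
    (hA : ∀ i, ∀ j < a, ∑ c ∈ T i, f i c * β c ^ (j + 1) = 0)
    (hu : ∑ i, ∑ c ∈ T i, f i c = 0)
    (hv : ∑ i, lam i * ∑ c ∈ T i, f i c * β c ^ (a + 1) = 0) :
    ∀ i, ∀ c ∈ T i, f i c = 0 := by
  have hzero : ∀ i, d i = 0 → ∀ c ∈ T i, f i c = 0 := fun i hi =>
    lrc_vandermonde_shift (T i) β (f i) hβ h0 fun j hj => hA i j (by rw [hd, hi] at hj; exact hj)
  have hu0 : ∀ i, d i = 0 → ∑ c ∈ T i, f i c = 0 := fun i hi =>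
    Finset.sum_eq_zero (hzero i hi)
  have hv0 : ∀ i, d i = 0 → lam i * ∑ c ∈ T i, f i c * β c ^ (a + 1) = 0 := fun i hi => by
    rw [Finset.sum_eq_zero (fun c hc => by rw [hzero i hi c hc, zero_mul]), mul_zero]
  intro i
  have hsplit := Finset.add_sum_erase Finset.univ d (Finset.mem_univ i)
  rw [hsum] at hsplit
  obtain hi | hi | hi : d i = 0 ∨ d i = 1 ∨ 2 ≤ d i := by omega
  · exact hzero i hi
  · obtain ⟨j, hj, hdj⟩ : ∃ j ∈ Finset.univ.erase i, d j ≠ 0 := by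
      by_contra! hcon
      rw [Finset.sum_eq_zero hcon] at hsplit
      omega
    have hji : j ≠ i := Finset.ne_of_mem_erase hj
    have hsplit2 := Finset.add_sum_erase _ d hj
    have hdj1 : d j = 1 := by omega
    have hrest : ∑ k ∈ (Finset.univ.erase i).erase j, d k = 0 := by omega
    rw [Finset.sum_eq_zero_iff] at hrest
    rw [← Finset.add_sum_erase _ _ (Finset.mem_univ i), ← Finset.add_sum_erase _ _ hj,
      Finset.sum_eq_zero (fun k hk => hu0 k (hrest k hk))] at hu
    rw [← Finset.add_sum_erase _ _ (Finset.mem_univ i), ← Finset.add_sum_erase _ _ hj,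
      Finset.sum_eq_zero (fun k hk => hv0 k (hrest k hk)),
      lrc_ratio (T i) β (f i) a (by rw [hd, hi]) (hA i),
      lrc_ratio (T j) β (f j) a (by rw [hd, hdj1]) (hA j)] at hv
    have hprod : (-1 : F) ^ a * ((lam i * ∏ c ∈ T i, β c) - (lam j * ∏ c ∈ T j, β c))
        * ∑ c ∈ T i, f i c = 0 := by
      linear_combination hv - (-1 : F) ^ a * (lam j * ∏ c ∈ T j, β c) * hu
    have hui : ∑ c ∈ T i, f i c = 0 := by
      refine (mul_eq_zero.1 hprod).resolve_left (mul_ne_zero (by simp) ?_)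
      exact sub_ne_zero.2 (hl i j hji.symm _ _)
    refine lrc_vandermonde (T i) β (f i) hβ fun k hk => ?_
    rcases k with _ | k
    · simpa using hui
    · exact hA i k (by rw [hd, hi] at hk; omega)
  · have hrest : ∑ k ∈ Finset.univ.erase i, d k = 0 := by omega
    rw [Finset.sum_eq_zero_iff] at hrest
    rw [← Finset.add_sum_erase _ _ (Finset.mem_univ i),
      Finset.sum_eq_zero (fun k hk => hu0 k (hrest k hk)), add_zero] at hu
    rw [← Finset.add_sum_erase _ _ (Finset.mem_univ i),
      Finset.sum_eq_zero (fun k hk => hv0 k (hrest k hk)), add_zero] at hv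
    have hli : lam i ≠ 0 := hl0 i
    have hvi := (mul_eq_zero.1 hv).resolve_left hli
    refine lrc_vandermonde (T i) β (f i) hβ fun k hk => ?_
    rcases k with _ | k
    · simpa using hu
    · rw [hd] at hk
      rcases Nat.lt_or_ge k a with hka | hka
      · exact hA i k hka
      · obtain rfl : k = a := by omega
        exact hvi

lemma lrc_sum_fiber {F : Type} [AddCommMonoid F] {g r : ℕ} (E : Finset (Fin g × Fin r))
    (φ : Fin g × Fin r → F) :
    ∑ x ∈ E, φ x = ∑ i, ∑ c ∈ Finset.univ.filter (fun c => (i, c) ∈ E), φ (i, c) := by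
  simp_rw [Finset.sum_filter]
  rw [← Fintype.sum_prod_type' (f := fun i c => if (i, c) ∈ E then φ (i, c) else 0)]
  simp

lemma lrc_card_fiber {g r : ℕ} (E : Finset (Fin g × Fin r)) (i : Fin g) :
    (E.filter (fun x => x.1 = i)).card = (Finset.univ.filter (fun c => (i, c) ∈ E)).card := by
  symm
  refine Finset.card_bij (fun c _ => (i, c)) ?_ ?_ ?_
  · intro c hc
    simpa using hc
  · intro c _ c' _ h
    exact (Prod.mk.inj h).2
  · rintro ⟨i', c⟩ h
    simp only [Finset.mem_filter] at h
    obtain ⟨h1, rfl⟩ := h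
    exact ⟨c, by simpa using h1, rfl⟩

/-- **Lemma 4.2.** Let `r ∣ n`, `a < r`, `g = n/r`, and `n - g·a - 2 > 0`. If the
multiplicative group of the field `F` of order `q` contains a subgroup `G` of size at
least `r` with at least `n/r` cosets, then there exists a maximally recoverable
`(n, r, h = 2, a, q)`-local reconstruction code. -/
theorem exists_mrlrc_h2_of_subgroup
    (n r a q : ℕ) (hr : 0 < r) (hrn : r ∣ n) (har : a < r)
    (hk : (n / r) * a + 2 < n)
    (F : Type) [Field F] [Fintype F] (hF : Fintype.card F = q)
    (G : Subgroup Fˣ) (hG1 : r ≤ Nat.card G) (hG2 : n / r ≤ G.index) :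
    ExistsMRLRC (n / r) r 2 a q := by
  classical
  generalize n / r = g at *
  obtain ⟨b, hb⟩ : ∃ b : Fin r → G, Function.Injective b := by
    have e := Finite.equivFin G
    exact ⟨fun c => e.symm (Fin.castLE hG1 c),
      e.symm.injective.comp (Fin.castLE_injective hG1)⟩
  obtain ⟨l, hl⟩ : ∃ l : Fin g → Fˣ ⧸ G, Function.Injective l := by
    have e := Finite.equivFin (Fˣ ⧸ G)
    exact ⟨fun c => e.symm (Fin.castLE hG2 c),
      e.symm.injective.comp (Fin.castLE_injective hG2)⟩
  set β : Fin r → F := fun c => ((b c : Fˣ) : F) with hβdef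
  set lam : Fin g → F := fun i => (((l i).out : Fˣ) : F) with hlam
  have hβ : Function.Injective β := fun c c' h => hb (Subtype.ext (Units.ext h))
  have h0 : ∀ c, β c ≠ 0 := fun c => Units.ne_zero _
  have hl0 : ∀ i, lam i ≠ 0 := fun i => Units.ne_zero _
  have hll : ∀ i j, i ≠ j → ∀ S T : Finset (Fin r),
      lam i * ∏ c ∈ S, β c ≠ lam j * ∏ c ∈ T, β c := by
    intro i j hij S T h
    have hprod : ∀ S : Finset (Fin r),
        ∏ c ∈ S, β c = (((∏ c ∈ S, b c : G) : Fˣ) : F) := by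
      intro S
      simp [hβdef]
    rw [hprod, hprod] at h
    simp only [hlam] at h
    rw [← Units.val_mul, ← Units.val_mul] at h
    have h' := Units.ext h
    apply hij
    apply hl
    rw [← (l i).out_eq', ← (l j).out_eq']
    have h2 := congrArg (QuotientGroup.mk (s := G)) h'
    rw [QuotientGroup.mk_mul_of_mem _ (SetLike.coe_mem _),
      QuotientGroup.mk_mul_of_mem _ (SetLike.coe_mem _)] at h2
    exact h2
  refine ⟨F, inferInstance, inferInstance, hF, fun _ => fun j c => β c ^ (j.1 + 1),
    fun i => fun j c => if j = 0 then 1 else lam i * β c ^ (a + 1), ?_, ?_⟩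
  · intro i S hS
    refine (linearIndepOn_finset_iff (s := S)
      (v := fun c => fun j : Fin a => β c ^ (j.1 + 1))).2 fun f hf => ?_
    refine lrc_vandermonde_shift S β f hβ h0 fun j hj => ?_
    have := congrFun hf ⟨j, by omega⟩
    simpa using this
  · intro E hE hEa
    refine (linearIndepOn_finset_iff (s := E)
      (v := fun c => fun ρ => lrcParityCheck F g r a 2 (fun _ => fun j c => β c ^ (j.1 + 1))
        (fun i => fun j c => if j = 0 then 1 else lam i * β c ^ (a + 1)) ρ c)).2 fun f hf => ?_
    set T : Fin g → Finset (Fin r) := fun i => Finset.univ.filter (fun c => (i, c) ∈ E) with hT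
    have hTa : ∀ i, a ≤ (T i).card := fun i => by
      rw [hT, ← lrc_card_fiber]; exact hEa i
    have hcard : ∑ i, (T i).card = a * g + 2 := by
      rw [← hE, Finset.card_eq_sum_ones, lrc_sum_fiber]
      simp [hT]
    have hd : ∀ i, (T i).card = a + ((T i).card - a) := fun i => by
      have := hTa i
      omega
    have hsum : ∑ i, ((T i).card - a) = 2 := by
      rw [Finset.sum_congr rfl fun i _ => hd i, Finset.sum_add_distrib] at hcard
      simp only [Finset.sum_const, Finset.card_univ, Fintype.card_fin, smul_eq_mul] at hcard
      rw [mul_comm a g] at hcard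
      omega
    have main := lrc_core g r a β hβ h0 lam hl0 hll T (fun i => (T i).card - a) hd hsum
      (fun i c => f (i, c)) ?_ ?_ ?_
    · rintro ⟨i, c⟩ hx
      exact main i c (by simpa [hT] using hx)
    · intro i j hj
      have h := congrFun hf (Sum.inl (i, ⟨j, hj⟩))
      rw [Finset.sum_apply, lrc_sum_fiber] at h
      rw [Finset.sum_eq_single i] at h
      · simpa [lrcParityCheck] using h
      · intro k _ hki
        refine Finset.sum_eq_zero fun c _ => ?_
        simp [lrcParityCheck, hki.symm]
      · simp
    · have h := congrFun hf (Sum.inr 0)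
      rw [Finset.sum_apply, lrc_sum_fiber] at h
      simpa [lrcParityCheck] using h
    · have h := congrFun hf (Sum.inr 1)
      rw [Finset.sum_apply, lrc_sum_fiber] at h
      simp only [Finset.mul_sum]
      simp only [lrcParityCheck, Pi.smul_apply, Sum.elim_inr, one_ne_zero, if_false,
        smul_eq_mul, Pi.zero_apply] at h
      rw [← h]
      exact Finset.sum_congr rfl fun i _ => Finset.sum_congr rfl fun c _ => by ring
end

section
/- Let r ∣ n and a < r be positive integers, let g = n/r, and assume n − ga − 3 > 0. Let q_0 ≥ 2r+3 be a prime power such that the multiplicative group 𝔽_{q_0}^* contains a subgroup G with |G| ≥ r+2 and at least n/r cosets (i.e., (q_0−1)/|G| ≥ n/r). Then there exists a maximally recoverable (n, r, h=3, a, q)-local reconstruction code over the field with q = q_0^3 elements. -/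
open Polynomial in
theorem aux_div {F : Type} [Field F] {r : ℕ} (α : Fin r → F) (hα : Function.Injective α)
    (S : Finset (Fin r)) (k : ℕ) (P : F[X]) (hP : P.natDegree ≤ S.card + k)
    (hv : ∀ j ∈ S, P.eval (α j) = 0) :
    ∃ Q : F[X], P = (∏ j ∈ S, (X - C (α j))) * Q ∧ Q.natDegree ≤ k ∧
      Q.coeff k = P.coeff (S.card + k) := by
  have hdvd : (∏ j ∈ S, (X - C (α j))) ∣ P := by
    apply Finset.prod_dvd_of_coprime
    · intro x _ y _ hxy
      exact pairwise_coprime_X_sub_C hα hxy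
    · intro j hj
      exact dvd_iff_isRoot.2 (hv j hj)
  obtain ⟨Q, hQ⟩ := hdvd
  have hm : (∏ j ∈ S, (X - C (α j))).Monic := monic_prod_X_sub_C _ _
  have hd : (∏ j ∈ S, (X - C (α j))).natDegree = S.card := by
    simp
  have hQd : Q.natDegree ≤ k := by
    by_cases h0 : Q = 0
    · simp [h0]
    · have := hm.natDegree_mul' h0
      rw [← hQ, hd] at this
      omega
  refine ⟨Q, hQ, hQd, ?_⟩
  have := coeff_mul_add_eq_of_natDegree_le hd.le hQd
  rw [← hQ] at this
  rw [this, ← hd, hm.coeff_natDegree, one_mul]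

open Polynomial in
noncomputable def auxPoly {F : Type} [Field F] (a : ℕ) (p : F[X]) (β l m y1 y2 y3 : F) : F[X] :=
  X * (X - C β) * (p + C y1 * X ^ a) + C (y2 * l) * (X - C β) + C (y3 * m) * X

open Polynomial in
theorem auxPoly_natDegree {F : Type} [Field F] (a : ℕ) (p : F[X]) (hp : p.degree < a)
    (β l m y1 y2 y3 : F) : (auxPoly a p β l m y1 y2 y3).natDegree ≤ a + 2 := by
  have h1 : (p + C y1 * X ^ a).natDegree ≤ a := by
    refine (natDegree_add_le _ _).trans (max_le (natDegree_le_of_degree_le hp.le) ?_)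
    exact natDegree_C_mul_X_pow_le _ _
  have h2 : (X * (X - C β) : F[X]).natDegree ≤ 2 := by
    compute_degree
  unfold auxPoly
  refine (natDegree_add_le _ _).trans (max_le ((natDegree_add_le _ _).trans (max_le ?_ ?_)) ?_)
  · exact natDegree_mul_le.trans (by omega)
  · have : (C (y2 * l) * (X - C β) : F[X]).natDegree ≤ 1 := by compute_degree
    omega
  · have : (C (y3 * m) * X : F[X]).natDegree ≤ 1 := by compute_degree
    omega

open Polynomial in
theorem auxPoly_coeff {F : Type} [Field F] (a : ℕ) (p : F[X]) (hp : p.degree < a)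
    (β l m y1 y2 y3 : F) : (auxPoly a p β l m y1 y2 y3).coeff (a + 2) = y1 := by
  have hc : p.coeff a = 0 := coeff_eq_zero_of_degree_lt hp
  have hc1 : p.coeff (a + 1) = 0 := coeff_eq_zero_of_degree_lt (hp.trans (by exact_mod_cast Nat.lt_succ_self a))
  have : auxPoly a p β l m y1 y2 y3 = (p + C y1 * X ^ a) * X * X - C β * ((p + C y1 * X ^ a) * X)
     + C (y2 * l) * X - C (y2 * l * β) + C (y3 * m) * X := by
    unfold auxPoly
    simp only [C_mul]
    ring
  rw [this]
  have e : a + 2 = a + 1 + 1 := rfl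
  simp only [coeff_add, coeff_sub, coeff_C_mul, e, coeff_mul_X, coeff_X_pow, hc, hc1, coeff_C_succ]
  simp

open Polynomial in
theorem auxPoly_eval_zero {F : Type} [Field F] (a : ℕ) (p : F[X]) 
    (β l m y1 y2 y3 : F) : (auxPoly a p β l m y1 y2 y3).eval 0 = - (β * l * y2) := by
  simp [auxPoly]; ring

open Polynomial in
theorem auxPoly_eval_beta {F : Type} [Field F] (a : ℕ) (p : F[X]) 
    (β l m y1 y2 y3 : F) : (auxPoly a p β l m y1 y2 y3).eval β = β * m * y3 := by
  simp [auxPoly]; ring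

open Polynomial in
theorem aux_K1 {F : Type} [Field F] {r : ℕ} (α : Fin r → F) (hα : Function.Injective α)
    (S : Finset (Fin r)) (a : ℕ) (hS : S.card = a + 1) (p : F[X]) (hp : p.degree < a)
    (β l m y1 y2 y3 : F) (hβ : β ≠ 0)
    (hv : ∀ j ∈ S, (auxPoly a p β l m y1 y2 y3).eval (α j) = 0) :
    m * y3 * (∏ j ∈ S, α j) =
      (∏ j ∈ S, (β - α j)) * (y1 * (∏ j ∈ S, α j) - (-1) ^ (a + 1) * l * y2) := by
  obtain ⟨Q, hQ, hQd, hQc⟩ := aux_div α hα S 1 _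
    ((auxPoly_natDegree a p hp β l m y1 y2 y3).trans (by omega)) hv
  have hc := auxPoly_coeff a p hp β l m y1 y2 y3
  rw [show S.card + 1 = a + 2 by omega, hc] at hQc
  obtain ⟨u, z, rfl⟩ := exists_eq_X_add_C_of_natDegree_le_one hQd
  have hu : u = y1 := by simpa using hQc
  subst hu
  have h0 := auxPoly_eval_zero a p β l m u y2 y3
  have hb := auxPoly_eval_beta a p β l m u y2 y3
  rw [hQ] at h0 hb
  simp only [eval_mul, eval_prod, eval_sub, eval_X, eval_C, eval_add, zero_sub, Finset.prod_neg, hS] at h0 hb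
  have hε : ((-1 : F) ^ (a + 1)) * (-1) ^ (a + 1) = 1 := by
    rw [← mul_pow]; simp
  set γ := ∏ j ∈ S, α j
  set δ := ∏ j ∈ S, (β - α j)
  set ε := (-1 : F) ^ (a + 1)
  apply mul_left_cancel₀ hβ
  linear_combination (-γ) * hb + δ * ε * h0 - δ * γ * z * hε

open Polynomial in
theorem aux_K2 {F : Type} [Field F] {r : ℕ} (α : Fin r → F) (hα : Function.Injective α)
    (S : Finset (Fin r)) (a : ℕ) (hS : S.card = a + 2) (p : F[X]) (hp : p.degree < a)
    (β l m y1 y2 y3 : F) 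
    (hv : ∀ j ∈ S, (auxPoly a p β l m y1 y2 y3).eval (α j) = 0) :
    - (β * l * y2) = (-1) ^ (a + 2) * (∏ j ∈ S, α j) * y1 ∧
    β * m * y3 = (∏ j ∈ S, (β - α j)) * y1 := by
  obtain ⟨Q, hQ, hQd, hQc⟩ := aux_div α hα S 0 _
    ((auxPoly_natDegree a p hp β l m y1 y2 y3).trans (by omega)) hv
  have hc := auxPoly_coeff a p hp β l m y1 y2 y3
  rw [show S.card + 0 = a + 2 by omega, hc] at hQc
  rw [eq_C_of_natDegree_le_zero hQd, hQc] at hQ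
  have h0 := auxPoly_eval_zero a p β l m y1 y2 y3
  have hb := auxPoly_eval_beta a p β l m y1 y2 y3
  rw [hQ] at h0 hb
  simp only [eval_mul, eval_prod, eval_sub, eval_X, eval_C, zero_sub, Finset.prod_neg, hS] at h0 hb
  exact ⟨h0.symm, hb.symm⟩

open Polynomial in
theorem aux_zero {F : Type} [Field F] {r : ℕ} (α : Fin r → F) (hα : Function.Injective α)
    (S : Finset (Fin r)) (P : F[X]) (hP : P.degree < S.card)
    (hv : ∀ j ∈ S, P.eval (α j) = 0) : P = 0 := by
  apply eq_zero_of_degree_lt_of_eval_finset_eq_zero (S.map ⟨α, hα⟩)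
  · simpa using hP
  · simpa using hv

open Polynomial in
theorem aux_core {K F : Type} [Field K] [Field F] [Algebra K F] {g r a : ℕ}
    (α : Fin r → K) (hα : Function.Injective α) (hα0 : ∀ j, α j ≠ 0)
    (β : K) (hβ : β ≠ 0) (hαβ : ∀ j, α j ≠ β)
    (l : Fin g → K) (hl : ∀ i, l i ≠ 0)
    (hlG : ∀ i i', i ≠ i' → ∀ S S' : Finset (Fin r),
      l i / (∏ j ∈ S, α j) ≠ l i' / (∏ j ∈ S', α j))
    (m : Fin g → F) (hm0 : ∀ i, m i ≠ 0)
    (hm2 : ∀ i i', i ≠ i' → ∀ c : K, m i ≠ algebraMap K F c * m i')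
    (hm3 : ∀ i j k, i ≠ j → i ≠ k → j ≠ k → ∀ c1 c2 c3 : K,
      algebraMap K F c1 * m i + algebraMap K F c2 * m j + algebraMap K F c3 * m k = 0 → c1 = 0)
    (S : Fin g → Finset (Fin r)) (hSa : ∀ i, a ≤ (S i).card)
    (hSsum : ∑ i, (S i).card = a * g + 3)
    (p : Fin g → F[X]) (hp : ∀ i, (p i).degree < a) (y1 y2 y3 : F)
    (hv : ∀ i, ∀ j ∈ S i, (auxPoly a (p i) (algebraMap K F β) (algebraMap K F (l i)) (m i)
      y1 y2 y3).eval (algebraMap K F (α j)) = 0) :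
    (y1 = 0 ∧ y2 = 0 ∧ y3 = 0) ∧ ∀ i, p i = 0 := by
  have hinj := (algebraMap K F).injective
  have hα' : Function.Injective (fun j => algebraMap K F (α j)) := hinj.comp hα
  have hβ' : algebraMap K F β ≠ 0 := by simpa using hβ
  have hl' : ∀ i, algebraMap K F (l i) ≠ 0 := fun i => by simpa using hl i
  have hγ : ∀ S : Finset (Fin r), ∏ j ∈ S, α j ≠ 0 := fun S =>
    Finset.prod_ne_zero_iff.2 fun j _ => hα0 j
  have hδ : ∀ S : Finset (Fin r), ∏ j ∈ S, (β - α j) ≠ 0 := fun S =>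
    Finset.prod_ne_zero_iff.2 fun j _ => sub_ne_zero.2 (hαβ j).symm
  have K1 : ∀ i, (S i).card = a + 1 → 
      m i * y3 * algebraMap K F (∏ j ∈ S i, (β - α j))⁻¹ = 
        y1 - (-1) ^ (a + 1) * algebraMap K F (l i / ∏ j ∈ S i, α j) * y2 := by
    intro i hi
    have := aux_K1 _ hα' (S i) a hi (p i) (hp i) _ _ _ _ _ _ hβ' (hv i)
    have e1 : ∏ j ∈ S i, (algebraMap K F) (α j) = algebraMap K F (∏ j ∈ S i, α j) := by simp
    have e2 : ∏ j ∈ S i, (algebraMap K F β - (algebraMap K F) (α j))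
        = algebraMap K F (∏ j ∈ S i, (β - α j)) := by simp
    rw [e1, e2] at this
    have h1 : algebraMap K F (∏ j ∈ S i, α j) ≠ 0 := by simpa only [ne_eq, map_eq_zero] using hγ (S i)
    have h2 : algebraMap K F (∏ j ∈ S i, (β - α j)) ≠ 0 := by
      simpa only [ne_eq, map_eq_zero] using hδ (S i)
    rw [map_inv₀, map_div₀]
    generalize algebraMap K F (∏ j ∈ S i, α j) = γ at *
    generalize algebraMap K F (∏ j ∈ S i, (β - α j)) = δ at *
    field_simp
    linear_combination this
  have hy : y1 = 0 ∧ y2 = 0 ∧ y3 = 0 := by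
    by_cases h3 : ∃ i, a + 3 ≤ (S i).card
    · obtain ⟨i, hi⟩ := h3
      have hz := aux_zero _ hα' (S i) _ (lt_of_le_of_lt (degree_le_of_natDegree_le
        (auxPoly_natDegree a (p i) (hp i) _ _ _ y1 y2 y3))
        (by exact_mod_cast (by omega : a + 2 < (S i).card))) (hv i)
      have h1 := auxPoly_coeff a (p i) (hp i) (algebraMap K F β) (algebraMap K F (l i)) (m i) y1 y2 y3
      have h2 := auxPoly_eval_zero a (p i) (algebraMap K F β) (algebraMap K F (l i)) (m i) y1 y2 y3
      have h4 := auxPoly_eval_beta a (p i) (algebraMap K F β) (algebraMap K F (l i)) (m i) y1 y2 y3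
      rw [hz] at h1 h2 h4
      refine ⟨by simpa using h1.symm, ?_, ?_⟩
      · have : algebraMap K F β * algebraMap K F (l i) * y2 = 0 := by
          rw [eval_zero] at h2; linear_combination h2
        exact (mul_eq_zero.1 this).resolve_left (mul_ne_zero hβ' (hl' i))
      · rw [eval_zero] at h4
        exact (mul_eq_zero.1 h4.symm).resolve_left (mul_ne_zero hβ' (hm0 i))
    push Not at h3
    by_cases h2 : ∃ i, (S i).card = a + 2
    · obtain ⟨i, hi⟩ := h2
      have hex : ∃ i', i' ≠ i ∧ (S i').card = a + 1 := by
        by_contra! hne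
        by_cases hj : ∃ j, j ≠ i ∧ (S j).card ≠ a
        · obtain ⟨j, hji, hja⟩ := hj
          have hj2 : (S j).card = a + 2 := by
            have := hne j hji; have := h3 j; have := hSa j; omega
          have hle : ∑ k, (a + ((if k = i then 2 else 0) + (if k = j then 2 else 0)))
              ≤ ∑ k, (S k).card := by
            apply Finset.sum_le_sum
            intro k _
            by_cases hki : k = i
            · subst hki; simp [hji.symm, hi]
            · by_cases hkj : k = j
              · subst hkj; simp [hki, hj2]
              · simpa [hki, hkj] using hSa k
          rw [Finset.sum_add_distrib, Finset.sum_add_distrib] at hle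
          simp [hSsum, mul_comm] at hle
        · push Not at hj
          have hle : ∑ k, (S k).card = ∑ k, (a + (if k = i then 2 else 0)) := by
            apply Finset.sum_congr rfl
            intro k _
            by_cases hki : k = i
            · subst hki; simp [hi]
            · simpa [hki] using hj k hki
          rw [Finset.sum_add_distrib] at hle
          simp [hSsum, mul_comm] at hle
      obtain ⟨i', hne, hi'⟩ := hex
      obtain ⟨k2, k3⟩ := aux_K2 _ hα' (S i) a hi (p i) (hp i) _ _ _ _ _ _ (hv i)
      have k1 := K1 i' hi'
      have e1 : ∏ j ∈ S i, (algebraMap K F) (α j) = algebraMap K F (∏ j ∈ S i, α j) := by simp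
      have e2 : ∏ j ∈ S i, (algebraMap K F β - (algebraMap K F) (α j))
          = algebraMap K F (∏ j ∈ S i, (β - α j)) := by simp
      rw [e1] at k2
      rw [e2] at k3
      have hmi := hm0 i
      have hli := hl' i
      have e3 : y2 = algebraMap K F (- ((-1) ^ (a + 2) * (∏ j ∈ S i, α j) / (β * l i))) * y1 := by
        simp only [map_neg, map_mul, map_div₀, map_pow, map_one] at k2 ⊢
        field_simp
        linear_combination -k2
      have e4 : y3 = algebraMap K F ((∏ j ∈ S i, (β - α j)) / β) * y1 / m i := by
        rw [map_div₀]
        field_simp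
        linear_combination k3
      have hy1 : y1 = 0 := by
        by_contra hy1
        have hd : algebraMap K F ((∏ j ∈ S i, (β - α j)) / β) ≠ 0 := by
          simp only [ne_eq, map_eq_zero]
          exact div_ne_zero (hδ _) hβ
        have hd' : algebraMap K F (∏ j ∈ S i', (β - α j))⁻¹ ≠ 0 := by
          simp only [ne_eq, map_eq_zero]
          exact inv_ne_zero (hδ _)
        apply hm2 i' i hne (((∏ j ∈ S i, (β - α j)) / β)⁻¹ * ((∏ j ∈ S i', (β - α j))⁻¹)⁻¹ *
          (1 - (-1) ^ (a + 1) * (l i' / ∏ j ∈ S i', α j) *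
            (- ((-1) ^ (a + 2) * (∏ j ∈ S i, α j) / (β * l i)))))
        rw [map_mul, map_mul, map_sub, map_mul, map_mul, map_inv₀ _ (_ / _), map_inv₀ _ (_⁻¹), map_one, map_pow, map_neg, map_one]
        rw [e3, e4] at k1
        generalize algebraMap K F ((∏ j ∈ S i, (β - α j)) / β) = d at *
        generalize algebraMap K F (∏ j ∈ S i', (β - α j))⁻¹ = d' at *
        field_simp at k1 ⊢
        linear_combination k1
      subst hy1
      simp [e3, e4]
    push Not at h2
    have hcard : (Finset.univ.filter fun i => (S i).card = a + 1).card = 3 := by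
      have : ∑ i, (S i).card = ∑ i, (a + if (S i).card = a + 1 then 1 else 0) := by
        apply Finset.sum_congr rfl
        intro i _
        have := h2 i; have := h3 i; have := hSa i
        split_ifs <;> omega
      rw [Finset.sum_add_distrib, hSsum, ← Finset.card_filter] at this
      simp [mul_comm] at this
      omega
    obtain ⟨i, j, k, hij, hik, hjk, hs⟩ := Finset.card_eq_three.1 hcard
    have hmem : ∀ x, x ∈ ({i, j, k} : Finset (Fin g)) → (S x).card = a + 1 := by
      intro x hx
      rw [← hs] at hx
      simpa using hx
    have ki := K1 i (hmem i (by simp))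
    have kj := K1 j (hmem j (by simp))
    have kk := K1 k (hmem k (by simp))
    have tij := hlG i j hij (S i) (S j)
    have tjk := hlG j k hjk (S j) (S k)
    have hdi := inv_ne_zero (hδ (S i))
    generalize (∏ x ∈ S i, (β - α x))⁻¹ = di at *
    generalize (∏ x ∈ S j, (β - α x))⁻¹ = dj at *
    generalize (∏ x ∈ S k, (β - α x))⁻¹ = dk at *
    generalize l i / (∏ x ∈ S i, α x) = ti at *
    generalize l j / (∏ x ∈ S j, α x) = tj at *
    generalize l k / (∏ x ∈ S k, α x) = tk at *
    have hy3 : y3 = 0 := by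
      by_contra hy3
      have := hm3 i j k hij hik hjk (di * (tj - tk)) (dj * (tk - ti)) (dk * (ti - tj)) (by
        apply mul_left_cancel₀ hy3
        simp only [map_mul, map_sub]
        linear_combination (algebraMap K F tj - algebraMap K F tk) * ki +
          (algebraMap K F tk - algebraMap K F ti) * kj + (algebraMap K F ti - algebraMap K F tj) * kk)
      exact mul_ne_zero hdi (sub_ne_zero.2 tjk) this
    have hε : ((-1 : F) ^ (a + 1)) ≠ 0 := by simp
    have hy2 : y2 = 0 := by
      have h : (-1) ^ (a + 1) * (algebraMap K F ti - algebraMap K F tj) * y2 = 0 := by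
        rw [hy3] at ki kj
        linear_combination ki - kj
      have h' : algebraMap K F ti - algebraMap K F tj ≠ 0 := sub_ne_zero.2 fun h => tij (hinj h)
      exact (mul_eq_zero.1 h).resolve_left (mul_ne_zero hε h')
    refine ⟨?_, hy2, hy3⟩
    rw [hy2, hy3] at ki
    linear_combination -ki
  refine ⟨hy, fun i => ?_⟩
  obtain ⟨rfl, rfl, rfl⟩ := hy
  apply aux_zero _ hα' (S i) (p i) (lt_of_lt_of_le (hp i) (by exact_mod_cast hSa i))
  intro j hj
  have := hv i j hj
  have h1 : algebraMap K F (α j) ≠ 0 := by simpa using hα0 j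
  have h2 : algebraMap K F (α j) - algebraMap K F β ≠ 0 := sub_ne_zero.2 fun h => hαβ j (hinj h)
  simpa [auxPoly, h1, h2, hα0 j] using this

theorem aux_rows_cols {F : Type} [Field F] {ρ κ : Type} [Fintype ρ] [Fintype κ]
    (M : ρ → κ → F) (hcard : Fintype.card ρ = Fintype.card κ)
    (h : ∀ w : ρ → F, (∀ c, ∑ x, w x * M x c = 0) → ∀ x, w x = 0) :
    LinearIndependent F (fun c x => M x c) := by
  classical
  obtain ⟨e⟩ := Fintype.card_eq.1 hcard
  let N : Matrix ρ ρ F := fun x y => M x (e y)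
  have hN : LinearIndependent F N.row := by
    rw [Fintype.linearIndependent_iff]
    intro w hw
    apply h
    intro c
    have := congrFun hw (e.symm c)
    simpa [N, Matrix.row] using this
  have hc := Matrix.linearIndependent_cols_iff_isUnit.2 (Matrix.linearIndependent_rows_iff_isUnit.1 hN)
  have := hc.comp e.symm e.symm.injective
  convert this using 1
  ext c x
  show M x c = M x (e (e.symm c))
  rw [e.apply_symm_apply]

theorem aux_ext (K : Type) [Field K] [Fintype K] :
    ∃ (F : Type) (_ : Field F) (_ : Fintype F) (_ : Algebra K F),
      Fintype.card F = Fintype.card K ^ 3 ∧ ∃ b : Fin 3 → F, LinearIndependent K b := by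
  obtain ⟨p, hp⟩ := CharP.exists K
  haveI : Fact p.Prime := ⟨CharP.char_is_prime K p⟩
  refine ⟨FiniteField.Extension K p 3, inferInstance, Fintype.ofFinite _, inferInstance, ?_, ?_⟩
  · have := FiniteField.natCard_extension K p 3
    rw [Nat.card_eq_fintype_card (α := K)] at this
    rw [← this, Fintype.card_eq_nat_card]
  · exact ⟨_, (Module.finBasisOfFinrankEq K _ (FiniteField.finrank_extension K p 3)).linearIndependent⟩

theorem aux_main {K F : Type} [Field K] [Field F] [Algebra K F] {g r a : ℕ}
    (α : Fin r → K) (hα : Function.Injective α) (hα0 : ∀ j, α j ≠ 0)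
    (β : K) (hβ : β ≠ 0) (hαβ : ∀ j, α j ≠ β)
    (l : Fin g → K) (hl : ∀ i, l i ≠ 0)
    (hlG : ∀ i i', i ≠ i' → ∀ S S' : Finset (Fin r),
      l i / (∏ j ∈ S, α j) ≠ l i' / (∏ j ∈ S', α j))
    (m : Fin g → F) (hm0 : ∀ i, m i ≠ 0)
    (hm2 : ∀ i i', i ≠ i' → ∀ c : K, m i ≠ algebraMap K F c * m i')
    (hm3 : ∀ i j k, i ≠ j → i ≠ k → j ≠ k → ∀ c1 c2 c3 : K,
      algebraMap K F c1 * m i + algebraMap K F c2 * m j + algebraMap K F c3 * m k = 0 → c1 = 0) :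
    ∃ (A : Fin g → Matrix (Fin a) (Fin r) F) (B : Fin g → Matrix (Fin 3) (Fin r) F),
        IsMRLRC F g r a 3 A B := by
  classical
  let x : Fin r → F := fun j => algebraMap K F (α j)
  have hinj := (algebraMap K F).injective
  have hx : Function.Injective x := hinj.comp hα
  have hx0 : ∀ j, x j ≠ 0 := fun j => by simpa [x] using hα0 j
  let b := algebraMap K F β
  have hxb : ∀ j, x j - b ≠ 0 := fun j => sub_ne_zero.2 fun h => hαβ j (hinj h)
  let A : Fin g → Matrix (Fin a) (Fin r) F := fun _ k j => x j * (x j - b) * x j ^ (k : ℕ)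
  let B : Fin g → Matrix (Fin 3) (Fin r) F := fun i =>
    ![fun j => x j * (x j - b) * x j ^ a, fun j => algebraMap K F (l i) * (x j - b),
      fun j => m i * x j]
  let pol : (Fin a → F) → Polynomial F := fun w =>
    ∑ k : Fin a, Polynomial.C (w k) * Polynomial.X ^ (k : ℕ)
  have pol_deg : ∀ w, (pol w).degree < a := fun w => Polynomial.degree_sum_fin_lt w
  have pol_zero : ∀ w, pol w = 0 → ∀ k, w k = 0 := by
    intro w hw k
    have := congrArg (fun q => Polynomial.coeff q (k : ℕ)) hw
    simpa [pol, Polynomial.finsetSum_coeff, Polynomial.coeff_X_pow, Fin.val_inj] using this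
  have pol_eval : ∀ w z, (pol w).eval z = ∑ k : Fin a, w k * z ^ (k : ℕ) := by
    intro w z
    simp [pol, Polynomial.eval_finsetSum]
  refine ⟨A, B, ?_, ?_⟩
  · intro i S hS
    apply aux_rows_cols (fun (k : Fin a) (c : {x // x ∈ S}) => A i k c.1) (by simp [hS])
    intro w hw
    apply pol_zero
    apply aux_zero x hx S
    · rw [hS]; exact pol_deg w
    · intro j hj
      have := hw ⟨j, hj⟩
      rw [pol_eval]
      have h2 : x j * (x j - b) * ∑ k : Fin a, w k * x j ^ (k : ℕ) = 0 := by
        rw [Finset.mul_sum, ← this]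
        apply Finset.sum_congr rfl
        intro k _
        simp only [A]
        ring
      exact (mul_eq_zero.1 h2).resolve_left (mul_ne_zero (hx0 j) (hxb j))
  · intro E hE hEa
    apply aux_rows_cols (fun ρ (c : {x // x ∈ E}) => lrcParityCheck F g r a 3 A B ρ c.1)
      (by simp [hE, mul_comm])
    intro w hw
    let S : Fin g → Finset (Fin r) := fun i => Finset.univ.filter fun j => (i, j) ∈ E
    have hScard : ∀ i, (S i).card = (E.filter (fun x => x.1 = i)).card := by
      intro i
      rw [← Finset.card_map ⟨fun j : Fin r => (i, j), fun _ _ h => (Prod.mk.inj h).2⟩]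
      congr 1
      ext ⟨i', j⟩
      simp only [S, Finset.mem_map, Finset.mem_filter, Finset.mem_univ, true_and]
      constructor
      · rintro ⟨j', h, h'⟩
        obtain ⟨rfl, rfl⟩ := Prod.mk.inj h'
        exact ⟨h, rfl⟩
      · rintro ⟨h, rfl⟩
        exact ⟨j, h, rfl⟩
    have hsum : ∑ i, (S i).card = a * g + 3 := by
      rw [← hE, Finset.card_eq_sum_card_fiberwise (f := Prod.fst) (t := Finset.univ) (by simp)]
      exact Finset.sum_congr rfl fun i _ => hScard i
    have key := aux_core (a := a) α hα hα0 β hβ hαβ l hl hlG m hm0 hm2 hm3 S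
      (fun i => (hScard i) ▸ hEa i) hsum (fun i => pol fun k => w (Sum.inl (i, k)))
      (fun i => pol_deg _) (w (Sum.inr 0)) (w (Sum.inr 1)) (w (Sum.inr 2)) (by
        intro i j hj
        have hj' : (i, j) ∈ E := by simpa [S] using hj
        have := hw ⟨(i, j), hj'⟩
        rw [← this, Fintype.sum_sum_type, Fintype.sum_prod_type]
        simp only [lrcParityCheck, Sum.elim_inl, Sum.elim_inr, Fin.sum_univ_three]
        rw [Finset.sum_eq_single i (by
          intro i' _ h
          simp [h]) (by simp)]
        have e1 : ∑ k : Fin a, w (Sum.inl (i, k)) * (if i = i then A i k j else 0)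
          = x j * (x j - b) * ∑ k : Fin a, w (Sum.inl (i, k)) * x j ^ (k : ℕ) := by
          rw [Finset.mul_sum]
          apply Finset.sum_congr rfl
          intro k _
          simp only [A, if_true]
          ring
        rw [e1]
        simp only [auxPoly, Polynomial.eval_add, Polynomial.eval_mul, Polynomial.eval_sub,
          Polynomial.eval_X, Polynomial.eval_C, Polynomial.eval_pow, pol_eval]
        simp only [B, Matrix.cons_val_zero, Matrix.cons_val_one, Matrix.cons_val, x, b]
        ring)
    obtain ⟨⟨h0, h1, h2⟩, h3⟩ := key
    rintro (⟨i, k⟩ | t)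
    · exact pol_zero _ (h3 i) k
    · fin_cases t
      · exact h0
      · exact h1
      · exact h2

/-- **Lemma 5.4.** Let `r ∣ n`, `a < r`, `g = n/r`, and `n - g·a - 3 > 0`. Let `q₀ ≥ 2r+3`
be a prime power (realized as the order of a finite field `F₀`) such that `F₀ˣ` contains
a subgroup `G` of size at least `r + 2` with at least `n/r` cosets. Then there exists a
maximally recoverable `(n, r, h = 3, a, q = q₀³)`-local reconstruction code. -/
theorem exists_mrlrc_h3_of_subgroup
    (n r a q₀ : ℕ) (hr : 0 < r) (hrn : r ∣ n) (har : a < r)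
    (hk : (n / r) * a + 3 < n) (hq₀ : 2 * r + 3 ≤ q₀)
    (F₀ : Type) [Field F₀] [Fintype F₀] (hF₀ : Fintype.card F₀ = q₀)
    (G : Subgroup F₀ˣ) (hG1 : r + 2 ≤ Nat.card G) (hG2 : n / r ≤ G.index) :
    ExistsMRLRC (n / r) r 3 a (q₀ ^ 3) := by
  classical
  obtain ⟨F, _, _, _, hcard, v, hv⟩ := aux_ext F₀
  refine ⟨F, inferInstance, inferInstance, hF₀ ▸ hcard, ?_⟩
  -- evaluation points in G
  letI := Fintype.ofFinite G
  obtain ⟨f⟩ : Nonempty (Fin (r + 1) ↪ G) := by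
    apply Function.Embedding.nonempty_of_card_le
    rw [Fintype.card_fin, ← Nat.card_eq_fintype_card]
    omega
  letI := Fintype.ofFinite (F₀ˣ ⧸ G)
  obtain ⟨c⟩ : Nonempty (Fin (n / r) ↪ F₀ˣ ⧸ G) := by
    apply Function.Embedding.nonempty_of_card_le
    rw [Fintype.card_fin, ← Nat.card_eq_fintype_card]
    exact hG2
  let l : Fin (n / r) → F₀ˣ := fun i => (c i).out
  have hlc : ∀ i i', i ≠ i' → (l i)⁻¹ * l i' ∉ G := by
    intro i i' h hmem
    have := QuotientGroup.eq.2 hmem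
    apply h
    apply c.injective
    simpa [l] using this
  have hll : ∀ i i', i ≠ i' → (l i : F₀) - l i' ≠ 0 := by
    intro i i' h he
    have : l i = l i' := Units.ext (sub_eq_zero.1 he)
    apply hlc i i' h
    simp [this, G.one_mem]
  let m : Fin (n / r) → F := fun i => v 0 + algebraMap F₀ F (l i) * v 1 + algebraMap F₀ F (l i ^ 2 : F₀) * v 2
  have hv3 : ∀ a0 a1 a2 : F₀, algebraMap F₀ F a0 * v 0 + algebraMap F₀ F a1 * v 1
      + algebraMap F₀ F a2 * v 2 = 0 → a0 = 0 ∧ a1 = 0 ∧ a2 = 0 := by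
    intro a0 a1 a2 h
    have := Fintype.linearIndependent_iff.1 hv ![a0, a1, a2] (by
      simpa [Fin.sum_univ_three, Algebra.smul_def] using h)
    exact ⟨this 0, this 1, this 2⟩
  apply aux_main (K := F₀) (fun j : Fin r => ((f j.castSucc : F₀ˣ) : F₀))
    (β := ((f (Fin.last r) : F₀ˣ) : F₀)) (l := fun i => (l i : F₀)) (m := m)
  · intro j j' h
    have := f.injective (Subtype.ext (Units.ext h))
    exact Fin.castSucc_injective _ this
  · intro j; exact Units.ne_zero _
  · exact Units.ne_zero _
  · intro j h
    have := f.injective (Subtype.ext (Units.ext h))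
    exact (Fin.castSucc_lt_last j).ne this
  · intro i; exact Units.ne_zero _
  · intro i i' h S S' he
    apply hlc i i' h
    have : l i / (∏ j ∈ S, (f j.castSucc : F₀ˣ)) = l i' / (∏ j ∈ S', (f j.castSucc : F₀ˣ)) := by
      apply Units.ext
      simpa using he
    have e : (l i)⁻¹ * l i' = (∏ j ∈ S', (f j.castSucc : F₀ˣ)) / (∏ j ∈ S, (f j.castSucc : F₀ˣ)) := by
      rw [div_eq_div_iff_mul_eq_mul] at this
      rw [inv_mul_eq_div, div_eq_div_iff_mul_eq_mul, ← this, mul_comm]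
    rw [e]
    exact G.div_mem (G.prod_mem fun j _ => (f _).2) (G.prod_mem fun j _ => (f _).2)
  · intro i h
    have := (hv3 1 (l i) (l i ^ 2) (by simpa [m] using h)).1
    exact one_ne_zero this
  · intro i i' h d he
    obtain ⟨h0, h1, -⟩ := hv3 (1 - d) (l i - d * l i') (l i ^ 2 - d * l i' ^ 2) (by
      simp only [m, map_sub, map_mul, map_one] at he ⊢
      linear_combination he)
    apply hll i i' h
    linear_combination h1 - (l i' : F₀) * h0
  · intro i j k hij hik hjk c1 c2 c3 h
    obtain ⟨h0, h1, h2⟩ := hv3 (c1 + c2 + c3) (c1 * l i + c2 * l j + c3 * l k)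
      (c1 * l i ^ 2 + c2 * l j ^ 2 + c3 * l k ^ 2) (by
      simp only [m, map_add, map_mul] at h ⊢
      linear_combination h)
    have : c1 * (((l i : F₀) - l j) * ((l i : F₀) - l k)) = 0 := by
      linear_combination h2 - ((l j : F₀) + l k) * h1 + (l j : F₀) * l k * h0
    exact (mul_eq_zero.1 this).resolve_right (mul_ne_zero (hll i j hij) (hll i k hik))
end

section
/- There exists an absolute constant C > 0 such that for all positive integers n, r, a with r ∣ n, a < r, g = n/r ≥ 2, and n − g·a − 3 > 0, there exists a prime power q ≤ C·n^3 for which a maximally recoverable (n, r, h=3, a, q)-local reconstruction code exists. -/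
section LRS
set_option linter.unusedSectionVars false
open Module
variable {K F : Type} [Field K] [Field F] [Algebra K F] [FiniteDimensional K F]

/-- The operator `x ↦ γ σ(x)`. -/
noncomputable def lrsT (σ : F →ₐ[K] F) (γ : F) : F →ₗ[K] F :=
  (LinearMap.mulLeft K γ).comp σ.toLinearMap

theorem lrsT_apply (σ : F →ₐ[K] F) (γ x : F) : lrsT σ γ x = γ * σ x := rfl

theorem lrs_finrank_ker_comp_le (f g : F →ₗ[K] F) :
    finrank K (LinearMap.ker (f.comp g)) ≤
      finrank K (LinearMap.ker f) + finrank K (LinearMap.ker g) := by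
  let h : LinearMap.ker (f.comp g) →ₗ[K] LinearMap.ker f :=
    LinearMap.restrict g (fun x hx => by simpa using hx)
  have h1 := LinearMap.finrank_range_add_finrank_ker h
  have h2 : finrank K (LinearMap.range h) ≤ finrank K (LinearMap.ker f) :=
    Submodule.finrank_le _
  have h3 : finrank K (LinearMap.ker h) ≤ finrank K (LinearMap.ker g) := by
    let u : LinearMap.ker h →ₗ[K] LinearMap.ker g :=
      { toFun := fun x => ⟨x.1.1, by
          have := x.2
          rw [LinearMap.mem_ker] at this
          have := congrArg Subtype.val this
          exact this⟩
        map_add' := fun _ _ => rfl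
        map_smul' := fun _ _ => rfl }
    refine LinearMap.finrank_le_finrank_of_injective (f := u) ?_
    intro x y hxy
    have := congrArg Subtype.val hxy
    exact Subtype.ext (Subtype.ext this)
  omega

theorem lrs_sum_U {ι : Type} [Fintype ι] [DecidableEq ι] (σ : F →ₐ[K] F)
    (hfix : ∀ x, σ x = x → ∃ k : K, algebraMap K F k = x) (γ : ι → F)
    (hγ0 : ∀ i, γ i ≠ 0)
    (hγ : ∀ i j x y, x ≠ 0 → y ≠ 0 → γ i * σ x * y = γ j * σ y * x → i = j) (δ : F) :
    ∑ i, finrank K (LinearMap.ker (lrsT σ (γ i) - LinearMap.mulLeft K δ)) ≤ 1 := by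
  have hmem : ∀ i x, x ∈ LinearMap.ker (lrsT σ (γ i) - LinearMap.mulLeft K δ) ↔
      γ i * σ x = δ * x := by
    intro i x
    simp [lrsT_apply, sub_eq_zero]
  by_cases h : ∃ i x, x ≠ 0 ∧ γ i * σ x = δ * x
  · obtain ⟨i, x, hx, hix⟩ := h
    rw [Finset.sum_eq_single i]
    · refine finrank_le_one ⟨x, (hmem i x).2 hix⟩ ?_
      rintro ⟨y, hy⟩
      rw [hmem] at hy
      have hσx : σ x ≠ 0 := by simpa using hx
      obtain ⟨k, hk⟩ := hfix (y / x) (by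
        rw [map_div₀, div_eq_div_iff hσx hx]
        apply mul_left_cancel₀ (hγ0 i)
        linear_combination x * hy - y * hix)
      refine ⟨k, Subtype.ext ?_⟩
      simp only [SetLike.mk_smul_mk, Algebra.smul_def, hk]
      field_simp
    · intro j _ hj
      rw [Submodule.finrank_eq_zero, Submodule.eq_bot_iff]
      intro y hy
      rw [hmem] at hy
      by_contra hy0
      exact hj (hγ j i y x hy0 hx (by rw [hy, hix]; ring))
    · simp
  · push Not at h
    rw [Finset.sum_eq_zero]
    · simp
    intro j _
    rw [Submodule.finrank_eq_zero, Submodule.eq_bot_iff]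
    intro y hy
    rw [hmem] at hy
    by_contra hy0
    exact h j y hy0 hy

theorem lrs_sum_A {ι : Type} [Fintype ι] [DecidableEq ι] (σ : F →ₐ[K] F)
    (hfix : ∀ x, σ x = x → ∃ k : K, algebraMap K F k = x) (γ : ι → F)
    (hγ0 : ∀ i, γ i ≠ 0)
    (hγ : ∀ i j x y, x ≠ 0 → y ≠ 0 → γ i * σ x * y = γ j * σ y * x → i = j) (d0 d1 : F)
    (hd : ¬ (d0 = 0 ∧ d1 = 0)) :
    ∑ i, finrank K (LinearMap.ker (LinearMap.mulLeft K d0 +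
      (LinearMap.mulLeft K d1).comp (lrsT σ (γ i)))) ≤ 1 := by
  by_cases h1 : d1 = 0
  · have h0 : d0 ≠ 0 := fun h => hd ⟨h, h1⟩
    rw [Finset.sum_eq_zero]
    · simp
    intro j _
    rw [Submodule.finrank_eq_zero, Submodule.eq_bot_iff]
    intro y hy
    simpa [h1, h0] using hy
  · refine le_trans (Finset.sum_le_sum fun i _ => ?_) (lrs_sum_U σ hfix γ hγ0 hγ (-(d0 / d1)))
    apply Submodule.finrank_mono
    intro x hx
    simp only [LinearMap.mem_ker, LinearMap.add_apply, LinearMap.mulLeft_apply,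
      LinearMap.comp_apply, LinearMap.sub_apply] at hx ⊢
    apply mul_left_cancel₀ h1
    rw [mul_zero, ← hx]
    field_simp
    ring

theorem lrs_sum_B {ι : Type} [Fintype ι] [DecidableEq ι] (σ : F →ₐ[K] F)
    (hfix : ∀ x, σ x = x → ∃ k : K, algebraMap K F k = x) (γ : ι → F)
    (hγ0 : ∀ i, γ i ≠ 0)
    (hγ : ∀ i j x y, x ≠ 0 → y ≠ 0 → γ i * σ x * y = γ j * σ y * x → i = j) (c0 c1 c2 : F)
    (hc : ¬ (c0 = 0 ∧ c1 = 0 ∧ c2 = 0)) :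
    ∑ i, finrank K (LinearMap.ker (LinearMap.mulLeft K c0 +
      (LinearMap.mulLeft K c1).comp (lrsT σ (γ i)) +
      (LinearMap.mulLeft K c2).comp ((lrsT σ (γ i)).comp (lrsT σ (γ i))))) ≤ 2 := by
  by_cases h : ∃ i x, x ≠ 0 ∧ c0 * x + c1 * (γ i * σ x) + c2 * (γ i * σ (γ i * σ x)) = 0
  · obtain ⟨i0, x, hx, hix⟩ := h
    obtain ⟨δ, hδ⟩ : ∃ δ, γ i0 * σ x = δ * x := ⟨γ i0 * σ x / x, by field_simp⟩
    have hroot : c0 + c1 * δ + c2 * (σ δ * δ) = 0 := by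
      apply mul_right_cancel₀ hx
      rw [hδ, map_mul] at hix
      linear_combination hix - c2 * σ δ * hδ
    have hA := lrs_sum_A σ hfix γ hγ0 hγ (c1 + c2 * σ δ) c2 (by
      rintro ⟨h1, h2⟩
      apply hc
      refine ⟨?_, ?_, h2⟩
      · linear_combination hroot - δ * h1
      · simpa [h2] using h1)
    have hU := lrs_sum_U σ hfix γ hγ0 hγ δ
    have : (2:ℕ) = 1 + 1 := rfl
    rw [this]
    refine le_trans ?_ (add_le_add hA hU)
    rw [← Finset.sum_add_distrib]
    refine Finset.sum_le_sum fun i _ => ?_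
    have heq : LinearMap.mulLeft K c0 + (LinearMap.mulLeft K c1).comp (lrsT σ (γ i)) +
        (LinearMap.mulLeft K c2).comp ((lrsT σ (γ i)).comp (lrsT σ (γ i))) =
        (LinearMap.mulLeft K (c1 + c2 * σ δ) +
          (LinearMap.mulLeft K c2).comp (lrsT σ (γ i))).comp
          (lrsT σ (γ i) - LinearMap.mulLeft K δ) := by
      refine LinearMap.ext fun y => ?_
      simp only [LinearMap.add_apply, LinearMap.mulLeft_apply,
        LinearMap.comp_apply, LinearMap.sub_apply, lrsT_apply, map_sub, map_mul]
      linear_combination y * hroot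
    rw [heq]
    exact lrs_finrank_ker_comp_le _ _
  · push Not at h
    rw [Finset.sum_eq_zero]
    · simp
    intro j _
    rw [Submodule.finrank_eq_zero, Submodule.eq_bot_iff]
    intro y hy
    by_contra hy0
    exact h j y hy0 hy

/-- Columns of a Vandermonde matrix. -/
theorem lrs_vand {ι L : Type} [Field L] [DecidableEq ι] (S : Finset ι) (x : ι → L)
    (hx : Function.Injective x)
    (m : ℕ) (hS : S.card ≤ m) (w : ι → L) (h : ∀ j < m, ∑ s ∈ S, w s * x s ^ j = 0) :
    ∀ s ∈ S, w s = 0 := by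
  intro s hs
  have key : ∀ P : Polynomial L, P.natDegree < m → ∑ t ∈ S, w t * P.eval (x t) = 0 := by
    intro P hP
    simp_rw [Polynomial.eval_eq_sum_range' hP, Finset.mul_sum]
    rw [Finset.sum_comm]
    refine Finset.sum_eq_zero fun j hj => ?_
    have := h j (Finset.mem_range.1 hj)
    calc _ = P.coeff j * ∑ s ∈ S, w s * x s ^ j := by
          rw [Finset.mul_sum]; exact Finset.sum_congr rfl fun _ _ => by ring
      _ = 0 := by rw [this, mul_zero]
  have h1 := key (∏ t ∈ S.erase s, (Polynomial.X - Polynomial.C (x t))) (by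
    rw [Polynomial.natDegree_finsetProd_X_sub_C_eq_card, Finset.card_erase_of_mem hs]
    have := Finset.card_pos.2 ⟨s, hs⟩
    omega)
  rw [Finset.sum_eq_single s] at h1
  · rcases mul_eq_zero.1 h1 with h2 | h2
    · exact h2
    · exfalso
      rw [Polynomial.eval_prod, Finset.prod_eq_zero_iff] at h2
      obtain ⟨t, ht, h3⟩ := h2
      simp only [Polynomial.eval_sub, Polynomial.eval_X, Polynomial.eval_C, sub_eq_zero] at h3
      exact (Finset.mem_erase.1 ht).1 (hx h3).symm
  · intro t ht hts
    rw [Polynomial.eval_prod, Finset.prod_eq_zero (Finset.mem_erase.2 ⟨hts, ht⟩), mul_zero]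
    simp
  · intro h; exact absurd hs h

/-- Rows of a Vandermonde matrix. -/
theorem lrs_vand_row {ι L : Type} [Field L] (S : Finset ι) (x : ι → L)
    (hx : Function.Injective x)
    (a : ℕ) (hS : a ≤ S.card) (l : Fin a → L) (h : ∀ s ∈ S, ∑ j, l j * x s ^ (j : ℕ) = 0) :
    l = 0 := by
  have hP : (∑ j : Fin a, Polynomial.C (l j) * Polynomial.X ^ (j : ℕ)) = 0 := by
    classical
    apply Polynomial.eq_zero_of_degree_lt_of_eval_finset_eq_zero (S.image x)
    · rw [Finset.card_image_of_injective _ hx]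
      refine lt_of_lt_of_le (Polynomial.degree_sum_fin_lt l) ?_
      exact_mod_cast hS
    · intro y hy
      obtain ⟨s, hs, rfl⟩ := Finset.mem_image.1 hy
      simpa [Polynomial.eval_finsetSum] using h s hs
  funext j
  have := congrArg (fun P => Polynomial.coeff P (j : ℕ)) hP
  simpa [Polynomial.finsetSum_coeff, Polynomial.coeff_C_mul, Polynomial.coeff_X_pow,
    Fin.val_inj] using this

end LRS

section LRS2
open Module
variable {K F : Type} [Field K] [Field F] [Algebra K F] [FiniteDimensional K F]

theorem lrs_ker_ge (r a : ℕ) (x : Fin r → K) (hx : Function.Injective x)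
    (β : Basis (Fin 3) K F) (S : Finset (Fin r)) (hS : S.card ≤ a + 3)
    (L : F →ₗ[K] F) (l : Fin a → F)
    (hL : ∀ s ∈ S, ∑ j, l j * algebraMap K F (x s) ^ (j : ℕ) +
      L (∑ k : Fin 3, x s ^ (a + (k : ℕ)) • β k) = 0) :
    S.card ≤ a + finrank K (LinearMap.ker L) := by
  classical
  let V : (S → K) →ₗ[K] (Fin a → K) :=
    LinearMap.pi fun j => ∑ s : S, (x s ^ (j : ℕ)) • LinearMap.proj s
  have hV : ∀ w j, V w j = ∑ s : S, x s ^ (j : ℕ) * w s := by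
    intro w j
    simp [V]
  let b : Fin r → F := fun s => ∑ k : Fin 3, x s ^ (a + (k : ℕ)) • β k
  let Φ : (S → K) →ₗ[K] F := Fintype.linearCombination K (fun s : S => b s)
  have hΦ : ∀ w, Φ w = ∑ s : S, w s • b s := fun w => rfl
  have hker : ∀ w ∈ LinearMap.ker V, Φ w ∈ LinearMap.ker L := by
    intro w hw
    rw [LinearMap.mem_ker] at hw ⊢
    rw [hΦ, map_sum]
    have h1 : ∀ s : S, L (w s • b s) =
        - ∑ j, l j * algebraMap K F (x s ^ (j : ℕ) * w s) := by
      intro s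
      rw [map_smul, eq_neg_of_add_eq_zero_right (hL s.1 s.2), Algebra.smul_def, mul_neg,
        Finset.mul_sum]
      congr 1
      refine Finset.sum_congr rfl fun j _ => ?_
      rw [map_mul, map_pow]; ring
    simp_rw [h1]
    rw [Finset.sum_neg_distrib, Finset.sum_comm, neg_eq_zero]
    refine Finset.sum_eq_zero fun j _ => ?_
    rw [← Finset.mul_sum, ← map_sum, ← hV, hw]
    simp
  let Ψ : LinearMap.ker V →ₗ[K] LinearMap.ker L := Φ.restrict hker
  have hinj : Function.Injective Ψ := by
    rw [← LinearMap.ker_eq_bot, Submodule.eq_bot_iff]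
    rintro ⟨w, hw⟩ h
    rw [LinearMap.mem_ker] at h hw
    have h0 : Φ w = 0 := congrArg Subtype.val h
    have h2 : ∑ k : Fin 3, (∑ s : S, x s ^ (a + (k : ℕ)) * w s) • β k = 0 := by
      rw [← h0, hΦ]
      simp only [b, Finset.smul_sum, Finset.sum_smul, smul_smul]
      rw [Finset.sum_comm]
      exact Finset.sum_congr rfl fun _ _ => Finset.sum_congr rfl fun _ _ => by rw [mul_comm]
    have h3 := Fintype.linearIndependent_iff.1 β.linearIndependent _ h2
    have h4 := lrs_vand (Finset.univ : Finset S) (fun s => x s)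
      (fun s t hst => Subtype.ext (hx hst)) (a + 3) (by simpa using hS) w (by
        intro j hj
        simp_rw [mul_comm (w _)]
        by_cases hja : j < a
        · rw [← hV w ⟨j, hja⟩, hw]; rfl
        · have := h3 ⟨j - a, by omega⟩
          simpa [Nat.add_sub_cancel' (not_lt.1 hja)] using this)
    apply Subtype.ext
    funext s
    exact h4 s (Finset.mem_univ _)
  have h5 := LinearMap.finrank_le_finrank_of_injective hinj
  have h6 := LinearMap.finrank_range_add_finrank_ker V
  have h7 : finrank K (LinearMap.range V) ≤ finrank K (Fin a → K) := Submodule.finrank_le _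
  simp only [Module.finrank_fintype_fun_eq_card, Fintype.card_coe, Fintype.card_fin] at h6 h7
  omega

theorem lrs_main (g r a : ℕ) (σ : F →ₐ[K] F)
    (hfix : ∀ x, σ x = x → ∃ k : K, algebraMap K F k = x) (γ : Fin g → F)
    (hγ0 : ∀ i, γ i ≠ 0)
    (hγ : ∀ i j x y, x ≠ 0 → y ≠ 0 → γ i * σ x * y = γ j * σ y * x → i = j)
    (x : Fin r → K) (hx : Function.Injective x) (β : Basis (Fin 3) K F) :
    ∃ (A : Fin g → Matrix (Fin a) (Fin r) F) (B : Fin g → Matrix (Fin 3) (Fin r) F),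
        IsMRLRC F g r a 3 A B := by
  classical
  let b : Fin r → F := fun s => ∑ k : Fin 3, x s ^ (a + (k : ℕ)) • β k
  let X : Fin r → F := fun s => algebraMap K F (x s)
  have hX : Function.Injective X := (algebraMap K F).injective.comp hx
  refine ⟨fun _ j s => X s ^ (j : ℕ), fun i k s => ![b s, lrsT σ (γ i) (b s),
    lrsT σ (γ i) (lrsT σ (γ i) (b s))] k, ?_, ?_⟩
  · intro i S hS
    rw [Fintype.linearIndependent_iff]
    intro w hw s
    refine lrs_vand (Finset.univ : Finset S) (fun s => X s)
      (fun s t hst => Subtype.ext (hX hst)) a (by simp [hS]) w ?_ s (Finset.mem_univ _)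
    intro j hj
    simpa using congrFun hw ⟨j, hj⟩
  · intro E hE hEi
    apply linearIndependent_of_top_le_span_of_card_eq_finrank
    swap
    · simp [hE, mul_comm]
    rw [top_le_iff]
    by_contra hne
    obtain ⟨φ, hφ0, hφ⟩ := Submodule.exists_le_ker_of_lt_top _ (lt_top_iff_ne_top.2 hne)
    apply hφ0
    let u : (Fin g × Fin a) ⊕ Fin 3 → F := fun ρ => φ (Pi.single ρ 1)
    have hu : ∀ v, φ v = ∑ ρ, v ρ * u ρ := by
      intro v
      rw [LinearMap.pi_apply_eq_sum_univ φ v]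
      refine Finset.sum_congr rfl fun ρ _ => ?_
      simp only [smul_eq_mul, u]
      congr 2
      funext t
      simp [Pi.single_apply, eq_comm]
    have hrow : ∀ i s, (i, s) ∈ E → ∑ j, u (Sum.inl (i, j)) * X s ^ (j : ℕ) +
        (u (Sum.inr 0) * b s + u (Sum.inr 1) * lrsT σ (γ i) (b s) +
          u (Sum.inr 2) * lrsT σ (γ i) (lrsT σ (γ i) (b s))) = 0 := by
      intro i s his
      have h1 := hφ (Submodule.subset_span ⟨⟨(i, s), his⟩, rfl⟩)
      rw [LinearMap.mem_ker, hu] at h1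
      rw [← h1, Fintype.sum_sum_type, Fintype.sum_prod_type, Finset.sum_eq_single i]
      · simp [lrcParityCheck, Fin.sum_univ_three, mul_comm]
      · intro i' _ hi'
        simp [lrcParityCheck, hi']
      · simp
    let Ei : Fin g → Finset (Fin r) := fun i => Finset.univ.filter fun s => (i, s) ∈ E
    have hcard : ∀ i, (E.filter (fun x => x.1 = i)).card = (Ei i).card := by
      intro i
      symm
      apply Finset.card_bij (fun s _ => (i, s))
      · intro s hs; simpa [Ei] using hs
      · intro s _ t _ h; simpa using h
      · rintro ⟨i', s⟩ h
        simp only [Finset.mem_filter] at h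
        obtain ⟨h, rfl⟩ := h
        exact ⟨s, by simpa [Ei] using h, rfl⟩
    have hsum : ∑ i, (Ei i).card = a * g + 3 := by
      rw [← hE, Finset.card_eq_sum_card_fiberwise (f := Prod.fst) (t := Finset.univ)
        (fun _ _ => by simp)]
      exact Finset.sum_congr rfl fun i _ => (hcard i).symm
    have hge : ∀ i, a ≤ (Ei i).card := fun i => hcard i ▸ hEi i
    have hle : ∀ i, (Ei i).card ≤ a + 3 := by
      intro i
      have h1 : ∑ i, ((Ei i).card - a) = 3 := by
        have : ∑ i, ((Ei i).card - a) + ∑ _i : Fin g, a = a * g + 3 := by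
          rw [← Finset.sum_add_distrib, ← hsum]
          exact Finset.sum_congr rfl fun i _ => Nat.sub_add_cancel (hge i)
        simp [mul_comm] at this
        omega
      have h2 := Finset.single_le_sum (f := fun i => (Ei i).card - a)
        (fun _ _ => Nat.zero_le _) (Finset.mem_univ i)
      simp only [h1] at h2
      omega
    have hc : u (Sum.inr 0) = 0 ∧ u (Sum.inr 1) = 0 ∧ u (Sum.inr 2) = 0 := by
      by_contra hc
      have hB := lrs_sum_B σ hfix γ hγ0 hγ _ _ _ hc
      have h1 : ∑ i, (Ei i).card ≤ ∑ i : Fin g, (a + _) :=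
        Finset.sum_le_sum fun i _ => lrs_ker_ge r a x hx β (Ei i) (hle i)
          (LinearMap.mulLeft K (u (Sum.inr 0)) +
            (LinearMap.mulLeft K (u (Sum.inr 1))).comp (lrsT σ (γ i)) +
            (LinearMap.mulLeft K (u (Sum.inr 2))).comp ((lrsT σ (γ i)).comp (lrsT σ (γ i))))
          (fun j => u (Sum.inl (i, j))) (by
            intro s hs
            exact hrow i s (by simpa [Ei] using hs))
      rw [hsum, Finset.sum_add_distrib] at h1
      simp only [Finset.sum_const, Finset.card_univ, Fintype.card_fin, smul_eq_mul] at h1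
      rw [mul_comm g a] at h1
      omega
    obtain ⟨hc0, hc1, hc2⟩ := hc
    have hl : ∀ i, (fun j => u (Sum.inl (i, j))) = 0 := by
      intro i
      apply lrs_vand_row (Ei i) X hX a (hge i)
      intro s hs
      have := hrow i s (by simpa [Ei] using hs)
      simpa [hc0, hc1, hc2] using this
    have hu0 : ∀ ρ, u ρ = 0 := by
      rintro (⟨i, j⟩ | k)
      · exact congrFun (hl i) j
      · fin_cases k
        · exact hc0
        · exact hc1
        · exact hc2
    refine LinearMap.ext fun v => ?_
    rw [hu]
    simp [hu0]

end LRS2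

theorem lrs_exists_gamma (p : ℕ) [Fact p.Prime] (F : Type) [Field F] [Fintype F]
    (hF : Fintype.card F = p ^ 3) (g : ℕ) (hg : g < p) :
    ∃ γ : Fin g → F, (∀ i, γ i ≠ 0) ∧
    (∀ i j x y, x ≠ 0 → y ≠ 0 → γ i * x ^ p * y = γ j * y ^ p * x → i = j) := by
  classical
  have hp := (Fact.out : p.Prime).two_le
  obtain ⟨w, hw⟩ := IsCyclic.exists_generator (α := Fˣ)
  have hord : orderOf w = p ^ 3 - 1 := by
    rw [orderOf_eq_card_of_forall_mem_zpowers hw, Nat.card_eq_fintype_card, Fintype.card_units, hF]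
  obtain ⟨t, rfl⟩ : ∃ t, p = t + 1 := ⟨p - 1, by omega⟩
  have hfac : (t + 1) ^ 3 - 1 = ((t + 1) ^ 2 + (t + 1) + 1) * t := by
    have : (t + 1) ^ 3 = ((t + 1) ^ 2 + (t + 1) + 1) * t + 1 := by ring
    omega
  set m := (t + 1) ^ 2 + (t + 1) + 1 with hm
  have hm0 : 0 < m := by positivity
  have hord2 : orderOf (w ^ m) = t := by
    rw [orderOf_pow_of_dvd hm0.ne' (by rw [hord, hfac]; exact dvd_mul_right _ _), hord, hfac,
      Nat.mul_div_cancel_left _ hm0]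
  have hone : ∀ x : F, x ≠ 0 → (x ^ t) ^ m = 1 := by
    intro x hx
    rw [← pow_mul, mul_comm, ← hfac, ← hF]
    exact FiniteField.pow_card_sub_one_eq_one x hx
  refine ⟨fun i => (w : F) ^ (i : ℕ), fun i => pow_ne_zero _ w.ne_zero, ?_⟩
  intro i j x y hx hy h
  have h1 : (w : F) ^ (i : ℕ) * x ^ t = (w : F) ^ (j : ℕ) * y ^ t := by
    apply mul_right_cancel₀ (mul_ne_zero hx hy)
    linear_combination h
  have h2 := congrArg (· ^ m) h1
  simp only [mul_pow, hone x hx, hone y hy, mul_one] at h2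
  have h3 : (w ^ m) ^ (i : ℕ) = (w ^ m) ^ (j : ℕ) := by
    apply Units.ext
    push_cast
    rw [← pow_mul, mul_comm, pow_mul, h2, ← pow_mul, mul_comm, pow_mul]
  have := pow_injOn_Iio_orderOf (x := w ^ m) (by rw [hord2]; exact Set.mem_Iio.2 (by omega))
    (by rw [hord2]; exact Set.mem_Iio.2 (by omega)) h3
  exact Fin.ext this

theorem lrs_fix (p : ℕ) [Fact p.Prime] (F : Type) [Field F] [Algebra (ZMod p) F] (x : F)
    (h : x ^ p = x) : ∃ k : ZMod p, algebraMap (ZMod p) F k = x := by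
  classical
  have hp := (Fact.out : p.Prime).one_lt
  by_contra hne
  push Not at hne
  let S : Finset F := insert x (Finset.univ.image (algebraMap (ZMod p) F))
  have hS : S.card = p + 1 := by
    rw [Finset.card_insert_of_notMem (by simpa using hne),
      Finset.card_image_of_injective _ (algebraMap (ZMod p) F).injective, Finset.card_univ,
      ZMod.card]
  have hdeg : (Polynomial.X ^ p - Polynomial.X : Polynomial F).natDegree = p :=
    FiniteField.X_pow_card_sub_X_natDegree_eq F hp
  have h0 := Polynomial.eq_zero_of_natDegree_lt_card_of_eval_eq_zero'
    (Polynomial.X ^ p - Polynomial.X : Polynomial F) S (by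
      intro y hy
      rcases Finset.mem_insert.1 hy with rfl | hy
      · simp [h]
      · obtain ⟨k, _, rfl⟩ := Finset.mem_image.1 hy
        simp [← map_pow, ZMod.pow_card]) (by omega)
  rw [h0] at hdeg
  simp at hdeg
  omega

/-- **Theorem 5.5.** There is an absolute constant `C > 0` such that for all positive
integers `n, r, a` with `r ∣ n`, `a < r`, `g = n/r ≥ 2` and `n - g·a - 3 > 0`, there is a
prime power `q ≤ C·n³` for which a maximally recoverable `(n, r, h = 3, a, q)`-local
reconstruction code exists. -/
theorem exists_mrlrc_h3_cubic_field_size :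
    ∃ C : ℝ, 0 < C ∧
      ∀ n r a : ℕ, 0 < r → r ∣ n → a < r → 2 ≤ n / r → (n / r) * a + 3 < n →
        ∃ q : ℕ, IsPrimePow q ∧ (q : ℝ) ≤ C * (n : ℝ) ^ 3 ∧
          ExistsMRLRC (n / r) r 3 a q := by
  refine ⟨8, by norm_num, ?_⟩
  intro n r a hr hrn har hg hn
  have hn0 : n ≠ 0 := by omega
  obtain ⟨p, hp, hnp, hp2⟩ := Nat.exists_prime_lt_and_le_two_mul n hn0
  haveI : Fact p.Prime := ⟨hp⟩
  refine ⟨p ^ 3, hp.isPrimePow.pow (by norm_num), ?_, ?_⟩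
  · have h1 : (p : ℝ) ≤ 2 * n := by exact_mod_cast hp2
    push_cast
    calc (p : ℝ) ^ 3 ≤ (2 * n) ^ 3 := by gcongr
      _ = 8 * (n : ℝ) ^ 3 := by ring
  · let F := GaloisField p 3
    letI : Fintype F := Fintype.ofFinite F
    have hF : Fintype.card F = p ^ 3 := by
      rw [← Nat.card_eq_fintype_card]
      exact GaloisField.card p 3 (by norm_num)
    have hgp : n / r < p := lt_of_le_of_lt (Nat.div_le_self _ _) hnp
    have hrp : r < p := lt_of_le_of_lt (Nat.le_of_dvd (by omega) hrn) hnp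
    obtain ⟨γ, hγ0, hγ⟩ := lrs_exists_gamma p F hF (n / r) hgp
    have hσ : ∀ x : F, FiniteField.frobeniusAlgHom (ZMod p) F x = x ^ p := by
      intro x
      rw [FiniteField.coe_frobeniusAlgHom, ZMod.card]
    refine ⟨F, inferInstance, inferInstance, hF, ?_⟩
    refine lrs_main (K := ZMod p) (n / r) r a (FiniteField.frobeniusAlgHom (ZMod p) F) ?_ γ hγ0 ?_
      (fun s => ((s : ℕ) : ZMod p)) ?_
      (Module.finBasisOfFinrankEq (ZMod p) F (GaloisField.finrank p (by norm_num)))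
    · intro x hx
      exact lrs_fix p F x (by rw [← hσ, hx])
    · intro i j x y hx hy h
      rw [hσ, hσ] at h
      exact hγ i j x y hx hy h
    · intro s t hst
      have := (ZMod.natCast_eq_natCast_iff' _ _ _).1 hst
      rw [Nat.mod_eq_of_lt (by omega), Nat.mod_eq_of_lt (by omega)] at this
      exact Fin.ext this
end

section
/- Let q be a prime power and let A ⊆ ℙ𝔽_q^2 be a nonempty set with matching collinear triples. Then |A| ≤ q + 3. -/
/-- Three points of the projective plane `ℙ F (Fin 3 → F)` are collinear if they lie on a
common projective line, i.e. their representative lines are contained in a linear subspace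
of `F³` of dimension at most `2`. -/
def ProjCollinear (F : Type) [Field F]
    (p₁ p₂ p₃ : Projectivization F (Fin 3 → F)) : Prop :=
  ∃ W : Submodule F (Fin 3 → F), Module.finrank F W ≤ 2 ∧
    p₁.submodule ≤ W ∧ p₂.submodule ≤ W ∧ p₃.submodule ≤ W

/-- A finite set `A` of points of the projective plane `ℙ F (Fin 3 → F)` has
*matching collinear triples* if `A` can be partitioned into triples such that the only
collinear triples of pairwise distinct points of `A` are the triples of the partition. -/
def HasMatchingCollinearTriples (F : Type) [Field F]
    (A : Finset (Projectivization F (Fin 3 → F))) : Prop :=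
  ∃ T : Finset (Finset (Projectivization F (Fin 3 → F))),
    (∀ t ∈ T, t.card = 3) ∧
    ((T : Set (Finset (Projectivization F (Fin 3 → F)))).PairwiseDisjoint id) ∧
    ((A : Set (Projectivization F (Fin 3 → F))) = ⋃ t ∈ T, (t : Set _)) ∧
    (∀ p₁ ∈ A, ∀ p₂ ∈ A, ∀ p₃ ∈ A, p₁ ≠ p₂ → p₁ ≠ p₃ → p₂ ≠ p₃ →
      (ProjCollinear F p₁ p₂ p₃ ↔ ∃ t ∈ T, (t : Set _) = {p₁, p₂, p₃}))

/-- Two points with proportional images in the quotient by `p` are collinear with `p`. -/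
theorem projCollinear_of_mkQ (F : Type) [Field F]
    (p x y : Projectivization F (Fin 3 → F)) (a : F)
    (h : a • p.submodule.mkQ y.rep = p.submodule.mkQ x.rep) : ProjCollinear F p x y := by
  refine ⟨p.submodule ⊔ y.submodule, ?_, le_sup_left, ?_, le_sup_right⟩
  · have := Submodule.finrank_add_le_finrank_add_finrank p.submodule y.submodule
    rw [Projectivization.finrank_submodule, Projectivization.finrank_submodule] at this
    exact this
  · rw [Projectivization.submodule_eq x, Submodule.span_singleton_le_iff_mem]
    rw [← map_smul, ← sub_eq_zero, ← map_sub, Submodule.mkQ_apply,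
      Submodule.Quotient.mk_eq_zero] at h
    have hy : y.rep ∈ y.submodule := by
      rw [Projectivization.submodule_eq y]
      exact Submodule.mem_span_singleton_self _
    have e : x.rep = -(a • y.rep - x.rep) + a • y.rep := by abel
    rw [e]
    exact Submodule.add_mem_sup (neg_mem h) (Submodule.smul_mem _ _ hy)

theorem mkQ_rep_ne_zero (F : Type) [Field F]
    (p x : Projectivization F (Fin 3 → F)) (hx : x ≠ p) : p.submodule.mkQ x.rep ≠ 0 := by
  intro h
  rw [Submodule.mkQ_apply, Submodule.Quotient.mk_eq_zero, Projectivization.submodule_eq p,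
    Submodule.mem_span_singleton] at h
  obtain ⟨a, ha⟩ := h
  apply hx
  rw [← x.mk_rep, ← p.mk_rep, Projectivization.mk_eq_mk_iff']
  exact ⟨a, ha⟩

/-- Any nonempty subset of the projective plane over `F_q` with matching collinear
triples has at most `q + 3` points. -/
theorem card_le_of_hasMatchingCollinearTriples
    (F : Type) [Field F] [Fintype F]
    (A : Finset (Projectivization F (Fin 3 → F))) (hA : A.Nonempty)
    (hmct : HasMatchingCollinearTriples F A) :
    A.card ≤ Fintype.card F + 3 := by
  classical
  obtain ⟨T, h3, hdis, hU, hcol⟩ := hmct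
  obtain ⟨p, hp⟩ := hA
  have hp' : p ∈ (A : Set (Projectivization F (Fin 3 → F))) := hp
  rw [hU] at hp'
  simp only [Set.mem_iUnion, Finset.mem_coe, exists_prop] at hp'
  obtain ⟨t, htT, hpt⟩ := hp'
  obtain ⟨c, hct, hcp⟩ := Finset.exists_mem_ne (by rw [h3 t htT]; norm_num) p
  let Q := (Fin 3 → F) ⧸ p.submodule
  have hQ : Module.finrank F Q = 2 := by
    have := Submodule.finrank_quotient_add_finrank p.submodule
    rw [Projectivization.finrank_submodule] at this
    simp only [Module.finrank_fin_fun] at this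
    change Module.finrank F Q + 1 = 3 at this
    omega
  haveI : Finite Q := Module.finite_of_finite F
  haveI : Finite (Projectivization F Q) := inferInstance
  haveI : Fintype (Projectivization F Q) := Fintype.ofFinite _
  have hcard : Fintype.card (Projectivization F Q) = Fintype.card F + 1 := by
    rw [← Nat.card_eq_fintype_card, Projectivization.card_of_finrank_two F Q hQ,
      Nat.card_eq_fintype_card]
  let B := (A.erase p).erase c
  have hB : A.card ≤ B.card + 2 := by
    have h1 := Finset.pred_card_le_card_erase (s := A) (a := p)
    have h2 := Finset.pred_card_le_card_erase (s := A.erase p) (a := c)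
    change _ ≤ B.card at h2
    omega
  have hBp : ∀ x ∈ B, x ≠ p := fun x hx =>
    Finset.ne_of_mem_erase (Finset.mem_of_mem_erase hx)
  have hBc : ∀ x ∈ B, x ≠ c := fun x hx => Finset.ne_of_mem_erase hx
  have hBA : ∀ x ∈ B, x ∈ A := fun x hx =>
    Finset.mem_of_mem_erase (Finset.mem_of_mem_erase hx)
  let f : B → Projectivization F Q := fun x =>
    Projectivization.mk F (p.submodule.mkQ x.1.rep) (mkQ_rep_ne_zero F p x.1 (hBp _ x.2))
  have hf : Function.Injective f := by
    rintro ⟨x, hx⟩ ⟨y, hy⟩ hxy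
    by_contra hne
    have hne' : x ≠ y := fun h => hne (Subtype.ext h)
    obtain ⟨a, ha⟩ := (Projectivization.mk_eq_mk_iff' F _ _ _ _).1 hxy
    have hc := projCollinear_of_mkQ F p x y a ha
    obtain ⟨s, hsT, hs⟩ := (hcol p hp x (hBA x hx) y (hBA y hy) (hBp x hx).symm
      (hBp y hy).symm hne').1 hc
    have hps : p ∈ s := by
      rw [← Finset.mem_coe, hs]; simp
    have hst : s = t := by
      by_contra hst
      exact Finset.disjoint_left.1 (hdis hsT htT hst) hps hpt
    have hcs : c ∈ (s : Set (Projectivization F (Fin 3 → F))) := by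
      rw [hst]; exact hct
    rw [hs] at hcs
    rcases hcs with h | h | h
    · exact hcp h
    · exact hBc x hx h.symm
    · exact hBc y hy h.symm
  have := Fintype.card_le_of_injective f hf
  rw [Fintype.card_coe, hcard] at this
  omega
end

section
/- There exists an absolute constant C > 0 such that for every prime power q there exists a set A ⊆ ℙ𝔽_q^2 with matching collinear triples satisfying |A| ≥ q · exp(−C·√(log q)). -/
/-- Collinearity is the vanishing of the determinant. -/
lemma projCollinear_mk_iff (F : Type) [Field F] (v : Fin 3 → Fin 3 → F)
    (h : ∀ i, v i ≠ 0) :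
    ProjCollinear F (Projectivization.mk F (v 0) (h 0)) (Projectivization.mk F (v 1) (h 1))
      (Projectivization.mk F (v 2) (h 2)) ↔ (Matrix.of v).det = 0 := by
  have key : LinearIndependent F v ↔ (Matrix.of v).det ≠ 0 := by
    have := Matrix.linearIndependent_rows_iff_isUnit (A := Matrix.of v)
    rw [Matrix.isUnit_iff_isUnit_det, isUnit_iff_ne_zero] at this
    exact this
  constructor
  · rintro ⟨W, hW, h0, h1, h2⟩
    by_contra hd
    have hli := key.2 hd
    rw [Projectivization.submodule_mk, Submodule.span_singleton_le_iff_mem] at h0 h1 h2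
    have hle : Submodule.span F (Set.range v) ≤ W := by
      rw [Submodule.span_le]
      rintro _ ⟨i, rfl⟩
      fin_cases i
      · exact h0
      · exact h1
      · exact h2
    have h3 := finrank_span_eq_card hli
    have h4 := Submodule.finrank_mono hle
    simp at h3
    omega
  · intro hd
    refine ⟨Submodule.span F (Set.range v), ?_, ?_, ?_, ?_⟩
    · by_contra hc
      have hle : Module.finrank F (Submodule.span F (Set.range v)) ≤ 3 := by
        have := finrank_range_le_card (R := F) v
        simpa [Set.finrank] using this
      have : LinearIndependent F v := by
        rw [linearIndependent_iff_card_eq_finrank_span]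
        simp only [Fintype.card_fin, Set.finrank]
        omega
      exact key.1 this hd
    all_goals
      rw [Projectivization.submodule_mk, Submodule.span_singleton_le_iff_mem]
      exact Submodule.subset_span ⟨_, rfl⟩

/-- Coordinates on the nodal cubic. -/
def nodalVec (F : Type) [Field F] (t : Fˣ) : Fin 3 → F :=
  ![(t : F), (t : F) ^ 2, (t : F) ^ 3 - 1]

lemma nodalVec_ne (F : Type) [Field F] (t : Fˣ) : nodalVec F t ≠ 0 := by
  intro h
  have := congrFun h 0
  simp [nodalVec] at this

/-- Point on the nodal cubic. -/
def nodalPt (F : Type) [Field F] (t : Fˣ) : Projectivization F (Fin 3 → F) :=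
  Projectivization.mk F (nodalVec F t) (nodalVec_ne F t)

lemma nodalPt_inj (F : Type) [Field F] (s t : Fˣ) (h : nodalPt F s = nodalPt F t) : s = t := by
  unfold nodalPt at h
  rw [Projectivization.mk_eq_mk_iff'] at h
  obtain ⟨a, ha⟩ := h
  have h0 := congrFun ha 0
  have h1 := congrFun ha 1
  simp [nodalVec] at h0 h1
  have hs : (s : F) ≠ 0 := s.ne_zero
  have : (s : F) * t = s * s := by rw [← h0]; rw [← h0] at h1; linear_combination h1
  ext
  exact (mul_left_cancel₀ hs this).symm

lemma nodalPt_collinear (F : Type) [Field F] (a b c : Fˣ) (hab : a ≠ b) (hac : a ≠ c)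
    (hbc : b ≠ c) :
    ProjCollinear F (nodalPt F a) (nodalPt F b) (nodalPt F c) ↔ a * b * c = 1 := by
  have h := projCollinear_mk_iff F ![nodalVec F a, nodalVec F b, nodalVec F c]
    (by intro i; fin_cases i <;> exact nodalVec_ne F _)
  refine h.trans ?_
  have hdet : (Matrix.of ![nodalVec F a, nodalVec F b, nodalVec F c]).det
      = (((b : F) - a) * (c - a) * (c - b)) * (a * b * c - 1) := by
    rw [Matrix.det_fin_three]
    simp [nodalVec]
    ring
  rw [hdet]
  have h1 : (b : F) - a ≠ 0 := sub_ne_zero.2 (fun h => hab (Units.ext h.symm))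
  have h2 : (c : F) - a ≠ 0 := sub_ne_zero.2 (fun h => hac (Units.ext h.symm))
  have h3 : (c : F) - b ≠ 0 := sub_ne_zero.2 (fun h => hbc (Units.ext h.symm))
  rw [mul_eq_zero, or_iff_right (mul_ne_zero (mul_ne_zero h1 h2) h3), sub_eq_zero]
  constructor
  · intro h; ext; simpa using h
  · intro h; simpa using congrArg (Units.val) h

lemma eq_zero_of_dvd_small (n m : ℤ) (h : n ∣ m) (h1 : -n < m) (h2 : m < n) : m = 0 :=
  Int.eq_zero_of_abs_lt_dvd h (abs_lt.2 ⟨h1, h2⟩)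

/-- Index form. -/
def IdxForm (L x i : ℤ) : Prop := i = 10 * L + x ∨ i = 20 * L + x ∨ i = -30 * L - 2 * x

lemma idx_eq (n L x y i j : ℤ) (hn : 100 * L ≤ n) (hx : 0 ≤ x) (hxL : x < L)
    (hy : 0 ≤ y) (hyL : y < L) (hi : IdxForm L x i) (hj : IdxForm L y j) (h : n ∣ i - j) :
    i = j ∧ x = y := by
  have := eq_zero_of_dvd_small n (i - j) h
    (by rcases hi with h | h | h <;> rcases hj with h' | h' | h' <;> omega)
    (by rcases hi with h | h | h <;> rcases hj with h' | h' | h' <;> omega)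
  rcases hi with h | h | h <;> rcases hj with h' | h' | h' <;> omega

lemma idx_sum (n L x y z i j k : ℤ) (hn : 100 * L ≤ n) (hx : 0 ≤ x) (hxL : x < L)
    (hy : 0 ≤ y) (hyL : y < L) (hz : 0 ≤ z) (hzL : z < L)
    (hi : IdxForm L x i) (hj : IdxForm L y j) (hk : IdxForm L z k) (h : n ∣ i + j + k) :
    i + j + k = 0 := by
  apply eq_zero_of_dvd_small n _ h <;>
  rcases hi with h | h | h <;> rcases hj with h' | h' | h' <;> rcases hk with h'' | h'' | h'' <;>
  omega

/-- The large construction. -/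
lemma exists_of_threeAPFree (F : Type) [Field F] [Fintype F] (L : ℕ)
    (hL : 100 * L ≤ Fintype.card F - 1) (S : Finset ℕ) (hS : ∀ x ∈ S, x < L)
    (hfree : ThreeAPFree (S : Set ℕ)) :
    ∃ A : Finset (Projectivization F (Fin 3 → F)),
      HasMatchingCollinearTriples F A ∧ A.card = 3 * S.card := by
  classical
  obtain ⟨g, hg⟩ := IsCyclic.exists_generator (α := Fˣ)
  have hord : orderOf g = Fintype.card F - 1 := by
    rw [orderOf_eq_card_of_forall_mem_zpowers hg, Nat.card_eq_fintype_card, Fintype.card_units]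
  set n := Fintype.card F - 1 with hn
  have hnL : 100 * (L : ℤ) ≤ n := by exact_mod_cast hL
  let P : ℤ → Projectivization F (Fin 3 → F) := fun k => nodalPt F (g ^ k)
  have hone : ∀ k : ℤ, g ^ k = 1 ↔ (n : ℤ) ∣ k := by
    intro k; rw [← hord, orderOf_dvd_iff_zpow_eq_one]
  have hPd : ∀ i j, P i = P j → (n : ℤ) ∣ i - j := by
    intro i j h
    have := nodalPt_inj F _ _ h
    rw [← hone, zpow_sub, this, mul_inv_cancel]
  have hPc : ∀ i j k, P i ≠ P j → P i ≠ P k → P j ≠ P k →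
      (ProjCollinear F (P i) (P j) (P k) ↔ (n : ℤ) ∣ i + j + k) := by
    intro i j k hij hik hjk
    rw [← hone, zpow_add, zpow_add]
    apply nodalPt_collinear
    · intro h; exact hij (congrArg (nodalPt F) h)
    · intro h; exact hik (congrArg (nodalPt F) h)
    · intro h; exact hjk (congrArg (nodalPt F) h)
  let t : ℕ → Finset (Projectivization F (Fin 3 → F)) := fun x =>
    {P (10 * L + x), P (20 * L + x), P (-30 * L - 2 * x)}
  have ht : ∀ x p, p ∈ t x ↔ ∃ i, IdxForm L x i ∧ p = P i := by
    intro x p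
    simp only [t, Finset.mem_insert, Finset.mem_singleton, IdxForm]
    constructor
    · rintro (h | h | h)
      · exact ⟨_, Or.inl rfl, h⟩
      · exact ⟨_, Or.inr (Or.inl rfl), h⟩
      · exact ⟨_, Or.inr (Or.inr rfl), h⟩
    · rintro ⟨i, h | h | h, rfl⟩ <;> subst h <;> simp
  have hb : ∀ x ∈ S, (0 : ℤ) ≤ x ∧ (x : ℤ) < L := by
    intro x hx
    have := hS x hx
    omega
  have hPinj : ∀ x ∈ S, ∀ y ∈ S, ∀ i j, IdxForm L x i → IdxForm L y j → P i = P j →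
      i = j ∧ x = y := by
    intro x hx y hy i j hi hj h
    have := idx_eq n L x y i j hnL (hb x hx).1 (hb x hx).2 (hb y hy).1 (hb y hy).2 hi hj (hPd _ _ h)
    exact_mod_cast this
  have hdisj : ∀ x ∈ S, ∀ y ∈ S, x ≠ y → Disjoint (t x) (t y) := by
    intro x hx y hy hxy
    rw [Finset.disjoint_left]
    intro p hp hq
    obtain ⟨i, hi, rfl⟩ := (ht _ _).1 hp
    obtain ⟨j, hj, h⟩ := (ht _ _).1 hq
    exact hxy (hPinj x hx y hy i j hi hj h).2
  have hf1 : ∀ x : ℕ, IdxForm L x (10 * L + x) := fun x => Or.inl rfl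
  have hf2 : ∀ x : ℕ, IdxForm L x (20 * L + x) := fun x => Or.inr (Or.inl rfl)
  have hf3 : ∀ x : ℕ, IdxForm L x (-30 * L - 2 * x) := fun x => Or.inr (Or.inr rfl)
  have hne : ∀ x ∈ S, P (10 * L + x) ≠ P (20 * L + x) ∧ P (10 * L + x) ≠ P (-30 * L - 2 * x) ∧
      P (20 * L + x) ≠ P (-30 * L - 2 * x) := by
    intro x hx
    have := hb x hx
    refine ⟨fun h => ?_, fun h => ?_, fun h => ?_⟩
    · have := (hPinj x hx x hx _ _ (hf1 x) (hf2 x) h).1; omega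
    · have := (hPinj x hx x hx _ _ (hf1 x) (hf3 x) h).1; omega
    · have := (hPinj x hx x hx _ _ (hf2 x) (hf3 x) h).1; omega
  have hcard : ∀ x ∈ S, (t x).card = 3 := by
    intro x hx
    rw [Finset.card_eq_three]
    exact ⟨_, _, _, (hne x hx).1, (hne x hx).2.1, (hne x hx).2.2, rfl⟩
  refine ⟨S.biUnion t, ⟨S.image t, ?_, ?_, ?_, ?_⟩, ?_⟩
  · intro s hs
    obtain ⟨x, hx, rfl⟩ := Finset.mem_image.1 hs
    exact hcard x hx
  · intro s hs s' hs' hss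
    obtain ⟨x, hx, rfl⟩ := Finset.mem_image.1 hs
    obtain ⟨y, hy, rfl⟩ := Finset.mem_image.1 hs'
    exact hdisj x hx y hy (fun h => hss (by rw [h]))
  · ext p
    simp
  · intro p₁ h1 p₂ h2 p₃ h3 h12 h13 h23
    constructor
    · intro hcol
      obtain ⟨x, hx, h1⟩ := Finset.mem_biUnion.1 h1
      obtain ⟨y, hy, h2⟩ := Finset.mem_biUnion.1 h2
      obtain ⟨z, hz, h3⟩ := Finset.mem_biUnion.1 h3
      have h1' := h1
      have h2' := h2
      have h3' := h3
      obtain ⟨i, hi, rfl⟩ := (ht _ _).1 h1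
      obtain ⟨j, hj, rfl⟩ := (ht _ _).1 h2
      obtain ⟨k, hk, rfl⟩ := (ht _ _).1 h3
      have hd := (hPc i j k h12 h13 h23).1 hcol
      have h0 := idx_sum n L x y z i j k hnL (hb x hx).1 (hb x hx).2 (hb y hy).1 (hb y hy).2
        (hb z hz).1 (hb z hz).2 hi hj hk hd
      have bx := hb x hx
      have bY := hb y hy
      have bz := hb z hz
      have hAP : x + y = z + z ∨ x + z = y + y ∨ y + z = x + x := by
        rcases hi with h | h | h <;> rcases hj with h' | h' | h' <;>
          rcases hk with h'' | h'' | h'' <;> omega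
      have hxyz : x = y ∧ x = z := by
        rcases hAP with h | h | h
        · have := hfree hx hz hy h; omega
        · have := hfree hx hy hz h; omega
        · have := hfree hy hx hz h; omega
      obtain ⟨rfl, rfl⟩ := hxyz
      refine ⟨t x, Finset.mem_image_of_mem _ hx, ?_⟩
      have : ({P i, P j, P k} : Finset _) = t x := by
        apply Finset.eq_of_subset_of_card_le
        · intro p hp
          simp only [Finset.mem_insert, Finset.mem_singleton] at hp
          rcases hp with rfl | rfl | rfl <;> assumption
        · rw [hcard x hx, Finset.card_eq_three.2 ⟨_, _, _, h12, h13, h23, rfl⟩]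
      rw [← this]
      simp
    · rintro ⟨s, hs, heq⟩
      obtain ⟨x, hx, rfl⟩ := Finset.mem_image.1 hs
      obtain ⟨W, hW, w1, w2, w3⟩ := (hPc _ _ _ (hne x hx).1 (hne x hx).2.1 (hne x hx).2.2).2
        ⟨0, by ring⟩
      have hall : ∀ p ∈ (t x : Set (Projectivization F (Fin 3 → F))), p.submodule ≤ W := by
        intro p hp
        simp only [t, Finset.mem_coe, Finset.mem_insert, Finset.mem_singleton] at hp
        rcases hp with rfl | rfl | rfl <;> assumption
      rw [heq] at hall
      exact ⟨W, hW, hall _ (by simp), hall _ (by simp), hall _ (by simp)⟩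
  · rw [Finset.card_biUnion hdisj, Finset.sum_congr rfl hcard]
    simp [mul_comm]

/-- Three points on a line. -/
lemma exists_small (F : Type) [Field F] :
    ∃ A : Finset (Projectivization F (Fin 3 → F)),
      HasMatchingCollinearTriples F A ∧ A.card = 3 := by
  classical
  let v : Fin 3 → Fin 3 → F := ![![1, 0, 0], ![0, 1, 0], ![1, 1, 0]]
  have hv : ∀ i, v i ≠ 0 := by
    intro i h
    fin_cases i
    · have := congrFun h 0; simp [v] at this
    · have := congrFun h 1; simp [v] at this
    · have := congrFun h 0; simp [v] at this
  let Q : Fin 3 → Projectivization F (Fin 3 → F) := fun i => Projectivization.mk F (v i) (hv i)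
  have hcol : ProjCollinear F (Q 0) (Q 1) (Q 2) := by
    refine (projCollinear_mk_iff F v hv).2 ?_
    rw [Matrix.det_fin_three]
    simp [v]
  have h01 : Q 0 ≠ Q 1 := by
    intro h
    obtain ⟨a, ha⟩ := (Projectivization.mk_eq_mk_iff' F _ _ _ _).1 h
    have := congrFun ha 0
    simp [v] at this
  have h02 : Q 0 ≠ Q 2 := by
    intro h
    obtain ⟨a, ha⟩ := (Projectivization.mk_eq_mk_iff' F _ _ _ _).1 h
    have h0 := congrFun ha 0
    have h1 := congrFun ha 1
    simp [v] at h0 h1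
    simp [h0] at h1
  have h12 : Q 1 ≠ Q 2 := by
    intro h
    obtain ⟨a, ha⟩ := (Projectivization.mk_eq_mk_iff' F _ _ _ _).1 h
    have h0 := congrFun ha 0
    have h1 := congrFun ha 1
    simp [v] at h0 h1
    simp [h0] at h1
  have hcard : ({Q 0, Q 1, Q 2} : Finset _).card = 3 :=
    Finset.card_eq_three.2 ⟨_, _, _, h01, h02, h12, rfl⟩
  refine ⟨{Q 0, Q 1, Q 2}, ⟨{{Q 0, Q 1, Q 2}}, ?_, ?_, ?_, ?_⟩, hcard⟩
  · intro s hs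
    rw [Finset.mem_singleton.1 hs, hcard]
  · simp
  · simp
  · intro p₁ h1 p₂ h2 p₃ h3 g12 g13 g23
    constructor
    · intro _
      refine ⟨_, Finset.mem_singleton_self _, ?_⟩
      have : ({p₁, p₂, p₃} : Finset _) = {Q 0, Q 1, Q 2} := by
        apply Finset.eq_of_subset_of_card_le
        · intro p hp
          rw [Finset.mem_insert, Finset.mem_insert, Finset.mem_singleton] at hp
          rcases hp with rfl | rfl | rfl <;> assumption
        · rw [hcard, Finset.card_eq_three.2 ⟨_, _, _, g12, g13, g23, rfl⟩]
      rw [← this]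
      simp
    · intro _
      obtain ⟨W, hW, w1, w2, w3⟩ := hcol
      have hall : ∀ p ∈ ({Q 0, Q 1, Q 2} : Finset _), p.submodule ≤ W := by
        intro p hp
        rw [Finset.mem_insert, Finset.mem_insert, Finset.mem_singleton] at hp
        rcases hp with rfl | rfl | rfl <;> assumption
      exact ⟨W, hW, hall _ h1, hall _ h2, hall _ h3⟩

/-- **Lemma 6.2.** There is an absolute constant `C > 0` such that for every prime power
`q` (realized as the order of a finite field `F`) there is a set `A ⊆ ℙ F_q²` with
matching collinear triples of size at least `q · exp(-C·√(log q))`. -/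
theorem exists_large_hasMatchingCollinearTriples :
    ∃ C : ℝ, 0 < C ∧
      ∀ (F : Type) (_ : Field F) (_ : Fintype F),
        ∃ A : Finset (Projectivization F (Fin 3 → F)),
          HasMatchingCollinearTriples F A ∧
          (Fintype.card F : ℝ) *
              Real.exp (-C * Real.sqrt (Real.log (Fintype.card F))) ≤ (A.card : ℝ) := by
  refine ⟨1004, by norm_num, ?_⟩
  intro F _ _
  set q := Fintype.card F with hq
  have hq2 : 2 ≤ q := Fintype.one_lt_card
  have hq2' : (2 : ℝ) ≤ q := by exact_mod_cast hq2
  have hs : (1 / 2 : ℝ) ≤ Real.sqrt (Real.log q) := by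
    apply Real.le_sqrt_of_sq_le
    have := Real.log_le_log (by norm_num) hq2'
    have := Real.log_two_gt_d9
    norm_num
    linarith
  have hexp : Real.exp (-1000 * Real.sqrt (Real.log q)) ≤ 1 / 500 := by
    rw [neg_mul, Real.exp_neg, ← one_div]
    apply one_div_le_one_div_of_le (by norm_num)
    have := Real.add_one_le_exp (1000 * Real.sqrt (Real.log q))
    linarith
  have hexp4 : Real.exp (-4 * Real.sqrt (Real.log q)) ≤ 1 := by
    rw [Real.exp_le_one_iff]; linarith
  have hsplit : Real.exp (-1004 * Real.sqrt (Real.log q)) =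
      Real.exp (-1000 * Real.sqrt (Real.log q)) * Real.exp (-4 * Real.sqrt (Real.log q)) := by
    rw [← Real.exp_add]; ring_nf
  have hp4 := Real.exp_pos (-4 * Real.sqrt (Real.log q))
  have hp1000 := Real.exp_pos (-1000 * Real.sqrt (Real.log q))
  rcases lt_or_ge q 200 with hlt | hge
  · obtain ⟨A, hA, hc⟩ := exists_small F
    refine ⟨A, hA, ?_⟩
    have hlt' : (q : ℝ) ≤ 200 := by exact_mod_cast hlt.le
    rw [hc, hsplit]
    have : Real.exp (-1000 * Real.sqrt (Real.log q)) * Real.exp (-4 * Real.sqrt (Real.log q))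
      ≤ 1 / 500 * 1 := mul_le_mul hexp hexp4 hp4.le (by norm_num)
    calc _ ≤ (200 : ℝ) * (1 / 500 * 1) := mul_le_mul hlt' this (by positivity) (by norm_num)
      _ ≤ _ := by norm_num
  · set L := (q - 1) / 100 with hLdef
    obtain ⟨S, hSsub, hScard, hSfree⟩ := rothNumberNat_spec L
    obtain ⟨A, hA, hc⟩ := exists_of_threeAPFree F L (by omega) S
      (fun x hx => Finset.mem_range.1 (hSsub hx)) hSfree
    refine ⟨A, hA, ?_⟩
    have hB := Behrend.roth_lower_bound (N := L)
    have hL1 : 1 ≤ L := by omega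
    have hLq : q ≤ 200 * L := by omega
    have hLq' : (q : ℝ) ≤ 200 * L := by exact_mod_cast hLq
    have hLle : (L : ℝ) ≤ q := by exact_mod_cast (by omega : L ≤ q)
    have hL0 : (0 : ℝ) < L := by exact_mod_cast hL1
    have hmono : Real.exp (-4 * Real.sqrt (Real.log q)) ≤ Real.exp (-4 * Real.sqrt (Real.log L)) := by
      apply Real.exp_le_exp.2
      have := Real.sqrt_le_sqrt (Real.log_le_log hL0 hLle)
      linarith
    rw [hc, hScard, hsplit]
    push_cast
    have e1 : (L : ℝ) * Real.exp (-4 * Real.sqrt (Real.log q)) ≤ rothNumberNat L :=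
      (mul_le_mul_of_nonneg_left hmono hL0.le).trans hB
    calc (q : ℝ) * (Real.exp (-1000 * Real.sqrt (Real.log q)) *
          Real.exp (-4 * Real.sqrt (Real.log q)))
        ≤ (200 * L) * (1 / 500 * Real.exp (-4 * Real.sqrt (Real.log q))) := by gcongr
      _ = 2 / 5 * ((L : ℝ) * Real.exp (-4 * Real.sqrt (Real.log q))) := by ring
      _ ≤ 2 / 5 * (rothNumberNat L : ℝ) := by gcongr
      _ ≤ 3 * (rothNumberNat L : ℝ) := by
        have : (0 : ℝ) ≤ rothNumberNat L := by positivity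
        linarith
end

section
/- Let q be a prime power and g ≥ 2 an integer. There exists a set S ⊆ ℙ𝔽_q^2 of size 3g with matching collinear triples (i.e., S partitions into g triples such that the only collinear triples of distinct points of S are the g triples of the partition) if and only if there exists a maximally recoverable (3g, r=3, h=3, a=1, q)-local reconstruction code. -/
theorem li_finset_iff {F ι V : Type*} [Field F] [AddCommGroup V] [Module F V] [Fintype ι]
    [DecidableEq ι] (E : Finset ι) (v : ι → V) :
    LinearIndependent F (fun x : {x // x ∈ E} => v x.1) ↔
      ∀ w : ι → F, (∀ c, c ∉ E → w c = 0) → ∑ c, w c • v c = 0 → w = 0 := by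
  rw [Fintype.linearIndependent_iff]
  constructor
  · intro h w hw hs
    have h1 : ∑ c : {x // x ∈ E}, w c.1 • v c.1 = 0 := by
      rw [Finset.sum_coe_sort E (fun c => w c • v c), ← hs]
      apply Finset.sum_subset (Finset.subset_univ _)
      intro x _ hx
      simp [hw x hx]
    have h2 := h (fun c => w c.1) h1
    funext c
    by_cases hc : c ∈ E
    · exact h2 ⟨c, hc⟩
    · exact hw c hc
  · intro h u hu i
    have h2 := h (fun c => if hc : c ∈ E then u ⟨c, hc⟩ else 0) (by
      intro c hc; simp [hc]) (by
      rw [← hu]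
      rw [← Finset.sum_subset (Finset.subset_univ E)]
      · rw [← Finset.sum_coe_sort]
        apply Finset.sum_congr rfl
        intro x _
        simp
      · intro x _ hx
        simp [hx])
    have := congrFun h2 i.1
    simpa using this

section
variable {F : Type} [Field F] {g : ℕ}

/-- Independence of the columns of `E` in coordinates, for all-ones local parities. -/
def WLI (E : Finset (Fin g × Fin 3)) (b : Fin g × Fin 3 → (Fin 3 → F)) : Prop :=
  ∀ w : Fin g × Fin 3 → F, (∀ c, c ∉ E → w c = 0) → (∀ i, ∑ k, w (i, k) = 0) →
    ∑ c, w c • b c = 0 → w = 0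

/-- Triples of distinct indices not all in one group give independent vectors. -/
def NoCol (d : Fin g × Fin 3 → (Fin 3 → F)) : Prop :=
  ∀ f : Fin 3 → Fin g × Fin 3, Function.Injective f → (¬ ∀ a b, (f a).1 = (f b).1) →
    LinearIndependent F (fun a => d (f a))

theorem wli_iff (b : Fin g × Fin 3 → (Fin 3 → F)) (β : Fin g → Fin 3)
    (E E' : Finset (Fin g × Fin 3)) (hβ : ∀ c ∈ E', c.2 ≠ β c.1)
    (hE : ∀ c, c ∈ E ↔ c ∈ E' ∨ c.2 = β c.1) :
    WLI E b ↔ LinearIndependent F (fun x : {x // x ∈ E'} => b x.1 - b (x.1.1, β x.1.1)) := by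
  rw [li_finset_iff E' (fun x => b x - b (x.1, β x.1))]
  constructor
  · intro h v hv hs
    have h0 : ∀ i, v (i, β i) = 0 := fun i => hv _ (fun hc => hβ _ hc rfl)
    have := h (fun c => v c - if c.2 = β c.1 then ∑ l, v (c.1, l) else 0) ?_ ?_ ?_
    · funext c
      by_cases hc : c.2 = β c.1
      · have h1 := h0 c.1
        rw [← hc] at h1
        exact h1
      · have := congrFun this c
        simpa [hc] using this
    · intro c hc
      rw [hE] at hc
      push Not at hc
      simp [hc.2, hv c hc.1]
    · intro i
      simp
    · rw [← hs]
      simp only [sub_smul, smul_sub, Finset.sum_sub_distrib]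
      congr 1
      simp only [Fintype.sum_prod_type, ite_smul, zero_smul, Finset.sum_ite_eq',
        Finset.mem_univ, if_true, Finset.sum_smul]
  · intro h w hw hsum hs
    have h1 : ∀ i, w (i, β i) = - ∑ l, if l = β i then 0 else w (i, l) := by
      intro i
      have := hsum i
      rw [← Finset.add_sum_erase _ _ (Finset.mem_univ (β i))] at this
      rw [eq_neg_of_add_eq_zero_left this]
      congr 1
      rw [← Finset.add_sum_erase (a := β i) _ _ (Finset.mem_univ (β i))]
      simp only [if_true, zero_add]
      apply Finset.sum_congr rfl
      intro x hx
      simp [Finset.ne_of_mem_erase hx]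
    have := h (fun c => if c.2 = β c.1 then 0 else w c) ?_ ?_
    · have h2 : ∀ c : Fin g × Fin 3, c.2 ≠ β c.1 → w c = 0 := by
        intro c hc
        have := congrFun this c
        simpa [hc] using this
      funext ⟨i, k⟩
      by_cases hc : k = β i
      · subst hc
        rw [h1]
        simp only [Pi.zero_apply, neg_eq_zero]
        apply Finset.sum_eq_zero
        intro l _
        split_ifs with hl
        · rfl
        · exact h2 (i, l) hl
      · exact h2 _ hc
    · intro c hc
      by_cases h3 : c.2 = β c.1
      · simp [h3]
      · simp only [h3, if_false]
        exact hw c (by rw [hE]; tauto)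
    · rw [← hs]
      have h4 : ∀ i, ∑ k, w (i, k) • b (i, k) =
          ∑ k, (if k = β i then 0 else w (i, k)) • (b (i, k) - b (i, β i)) := by
        intro i
        have : ∑ k, w (i, k) • b (i, k) = ∑ k, w (i, k) • (b (i, k) - b (i, β i)) := by
          simp only [smul_sub, Finset.sum_sub_distrib, ← Finset.sum_smul, hsum, zero_smul,
            sub_zero]
        rw [this]
        apply Finset.sum_congr rfl
        intro k _
        split_ifs with hk
        · simp [hk]
        · rfl
      simp only [Fintype.sum_prod_type]
      exact (Finset.sum_congr rfl (fun i _ => h4 i)).symm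

/-- The third index. -/
def third (k l : Fin 3) : Fin 3 := -(k + l)

theorem third_ne {k l : Fin 3} (h : k ≠ l) : third k l ≠ l := by
  revert k l; decide

theorem third_third (k l : Fin 3) : third (third k l) l = k := by
  revert k l; decide

/-- Difference vectors of a group. -/
def dv (b : Fin g × Fin 3 → (Fin 3 → F)) (x : Fin g × Fin 3) : Fin 3 → F :=
  b (x.1, x.2 + 2) - b (x.1, x.2 + 1)

theorem third_cases : ∀ {k l : Fin 3}, k ≠ l →
    (third k l + 2 = k ∧ third k l + 1 = l) ∨ (third k l + 2 = l ∧ third k l + 1 = k) := by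
  decide

theorem dv_third (b : Fin g × Fin 3 → (Fin 3 → F)) (i : Fin g) (k l : Fin 3) (h : k ≠ l) :
    ∃ s : Fˣ, b (i, k) - b (i, l) = s • dv b (i, third k l) := by
  unfold dv
  rcases third_cases h with ⟨h1, h2⟩ | ⟨h1, h2⟩
  · exact ⟨1, by simp [h1, h2]⟩
  · exact ⟨-1, by simp [h1, h2, Units.smul_def]⟩

theorem li_units {ι : Type*} (u v : ι → (Fin 3 → F)) (h : ∀ i, ∃ s : Fˣ, u i = s • v i) :
    LinearIndependent F u ↔ LinearIndependent F v := by
  choose s hs using h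
  have : u = s • v := by funext i; rw [hs]; rfl
  rw [this]
  exact ⟨fun h => (LinearIndependent.units_smul_iff v s).1 h, fun h => h.units_smul s⟩

theorem wli_noCol (b : Fin g × Fin 3 → (Fin 3 → F)) :
    (∀ E : Finset (Fin g × Fin 3), E.card = 1 * g + 3 →
      (∀ i : Fin g, 1 ≤ (E.filter (fun x => x.1 = i)).card) → WLI E b) ↔ NoCol (dv b) := by
  classical
  constructor
  · intro h f hf hne
    have hβ : ∀ i, ∃ k, ∀ a, f a ≠ (i, k) := by
      intro i
      by_contra! hc
      choose s hs using hc
      have hsi : Function.Injective s := by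
        intro k l hkl
        have h1 := hs k
        rw [hkl, hs l] at h1
        simpa using h1.symm
      have hsb := (Finite.injective_iff_surjective.1 hsi)
      apply hne
      intro a c
      obtain ⟨k, rfl⟩ := hsb a
      obtain ⟨l, rfl⟩ := hsb c
      rw [hs, hs]
    choose β hβ using hβ
    have hβ' : ∀ a, (f a).2 ≠ β (f a).1 := fun a h => hβ (f a).1 a (by rw [← h])
    let τ : Fin 3 → Fin g × Fin 3 := fun a => ((f a).1, third (f a).2 (β (f a).1))
    have hτ : Function.Injective τ := by
      intro a c hac
      simp only [τ, Prod.mk.injEq] at hac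
      apply hf
      refine Prod.ext hac.1 ?_
      rw [← third_third (f a).2 (β (f a).1), hac.2, hac.1, third_third]
    let E' := Finset.univ.image τ
    let Z : Finset (Fin g × Fin 3) := Finset.univ.image (fun i => (i, β i))
    have hE'β : ∀ c ∈ E', c.2 ≠ β c.1 := by
      intro c hc
      simp only [E', Finset.mem_image, Finset.mem_univ, true_and] at hc
      obtain ⟨a, rfl⟩ := hc
      exact third_ne (hβ' a)
    have hZ : ∀ c, c ∈ Z ↔ c.2 = β c.1 := by
      rintro ⟨i, k⟩
      simp [Z, eq_comm]
    have hd : Disjoint E' Z := by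
      rw [Finset.disjoint_left]
      intro c hc hc2
      exact hE'β c hc ((hZ c).1 hc2)
    have hw := h (E' ∪ Z) (by
      rw [Finset.card_union_of_disjoint hd, Finset.card_image_of_injective _ hτ,
        Finset.card_image_of_injective]
      · simp; omega
      · intro i j hij
        exact (Prod.mk.inj hij).1) (by
      intro i
      rw [Nat.one_le_iff_ne_zero, ← Nat.pos_iff_ne_zero, Finset.card_pos]
      exact ⟨(i, β i), by simp [hZ]⟩)
    rw [wli_iff b β _ E' hE'β (by intro c; rw [Finset.mem_union, hZ])] at hw
    have h3 := hw.comp (fun a : Fin 3 => ⟨τ a, by simp [E']⟩) (by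
      intro a c hac
      exact hτ (congrArg Subtype.val hac))
    refine (li_units _ _ ?_).1 h3
    intro a
    obtain ⟨s, hs⟩ := dv_third b (f a).1 (third (f a).2 (β (f a).1)) (β (f a).1)
      (third_ne (hβ' a))
    refine ⟨s, ?_⟩
    rw [third_third] at hs
    exact hs
  · intro h E hE hEi
    have hβ : ∀ i, ∃ k, (i, k) ∈ E := by
      intro i
      obtain ⟨⟨j, k⟩, hx⟩ := Finset.card_pos.1 (hEi i)
      simp only [Finset.mem_filter] at hx
      obtain ⟨hx, rfl⟩ := hx
      exact ⟨k, hx⟩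
    choose β hβ using hβ
    let Z : Finset (Fin g × Fin 3) := Finset.univ.image (fun i => (i, β i))
    have hZ : ∀ c, c ∈ Z ↔ c.2 = β c.1 := by
      rintro ⟨i, k⟩
      simp [Z, eq_comm]
    have hZE : Z ⊆ E := by
      intro c hc
      rw [hZ] at hc
      have := hβ c.1
      rw [← hc] at this
      exact this
    have hcard : (E \ Z).card = 3 := by
      rw [Finset.card_sdiff_of_subset hZE, hE, Finset.card_image_of_injective]
      · simp
      · intro i j hij
        exact (Prod.mk.inj hij).1
    have hE'β : ∀ c ∈ E \ Z, c.2 ≠ β c.1 := by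
      intro c hc
      rw [Finset.mem_sdiff, hZ] at hc
      exact hc.2
    rw [wli_iff b β E (E \ Z) hE'β (by
      intro c
      rw [Finset.mem_sdiff, hZ]
      have := @hZE c
      rw [hZ] at this
      tauto)]
    let e : Fin 3 ≃ {x // x ∈ E \ Z} := ((E \ Z).equivFinOfCardEq hcard).symm
    rw [← linearIndependent_equiv e]
    have h4 := h (fun a => ((e a).1.1, third (e a).1.2 (β (e a).1.1))) (by
      intro a c hac
      simp only [Prod.mk.injEq] at hac
      apply e.injective
      apply Subtype.ext
      refine Prod.ext hac.1 ?_
      rw [← third_third (e a).1.2 (β (e a).1.1), hac.2, hac.1, third_third]) (by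
      intro hall
      simp only at hall
      have hinj : Function.Injective (fun a => (e a).1.2) := by
        intro a c hac
        apply e.injective
        apply Subtype.ext
        exact Prod.ext (hall a c) hac
      obtain ⟨a, ha⟩ := (Finite.injective_iff_surjective.1 hinj) (β (e 0).1.1)
      apply hE'β (e a).1 (e a).2
      rw [hall a 0]
      exact ha)
    refine (li_units _ _ ?_).2 h4
    intro a
    exact dv_third b _ _ _ (hE'β _ (e a).2)

theorem cols_iff (A : Fin g → Matrix (Fin 1) (Fin 3) F) (B : Fin g → Matrix (Fin 3) (Fin 3) F)
    (hA : ∀ i k, A i 0 k ≠ 0) (E : Finset (Fin g × Fin 3)) :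
    LinearIndependent F
        (fun c : {x // x ∈ E} => fun ρ => lrcParityCheck F g 3 1 3 A B ρ c.1) ↔
    WLI E (fun c => (A c.1 0 c.2)⁻¹ • fun j => B c.1 j c.2) := by
  rw [li_finset_iff E (fun c => fun ρ => lrcParityCheck F g 3 1 3 A B ρ c)]
  have key : ∀ w : Fin g × Fin 3 → F,
      (∑ c, w c • (fun ρ => lrcParityCheck F g 3 1 3 A B ρ c) = 0) ↔
      ((∀ i, ∑ k, A i 0 k * w (i, k) = 0) ∧ ∑ c, w c • (fun j => B c.1 j c.2) = 0) := by
    intro w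
    constructor
    · intro h
      constructor
      · intro i
        have := congrFun h (Sum.inl (i, 0))
        simp only [Finset.sum_apply, Pi.smul_apply, lrcParityCheck, Sum.elim_inl, smul_eq_mul,
          Pi.zero_apply, Fintype.sum_prod_type, mul_ite, mul_zero] at this
        rw [Finset.sum_eq_single i] at this
        · simpa [mul_comm] using this
        · intro j _ hj
          simp [hj.symm]
        · simp
      · funext j
        have := congrFun h (Sum.inr j)
        simpa [Finset.sum_apply, lrcParityCheck] using this
    · rintro ⟨h1, h2⟩
      funext ρ
      rcases ρ with ⟨i, j⟩ | j
      · obtain rfl : j = 0 := Subsingleton.elim _ _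
        simp only [Finset.sum_apply, Pi.smul_apply, lrcParityCheck, Sum.elim_inl, smul_eq_mul,
          Pi.zero_apply, Fintype.sum_prod_type, mul_ite, mul_zero]
        rw [Finset.sum_eq_single i]
        · simpa [mul_comm] using h1 i
        · intro j _ hj
          simp [hj.symm]
        · simp
      · have := congrFun h2 j
        simpa [Finset.sum_apply, lrcParityCheck] using this
  constructor
  · intro h w hw hs hb
    have := h (fun c => w c * (A c.1 0 c.2)⁻¹) (by intro c hc; simp [hw c hc]) (by
      rw [key]
      constructor
      · intro i
        rw [← hs i]
        apply Finset.sum_congr rfl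
        intro k _
        have := hA i k
        field_simp
      · simpa only [smul_smul] using hb)
    funext c
    have := congrFun this c
    simpa [hA] using this
  · intro h w hw hs
    rw [key] at hs
    have := h (fun c => A c.1 0 c.2 * w c) (by intro c hc; simp [hw c hc]) hs.1 (by
      rw [← hs.2]
      apply Finset.sum_congr rfl
      intro c _
      rw [smul_smul]
      congr 1
      have := hA c.1 c.2
      field_simp)
    funext c
    have := congrFun this c
    simpa [hA] using this

theorem minors_iff (A : Fin g → Matrix (Fin 1) (Fin 3) F) :
    (∀ i : Fin g, ∀ S : Finset (Fin 3), S.card = 1 →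
      LinearIndependent F (fun c : {x // x ∈ S} => fun j : Fin 1 => A i j c.1)) ↔
    ∀ i k, A i 0 k ≠ 0 := by
  constructor
  · intro h i k h0
    have := (h i {k} (by simp)).ne_zero ⟨k, by simp⟩
    apply this
    funext j
    obtain rfl : j = 0 := Subsingleton.elim _ _
    exact h0
  · intro h i S hS
    obtain ⟨k, rfl⟩ := Finset.card_eq_one.1 hS
    have : Unique {x // x ∈ ({k} : Finset (Fin 3))} := ⟨⟨⟨k, by simp⟩⟩, by
      rintro ⟨x, hx⟩
      simpa using hx⟩
    rw [linearIndependent_unique_iff]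
    intro h0
    exact h i _ (congrFun h0 0)

theorem exists_lrc_iff :
    (∃ (A : Fin g → Matrix (Fin 1) (Fin 3) F) (B : Fin g → Matrix (Fin 3) (Fin 3) F),
        IsMRLRC F g 3 1 3 A B) ↔
    ∃ d : Fin g × Fin 3 → (Fin 3 → F), (∀ i, ∑ k, d (i, k) = 0) ∧ NoCol d := by
  constructor
  · rintro ⟨A, B, h1, h2⟩
    rw [minors_iff] at h1
    simp only [cols_iff A B h1] at h2
    rw [wli_noCol] at h2
    refine ⟨_, ?_, h2⟩
    generalize (fun c : Fin g × Fin 3 => (A c.1 0 c.2)⁻¹ • fun j => B c.1 j c.2) = b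
    intro i
    simp only [dv, Fin.sum_univ_three]
    have e1 : (1 : Fin 3) + 2 = 0 := rfl
    have e2 : (1 : Fin 3) + 1 = 2 := rfl
    have e3 : (2 : Fin 3) + 2 = 1 := rfl
    have e4 : (2 : Fin 3) + 1 = 0 := rfl
    simp only [e1, e2, e3, e4, zero_add]
    abel
  · rintro ⟨d, hd, h⟩
    let b : Fin g × Fin 3 → (Fin 3 → F) := fun c => ![0, d (c.1, 2), - d (c.1, 1)] c.2
    have hb : dv b = d := by
      funext ⟨i, k⟩
      have hs := hd i
      rw [Fin.sum_univ_three] at hs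
      have hs' : d (i, 0) = - d (i, 1) - d (i, 2) := by
        rw [eq_sub_iff_add_eq, eq_neg_iff_add_eq_zero, ← hs]; abel
      fin_cases k
      · simp [dv, b, hs']
      · change b (i, 0) - b (i, 2) = d (i, 1)
        simp [b]
      · change b (i, 1) - b (i, 0) = d (i, 2)
        simp [b]
    obtain ⟨A, hA1⟩ : ∃ A : Fin g → Matrix (Fin 1) (Fin 3) F, ∀ i k, A i 0 k = 1 :=
      ⟨fun _ => fun _ _ => 1, fun _ _ => rfl⟩
    obtain ⟨B, hB⟩ : ∃ B : Fin g → Matrix (Fin 3) (Fin 3) F, ∀ i j k, B i j k = b (i, k) j :=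
      ⟨fun i => fun j k => b (i, k) j, fun _ _ _ => rfl⟩
    have hA : ∀ i k, A i 0 k ≠ 0 := by
      intro i k; rw [hA1]; exact one_ne_zero
    have h6 : (fun c : Fin g × Fin 3 => (A c.1 0 c.2)⁻¹ • fun j => B c.1 j c.2) = b := by
      funext c
      rw [hA1, inv_one, one_smul]
      funext j
      rw [hB]
    refine ⟨A, B, (minors_iff A).2 hA, ?_⟩
    intro E hE hEi
    rw [cols_iff _ _ hA, h6]
    exact (wli_noCol b).2 (by rw [hb]; exact h) E hE hEi

theorem collinear_iff (p : Fin 3 → Projectivization F (Fin 3 → F)) (v : Fin 3 → (Fin 3 → F))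
    (hv : ∀ i, (p i).submodule = Submodule.span F {v i}) :
    ProjCollinear F (p 0) (p 1) (p 2) ↔ ¬ LinearIndependent F v := by
  constructor
  · rintro ⟨W, hW, h0, h1, h2⟩ hli
    have hle : Submodule.span F (Set.range v) ≤ W := by
      rw [Submodule.span_le]
      rintro _ ⟨i, rfl⟩
      have hi : (p i).submodule ≤ W := by fin_cases i <;> assumption
      rw [hv] at hi
      exact hi (Submodule.mem_span_singleton_self _)
    have := Submodule.finrank_mono hle
    rw [finrank_span_eq_card hli] at this
    simp at this
    omega
  · intro h
    rw [linearIndependent_iff_card_le_finrank_span] at h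
    have hs : ∀ i, (p i).submodule ≤ Submodule.span F (Set.range v) := by
      intro i
      rw [hv]
      exact Submodule.span_mono (by rintro _ rfl; exact ⟨i, rfl⟩)
    refine ⟨_, ?_, hs 0, hs 1, hs 2⟩
    simp [Set.finrank] at h
    omega

theorem exists_set_of (hg : 2 ≤ g) (d : Fin g × Fin 3 → (Fin 3 → F))
    (hd : ∀ i, ∑ k, d (i, k) = 0) (h : NoCol d) :
    ∃ A : Finset (Projectivization F (Fin 3 → F)),
            A.card = 3 * g ∧ HasMatchingCollinearTriples F A := by
  classical
  have hpair : ∀ x y : Fin g × Fin 3, x ≠ y →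
      ∃ f : Fin 3 → Fin g × Fin 3, f 0 = x ∧ f 1 = y ∧ LinearIndependent F (fun a => d (f a)) := by
    intro x y hxy
    obtain ⟨j, hj⟩ : ∃ j : Fin g, j ≠ x.1 := by
      have : Nontrivial (Fin g) := Fin.nontrivial_iff_two_le.2 hg
      exact exists_ne _
    obtain ⟨k, hk⟩ : ∃ k : Fin 3, k ≠ y.2 := exists_ne _
    have hzx : (j, k) ≠ x := fun h => hj (by rw [← h])
    have hzy : (j, k) ≠ y := fun h => hk (by rw [← h])
    refine ⟨![x, y, (j, k)], rfl, rfl, h _ ?_ ?_⟩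
    · intro a b hab
      fin_cases a <;> fin_cases b <;> simp_all
    · intro hall
      exact hj (hall 2 0)
  have hd0 : ∀ x, d x ≠ 0 := by
    intro x
    obtain ⟨f, rfl, -, hf⟩ := hpair x (x.1, x.2 + 1) (by
      intro h
      have := congrArg Prod.snd h
      simp at this)
    exact hf.ne_zero 0
  let p : Fin g × Fin 3 → Projectivization F (Fin 3 → F) := fun x => .mk F (d x) (hd0 x)
  have hpi : Function.Injective p := by
    intro x y hxy
    by_contra hne
    obtain ⟨f, h0, h1, hf⟩ := hpair x y hne
    obtain ⟨a, ha⟩ := (Projectivization.mk_eq_mk_iff _ _ _ _ _).1 hxy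
    have := (linearIndependent_iff_injective_fintypeLinearCombination.1 hf)
    have h2 := Fintype.linearIndependent_iff.1 hf ![1, -(a : F), 0] (by
      simp [Fin.sum_univ_three, h0, h1, ← ha, Units.smul_def]) 0
    simp at h2
  have hcol : ∀ f : Fin 3 → Fin g × Fin 3, ProjCollinear F (p (f 0)) (p (f 1)) (p (f 2)) ↔
      ¬ LinearIndependent F (fun a => d (f a)) := by
    intro f
    exact collinear_iff (fun a => p (f a)) _ (fun i => Projectivization.submodule_mk _ _)
  let t : Fin g → Finset (Projectivization F (Fin 3 → F)) := fun i =>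
    Finset.univ.image (fun k => p (i, k))
  have ht : ∀ i x, p x ∈ t i ↔ x.1 = i := by
    rintro i ⟨j, k⟩
    simp [t, hpi.eq_iff, eq_comm]
  refine ⟨Finset.univ.image p, ?_, Finset.univ.image t, ?_, ?_, ?_, ?_⟩
  · rw [Finset.card_image_of_injective _ hpi]
    simp [mul_comm]
  · intro s hs
    simp only [Finset.mem_image, Finset.mem_univ, true_and] at hs
    obtain ⟨i, rfl⟩ := hs
    rw [Finset.card_image_of_injective]
    · simp
    · intro k l hkl
      exact (Prod.mk.inj (hpi hkl)).2
  · intro s hs s' hs' hne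
    simp only [Finset.coe_image, Finset.coe_univ, Set.image_univ, Set.mem_range] at hs hs'
    obtain ⟨i, rfl⟩ := hs
    obtain ⟨j, rfl⟩ := hs'
    simp only [Function.onFun, id]
    rw [Finset.disjoint_left]
    intro x hx hx'
    obtain ⟨k, -, rfl⟩ := Finset.mem_image.1 hx
    rw [ht] at hx hx'
    exact hne (by rw [← hx, ← hx'])
  · ext x
    simp only [Finset.coe_image, Finset.coe_univ, Set.image_univ, Set.mem_range, Set.mem_iUnion,
      Finset.mem_image, Finset.mem_univ, true_and, Finset.mem_coe, exists_prop,
      exists_exists_eq_and]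
    constructor
    · rintro ⟨y, rfl⟩
      exact ⟨y.1, (ht _ _).2 rfl⟩
    · rintro ⟨i, hi⟩
      obtain ⟨k, -, rfl⟩ := Finset.mem_image.1 hi
      exact ⟨_, rfl⟩
  · intro p1 h1 p2 h2 p3 h3 h12 h13 h23
    simp only [Finset.mem_image, Finset.mem_univ, true_and] at h1 h2 h3
    obtain ⟨x, rfl⟩ := h1
    obtain ⟨y, rfl⟩ := h2
    obtain ⟨z, rfl⟩ := h3
    have hinj : Function.Injective ![x, y, z] := by
      intro a b hab
      fin_cases a <;> fin_cases b <;> simp_all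
    have hc : ProjCollinear F (p x) (p y) (p z) ↔ _ := hcol ![x, y, z]
    constructor
    · intro hcc
      have hsame : ∀ a b, (![x, y, z] a).1 = (![x, y, z] b).1 := by
        by_contra hn
        exact hc.1 hcc (h _ hinj hn)
      refine ⟨t x.1, by simp, ?_⟩
      have hy : y.1 = x.1 := hsame 1 0
      have hz : z.1 = x.1 := hsame 2 0
      have hsub : ({p x, p y, p z} : Finset _) ⊆ t x.1 := by
        intro u hu
        simp only [Finset.mem_insert, Finset.mem_singleton] at hu
        rcases hu with rfl | rfl | rfl
        · exact (ht _ _).2 rfl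
        · exact (ht _ _).2 hy
        · exact (ht _ _).2 hz
      have := Finset.eq_of_subset_of_card_le hsub (by
        rw [Finset.card_eq_three.2 ⟨_, _, _, h12, h13, h23, rfl⟩]
        exact Finset.card_image_le.trans (by simp))
      rw [← this]
      simp
    · rintro ⟨s, hs, hs'⟩
      simp only [Finset.mem_image, Finset.mem_univ, true_and] at hs
      obtain ⟨i, rfl⟩ := hs
      have hm : ∀ u, p u ∈ ({p x, p y, p z} : Set _) → u.1 = i := by
        intro u hu
        rw [← hs', Finset.mem_coe, ht] at hu
        exact hu
      have hx := hm x (by simp)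
      have hy := hm y (by simp)
      have hz := hm z (by simp)
      rw [hc]
      intro hli
      have hcc : ∀ a, (![x, y, z] a).1 = i := by
        intro a; fin_cases a <;> simp [hx, hy, hz]
      have hinj2 : Function.Injective (fun a => (![x, y, z] a).2) := by
        intro a b hab
        exact hinj (Prod.ext ((hcc a).trans (hcc b).symm) hab)
      have hbij := Finite.injective_iff_bijective.1 hinj2
      have hsum : ∑ a, d (![x, y, z] a) = 0 := by
        rw [← hd i, ← hbij.sum_comp (fun k => d (i, k))]
        apply Finset.sum_congr rfl
        intro a _
        rw [← hcc a]
      have := Fintype.linearIndependent_iff.1 hli (fun _ => 1) (by simpa using hsum) 0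
      exact one_ne_zero this

theorem univ_three : ∀ {k l m : Fin 3}, k ≠ l → k ≠ m → l ≠ m →
    (Finset.univ : Finset (Fin 3)) = {k, l, m} := by
  decide

theorem third_ne_left : ∀ {k l : Fin 3}, k ≠ l → k ≠ third k l := by
  decide

theorem third_ne_right : ∀ {k l : Fin 3}, k ≠ l → l ≠ third k l := by
  decide

theorem exists_reps (p : Fin 3 → Projectivization F (Fin 3 → F)) (hp : Function.Injective p)
    (hc : ProjCollinear F (p 0) (p 1) (p 2)) :
    ∃ v : Fin 3 → (Fin 3 → F), ∑ k, v k = 0 ∧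
      ∀ k, (p k).submodule = Submodule.span F {v k} := by
  have hsub : ∀ k, (p k).submodule = Submodule.span F {(p k).rep} := fun k =>
    Projectivization.submodule_eq _
  rw [collinear_iff p (fun k => (p k).rep) hsub, Fintype.linearIndependent_iff] at hc
  push Not at hc
  obtain ⟨c, hc, i, hi⟩ := hc
  have hpp : ∀ k l m : Fin 3, k ≠ l → k ≠ m → l ≠ m → c k = 0 → c l = 0 := by
    intro k l m hkl hkm hlm hk
    have hs : c l • (p l).rep + c m • (p m).rep = 0 := by
      rw [← hc]
      have hu : (Finset.univ : Finset (Fin 3)) = {k, l, m} := by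
        exact univ_three hkl hkm hlm
      rw [hu, Finset.sum_insert (by simp [hkl, hkm]), Finset.sum_pair hlm, hk]
      simp
    by_contra hl
    apply hlm
    apply hp
    rw [← (p l).mk_rep, ← (p m).mk_rep, Projectivization.mk_eq_mk_iff']
    refine ⟨-(c l)⁻¹ * c m, ?_⟩
    have : c l • (p l).rep = -(c m • (p m).rep) := eq_neg_of_add_eq_zero_left hs
    have h2 : (p l).rep = (c l)⁻¹ • (c l • (p l).rep) := by rw [smul_smul, inv_mul_cancel₀ hl, one_smul]
    rw [h2, this, smul_neg, smul_smul, neg_mul, neg_smul]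
  have hne : ∀ k, c k ≠ 0 := by
    intro k hk
    apply hi
    by_cases hki : k = i
    · rw [← hki]; exact hk
    · exact hpp k i (third k i) hki (third_ne_left hki) (third_ne_right hki) hk
  refine ⟨fun k => c k • (p k).rep, hc, fun k => ?_⟩
  rw [hsub]
  exact (Submodule.span_singleton_smul_eq (IsUnit.mk0 _ (hne k)) _).symm

theorem exists_d_of (A : Finset (Projectivization F (Fin 3 → F))) (hA : A.card = 3 * g)
    (h : HasMatchingCollinearTriples F A) :
    ∃ d : Fin g × Fin 3 → (Fin 3 → F), (∀ i, ∑ k, d (i, k) = 0) ∧ NoCol d := by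
  classical
  obtain ⟨T, hT3, hTd, hTA, hTc⟩ := h
  have hAT : A = T.biUnion id := by
    apply Finset.coe_injective
    rw [hTA]; simp
  have hTg : T.card = g := by
    have : A.card = T.card * 3 := by
      rw [hAT, Finset.card_biUnion hTd]
      exact Finset.sum_const_nat hT3
    omega
  let e : Fin g ≃ {x // x ∈ T} := (T.equivFinOfCardEq hTg).symm
  let e2 : ∀ i, Fin 3 ≃ {x // x ∈ (e i).1} := fun i =>
    ((e i).1.equivFinOfCardEq (hT3 _ (e i).2)).symm
  let p : Fin g → Fin 3 → Projectivization F (Fin 3 → F) := fun i k => (e2 i k).1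
  have hpm : ∀ i k, p i k ∈ (e i).1 := fun i k => (e2 i k).2
  have hpA : ∀ i k, p i k ∈ A := by
    intro i k
    rw [hAT, Finset.mem_biUnion]
    exact ⟨_, (e i).2, hpm i k⟩
  have hpi : ∀ i, Function.Injective (p i) := by
    intro i k l hkl
    exact (e2 i).injective (Subtype.ext hkl)
  have huniq : ∀ i j k, p i k ∈ (e j).1 → i = j := by
    intro i j k hm
    by_contra hne
    have := hTd (e i).2 (e j).2 (fun h => hne (e.injective (Subtype.ext h)))
    exact Finset.disjoint_left.1 this (hpm i k) hm
  have hpinj : ∀ x y : Fin g × Fin 3, p x.1 x.2 = p y.1 y.2 → x = y := by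
    rintro ⟨i, k⟩ ⟨j, l⟩ hxy
    simp only at hxy
    have hij : i = j := huniq i j k (by rw [hxy]; exact hpm j l)
    subst hij
    rw [hpi i hxy]
  have hcol : ∀ i, ProjCollinear F (p i 0) (p i 1) (p i 2) := by
    intro i
    have hn : ∀ k l, k ≠ l → p i k ≠ p i l := fun k l hkl h => hkl (hpi i h)
    rw [hTc _ (hpA i 0) _ (hpA i 1) _ (hpA i 2) (hn _ _ (by decide)) (hn _ _ (by decide))
      (hn _ _ (by decide))]
    refine ⟨(e i).1, (e i).2, ?_⟩
    ext u
    simp only [Finset.mem_coe, Set.mem_insert_iff, Set.mem_singleton_iff]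
    constructor
    · intro hu
      obtain ⟨k, hk⟩ := (e2 i).surjective ⟨u, hu⟩
      have hk' : p i k = u := congrArg Subtype.val hk
      rw [← hk']
      fin_cases k <;> simp
    · rintro (rfl | rfl | rfl) <;> exact hpm _ _
  choose v hv0 hv using fun i => exists_reps (p i) (hpi i) (hcol i)
  refine ⟨fun x => v x.1 x.2, hv0, ?_⟩
  intro f hf hne
  by_contra hli
  rw [← collinear_iff (fun a => p (f a).1 (f a).2) _ (fun a => hv _ _)] at hli
  have hn : ∀ k l, k ≠ l → p (f k).1 (f k).2 ≠ p (f l).1 (f l).2 :=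
    fun k l hkl h => hkl (hf (hpinj _ _ h))
  rw [hTc _ (hpA _ _) _ (hpA _ _) _ (hpA _ _) (hn _ _ (by decide)) (hn _ _ (by decide))
      (hn _ _ (by decide))] at hli
  obtain ⟨s, hs, hs'⟩ := hli
  obtain ⟨j, hj⟩ := e.surjective ⟨s, hs⟩
  have hj' : (e j).1 = s := congrArg Subtype.val hj
  have hall : ∀ a, (f a).1 = j := by
    intro a
    apply huniq _ _ (f a).2
    rw [hj', ← Finset.mem_coe, hs']
    fin_cases a <;> simp
  exact hne (fun a b => (hall a).trans (hall b).symm)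

end

/-- **Lemma 6.3.** For `g ≥ 2` and a prime power `q`, there is a set of `3g` points of the
projective plane over `F_q` with matching collinear triples if and only if there is a
maximally recoverable `(3g, r = 3, h = 3, a = 1, q)`-local reconstruction code. -/
theorem matchingCollinearTriples_iff_existsMRLRC
    (g q : ℕ) (hg : 2 ≤ g) (hq : IsPrimePow q) :
    (∃ (F : Type) (_ : Field F) (_ : Fintype F),
        Fintype.card F = q ∧
          ∃ A : Finset (Projectivization F (Fin 3 → F)),
            A.card = 3 * g ∧ HasMatchingCollinearTriples F A) ↔
      ExistsMRLRC g 3 3 1 q := by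
  unfold ExistsMRLRC
  constructor
  · rintro ⟨F, i1, i2, hc, A, hA, h⟩
    exact ⟨F, i1, i2, hc, exists_lrc_iff.2 (exists_d_of A hA h)⟩
  · rintro ⟨F, i1, i2, hc, h⟩
    obtain ⟨d, hd, h⟩ := exists_lrc_iff.1 h
    exact ⟨F, i1, i2, hc, exists_set_of hg d hd h⟩
end
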